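/- arXiv:1207.1557 — 2 statements merged into one kernel-verified Lean document; each statement's English description precedes it below -/
import Mathlib

section
/- Let (G,S) be a finitely generated Coxeter group with word length ℓ. The set K = {λ(f) ∈ C*_λ(G) : ‖λ(f)‖ ≤ 1 and ℓ·f defines a bounded convolution operator with ‖λ(ℓ·f)‖ ≤ 1} is relatively compact in the norm topology of C*_λ(G). -/
/-!
The set is approximated, uniformly in the operator norm, by convolution operators with coefficients
supported in a fixed finite ball and bounded by `1`; hence it is totally bounded.

The approximation uses the kernels `z ^ ℓ(x y⁻¹)` on `W × W`, for complex `z` with `|z| < 1`. They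
are Schur multipliers of norm at most `(|1 - z²| / (1 - |z|²)) ^ c`, with `c` independent of `z`
(`exists_isSchur_length`). Two consequences follow for an operator `a = λ(f)` in the set.

* For real `0 < r < 1` the bound is `1`, so the multiplier `r ^ ℓ` is a contraction. Since the
  derivative of `r ^ ℓ f` in `r` is `r⁻¹ r ^ ℓ (ℓ f)` and `‖λ(ℓ f)‖ ≤ 1`, the operators `λ(f)` and
  `λ(r ^ ℓ f)` are at distance at most `r⁻¹ (1 - r)` (`formBdd_sub_pow`).
* Averaging over `z = R ω` with `ω` a root of unity bounds the part of `f` on the sphere of radius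
  `n` by a constant times `R ^ (-n)`, for every `R < 1` (`formBdd_sphere`). This plays the role of
  the Haagerup inequality, and shows that `λ(r ^ ℓ f)` is approximated by its truncation to a ball.

To bound the multipliers, let `W` act on `ℝ^B` by the geometric representation. The length
`ℓ(x y⁻¹)` is the number of positive roots (walls) separating `x` from `y`, that is, the cardinality
of the symmetric difference of the inversion sets of `x` and `y` (`encard_symmDiff_invSet`). For
a family of walls no two of which cross, the number of separating walls is a distance in a tree,
and `z ^ d` factors explicitly through geometric series along paths (`isSchur_tree`). So it is
enough to split the positive roots into finitely many classes without crossing pairs and to take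
the product over the classes (`isSchur_pow`).

The classes are the congruence classes modulo `6`. The coordinates of roots lie in a ring `A`
generated by the algebraic integers `2 cos (π / M i j)`, which is a finite free `ℤ`-module, so there
are finitely many classes. If `β` and `γ` are congruent modulo `6`, then the product `h` of their
reflections is congruent to the identity modulo `6` (`divBy_reflections`). If moreover their walls
cross, then the roots in the plane of `β` and `γ` lie, up to sign, in three inversion sets, so they
are finite in number and some power of `h` fixes `β`. As in Minkowski's lemma on congruence
subgroups, `h` itself then fixes `β` (`fixed_of_periodic`), which forces `β` to be a multiple of
`γ` and contradicts the crossing (`not_crossing`).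
-/

set_option synthInstance.maxHeartbeats 1000000

/-- `T` is the convolution operator `λ(f)` on `ℓ²(G)`: `(T h)(y) = ∑_x f(x) h(x⁻¹ y)`. -/
def IsConvOp {G : Type*} [Group G] (f : G → ℂ)
    (T : lp (fun _ : G => ℂ) 2 →L[ℂ] lp (fun _ : G => ℂ) 2) : Prop :=
  ∀ (h : lp (fun _ : G => ℂ) 2) (y : G), T h y = ∑' x : G, f x * h (x⁻¹ * y)

/-- The reduced group C*-algebra of `G`, realized as the operator-norm closure of the span
of the left translation operators `λ(δ_g)` in `B(ℓ²(G))`. -/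
noncomputable def redCStar (G : Type*) [Group G] [DecidableEq G] :
    Submodule ℂ (lp (fun _ : G => ℂ) 2 →L[ℂ] lp (fun _ : G => ℂ) 2) :=
  (Submodule.span ℂ
    {T | ∃ g : G, IsConvOp (fun x => if x = g then (1 : ℂ) else 0) T}).topologicalClosure

/-! ### The geometric representation -/

section Geometric

/-- The values `sin (k θ) / sin θ` of Chebyshev polynomials of the second kind, where
`c = 2 cos θ`. -/
noncomputable def chebU (c : ℝ) : ℕ → ℝ
  | 0 => 0
  | 1 => 1
  | k + 2 => c * chebU c (k + 1) - chebU c k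

lemma chebU_mul_sin (θ : ℝ) (k : ℕ) :
    chebU (2 * Real.cos θ) k * Real.sin θ = Real.sin (k * θ) ∧
    chebU (2 * Real.cos θ) (k + 1) * Real.sin θ = Real.sin ((k + 1 : ℕ) * θ) := by
  induction k with
  | zero => simp [chebU]
  | succ k ih =>
    refine ⟨ih.2, ?_⟩
    rw [chebU, sub_mul, mul_assoc, ih.2, ih.1]
    push_cast
    have e1 : ((k : ℝ) + 1 + 1) * θ = (k + 1) * θ + θ := by ring
    have e2 : (k : ℝ) * θ = (k + 1) * θ - θ := by ring
    rw [e1, e2, Real.sin_add, Real.sin_sub]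
    ring

lemma chebU_two (k : ℕ) : chebU 2 k = k ∧ chebU 2 (k + 1) = k + 1 := by
  induction k with
  | zero => simp [chebU]
  | succ k ih =>
    refine ⟨by rw [ih.2]; push_cast; ring, ?_⟩
    rw [chebU, ih.1, ih.2]
    push_cast
    ring

lemma sin_pi_div_pos {m : ℕ} (hm : 2 ≤ m) : 0 < Real.sin (Real.pi / m) := by
  have : (2 : ℝ) ≤ m := by exact_mod_cast hm
  refine Real.sin_pos_of_pos_of_lt_pi (by positivity) ?_
  rw [div_lt_iff₀ (by positivity)]
  nlinarith [Real.pi_pos]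

lemma chebU_nonneg {m : ℕ} (hm : m ≠ 1) {k : ℕ} (hk : m ≠ 0 → k ≤ m) :
    0 ≤ chebU (2 * Real.cos (Real.pi / m)) k := by
  rcases Nat.eq_zero_or_pos m with rfl | hm0
  · simp only [Nat.cast_zero, div_zero, Real.cos_zero, mul_one]
    rw [(chebU_two k).1]
    positivity
  · have hm2 : 2 ≤ m := by omega
    have h0 := sin_pi_div_pos hm2
    have hk' : (k : ℝ) ≤ m := by exact_mod_cast hk hm0.ne'
    have hmp : (0 : ℝ) < m := by exact_mod_cast hm0
    have h1 : 0 ≤ Real.sin (k * (Real.pi / m)) := by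
      refine Real.sin_nonneg_of_nonneg_of_le_pi (by positivity) ?_
      rw [mul_div_assoc', div_le_iff₀ hmp]
      nlinarith [Real.pi_pos]
    rw [← (chebU_mul_sin _ k).1] at h1
    exact nonneg_of_mul_nonneg_left h1 h0

section Dihedral

variable {V : Type*} [AddCommGroup V] [Module ℝ V] {x y : V} {f g : Module.Dual ℝ V} {c : ℝ}

/-- In the plane of `x` and `y`, consecutive Chebyshev values are the coefficients of the vectors
obtained from `x` by applying the two reflections alternately. -/
lemma preReflection_cheb (hg : g y = 2) (hgx : g x = -c) (k : ℕ) :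
    Module.preReflection y g (chebU c (k + 1) • x + chebU c k • y) =
      chebU c (k + 2) • y + chebU c (k + 1) • x := by
  rw [Module.preReflection_apply, map_add, map_smul, map_smul, hg, hgx, chebU]
  simp only [smul_eq_mul]
  module

lemma preReflection_mul_pow_left (hf : f x = 2) (hg : g y = 2) (hfy : f y = -c) (hgx : g x = -c)
    (k : ℕ) : ((Module.preReflection x f * Module.preReflection y g) ^ k) x =
      chebU c (2 * k + 1) • x + chebU c (2 * k) • y := by
  induction k with
  | zero => simp [chebU]
  | succ k ih =>
    rw [pow_succ', Module.End.mul_apply, ih, Module.End.mul_apply, preReflection_cheb hg hgx,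
      preReflection_cheb hf hfy]
    rfl

/-- Two reflections whose roots make an angle `π - π / m` satisfy the braid relation of length
`m`: their product fixes the common kernel of the forms and rotates the plane of the roots. -/
lemma preReflection_mul_pow_eq_one (hf : f x = 2) (hg : g y = 2) {m : ℕ} (hm : 2 ≤ m)
    (hc : c = 2 * Real.cos (Real.pi / m)) (hfy : f y = -c) (hgx : g x = -c) :
    (Module.preReflection x f * Module.preReflection y g) ^ m = 1 := by
  have h0 := sin_pi_div_pos hm
  have hmp : (m : ℝ) ≠ 0 := by positivity
  have e1 : chebU c (2 * m) = 0 := by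
    have h := (chebU_mul_sin (Real.pi / m) (2 * m)).1
    rw [show ((2 * m : ℕ) : ℝ) * (Real.pi / m) = 2 * Real.pi by push_cast; field_simp,
      Real.sin_two_pi, ← hc] at h
    exact (mul_eq_zero.1 h).resolve_right h0.ne'
  have e2 : chebU c (2 * m + 1) = 1 := by
    have h := (chebU_mul_sin (Real.pi / m) (2 * m)).2
    rw [show ((2 * m + 1 : ℕ) : ℝ) * (Real.pi / m) = Real.pi / m + 2 * Real.pi by
      push_cast; field_simp; ring, Real.sin_add_two_pi, ← hc] at h
    exact mul_right_cancel₀ h0.ne' (h.trans (one_mul _).symm)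
  set s := Module.preReflection x f with hs
  set t := Module.preReflection y g with ht
  have hss : s * s = 1 := by
    ext v
    exact Module.involutive_preReflection hf v
  have htt : t * t = 1 := by
    ext v
    exact Module.involutive_preReflection hg v
  have hx : ((s * t) ^ m) x = x := by
    rw [preReflection_mul_pow_left hf hg hfy hgx, e1, e2]
    simp
  have hy' : ((t * s) ^ m) y = y := by
    rw [preReflection_mul_pow_left hg hf hgx hfy, e1, e2]
    simp
  have hinv : (s * t) ^ m * (t * s) ^ m = 1 := by
    have hcom : Commute (s * t) (t * s) := by
      change s * t * (t * s) = t * s * (s * t)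
      rw [show s * t * (t * s) = s * (t * t) * s by noncomm_ring,
        show t * s * (s * t) = t * (s * s) * t by noncomm_ring, htt, hss, mul_one, mul_one, htt, hss]
    rw [← hcom.mul_pow, show s * t * (t * s) = s * (t * t) * s by noncomm_ring, htt, mul_one, hss,
      one_pow]
  have hy : ((s * t) ^ m) y = y := by
    have := LinearMap.congr_fun hinv y
    rwa [Module.End.mul_apply, hy'] at this
  have hz : ∀ z, f z = 0 → g z = 0 → ((s * t) ^ m) z = z := by
    intro z h1 h2
    have hst : (s * t) z = z := by
      rw [Module.End.mul_apply, ht, Module.preReflection_apply y g, h2, zero_smul, sub_zero, hs,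
        Module.preReflection_apply x f, h1, zero_smul, sub_zero]
    rw [Module.End.pow_apply]
    exact Function.iterate_fixed hst m
  have hD : (4 : ℝ) - c ^ 2 ≠ 0 := by
    have := Real.sin_sq_add_cos_sq (Real.pi / m)
    rw [hc, show (4 : ℝ) - (2 * Real.cos (Real.pi / m)) ^ 2 = 4 * Real.sin (Real.pi / m) ^ 2 by
      linarith]
    positivity
  ext z
  set p := (2 * f z + c * g z) / (4 - c ^ 2) with hp
  set q := (2 * g z + c * f z) / (4 - c ^ 2) with hq
  have hdec : z = (z - p • x - q • y) + p • x + q • y := by abel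
  have hz' : ((s * t) ^ m) (z - p • x - q • y) = z - p • x - q • y := by
    apply hz <;> simp only [map_sub, map_smul, hf, hg, hfy, hgx, smul_eq_mul, hp, hq] <;>
      field_simp <;> ring
  rw [Module.End.one_apply]
  conv_lhs => rw [hdec]
  rw [map_add, map_add, hz', map_smul, map_smul, hx, hy, ← hdec]

end Dihedral

variable {B : Type*} [Fintype B] [DecidableEq B] (M : CoxeterMatrix B)

/-- The linear form `v ↦ 2 B(α_i, v)` on `ℝ^B`, where `B(α_i, α_j) = -cos (π / M i j)`. An infinite
label is encoded as `M i j = 0`, and then `π / 0 = 0` gives the usual value `B(α_i, α_j) = -1`. -/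
noncomputable def coroot (i : B) : Module.Dual ℝ (B → ℝ) :=
  ∑ j, (-(2 * Real.cos (Real.pi / M i j))) • LinearMap.proj j

/-- The simple root `α_i`, a standard basis vector of `ℝ^B`. -/
noncomputable def simpleRoot (i : B) : B → ℝ := Pi.single i 1

omit [DecidableEq B] in
lemma coroot_apply (i : B) (v : B → ℝ) :
    coroot M i v = ∑ j, -(2 * Real.cos (Real.pi / M i j)) * v j := by
  simp [coroot]

lemma coroot_simpleRoot (i j : B) :
    coroot M i (simpleRoot j) = -(2 * Real.cos (Real.pi / M i j)) := by
  rw [coroot_apply, Finset.sum_eq_single j]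
  · simp [simpleRoot]
  · intro k _ hk
    simp [simpleRoot, hk]
  · simp

lemma coroot_simpleRoot_self (i : B) : coroot M i (simpleRoot i) = 2 := by
  rw [coroot_simpleRoot]
  simp

lemma isLiftable_preReflection :
    M.IsLiftable fun i => Module.preReflection (simpleRoot i) (coroot M i) := by
  intro i j
  rcases eq_or_ne i j with rfl | hij
  · rw [M.diagonal, pow_one]
    exact LinearMap.ext fun v => Module.involutive_preReflection (coroot_simpleRoot_self M i) v
  · rcases Nat.eq_zero_or_pos (M i j) with h | h
    · rw [h, pow_zero]
    · have := M.off_diagonal i j hij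
      refine preReflection_mul_pow_eq_one (coroot_simpleRoot_self M i) (coroot_simpleRoot_self M j)
        (by omega) rfl (coroot_simpleRoot M i j) ?_
      rw [coroot_simpleRoot, M.symmetric]

variable {M} {W : Type*} [Group W] (cs : CoxeterSystem M W)

/-- The geometric representation of a Coxeter group. -/
noncomputable def geomRep : W →* Module.End ℝ (B → ℝ) :=
  cs.lift ⟨_, isLiftable_preReflection M⟩

lemma geomRep_simple (i : B) (v : B → ℝ) :
    geomRep cs (cs.simple i) v = v - coroot M i v • simpleRoot i := by
  rw [geomRep, cs.lift_apply_simple, Module.preReflection_apply]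

lemma geomRep_mul (x y : W) (v : B → ℝ) :
    geomRep cs (x * y) v = geomRep cs x (geomRep cs y v) := by
  rw [map_mul, Module.End.mul_apply]

lemma geomRep_one (v : B → ℝ) : geomRep cs 1 v = v := by
  rw [map_one, Module.End.one_apply]

lemma geomRep_inv_self (x : W) (v : B → ℝ) : geomRep cs x⁻¹ (geomRep cs x v) = v := by
  rw [← geomRep_mul, inv_mul_cancel, geomRep_one]

lemma geomRep_self_inv (x : W) (v : B → ℝ) : geomRep cs x (geomRep cs x⁻¹ v) = v := by
  rw [← geomRep_mul, mul_inv_cancel, geomRep_one]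

lemma geomRep_simple_self (i : B) :
    geomRep cs (cs.simple i) (simpleRoot i) = -simpleRoot i := by
  rw [geomRep_simple, coroot_simpleRoot_self]
  module

omit [Fintype B] in
lemma simpleRoot_nonneg (i : B) : 0 ≤ simpleRoot i := by
  intro j
  rw [simpleRoot]
  rcases eq_or_ne j i with rfl | h <;> simp [*]

lemma geomRep_alternatingWord (i j : B) (k : ℕ) :
    geomRep cs (cs.wordProd (CoxeterSystem.alternatingWord i j k)) (simpleRoot i) =
      if Even k then chebU (2 * Real.cos (Real.pi / M i j)) (k + 1) • simpleRoot i +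
        chebU (2 * Real.cos (Real.pi / M i j)) k • simpleRoot j
      else chebU (2 * Real.cos (Real.pi / M i j)) (k + 1) • simpleRoot j +
        chebU (2 * Real.cos (Real.pi / M i j)) k • simpleRoot i := by
  have e : ∀ i (v : B → ℝ), geomRep cs (cs.simple i) v =
      Module.preReflection (simpleRoot i) (coroot M i) v := fun i v => by
    rw [geomRep_simple, Module.preReflection_apply]
  induction k with
  | zero => simp [CoxeterSystem.alternatingWord, chebU]
  | succ k ih =>
    rw [CoxeterSystem.alternatingWord_succ', cs.wordProd_cons, geomRep_mul, ih, e]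
    by_cases hk : Even k
    · rw [if_pos hk, if_pos hk, if_neg (by simpa [Nat.even_add_one] using hk)]
      exact preReflection_cheb (coroot_simpleRoot_self M j)
        (by rw [coroot_simpleRoot, M.symmetric]) k
    · rw [if_neg hk, if_neg hk, if_pos (by simpa [Nat.even_add_one] using hk)]
      exact preReflection_cheb (coroot_simpleRoot_self M i) (coroot_simpleRoot M i j) k

/-- Roots `w α_i` with `ℓ(w s_i) > ℓ(w)` have nonnegative coordinates. One strips from `w` its
longest right factor in the dihedral group of `s_i` and of a right descent `s_j`; the rest of `w`
is shorter and lengthened by both `s_i` and `s_j`, while the factor maps `α_i` to a nonnegative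
combination of `α_i` and `α_j`. -/
lemma geomRep_simpleRoot_nonneg (w : W) (i : B) (h : cs.length w < cs.length (w * cs.simple i)) :
    0 ≤ geomRep cs w (simpleRoot i) := by
  induction hn : cs.length w using Nat.strong_induction_on generalizing w i with
  | _ n ih =>
  subst hn
  rcases eq_or_ne w 1 with rfl | hw
  · rw [geomRep_one]
    exact simpleRoot_nonneg i
  obtain ⟨j, hj⟩ := cs.exists_rightDescent_of_ne_one hw
  have hij : i ≠ j := by
    rintro rfl
    exact absurd hj (not_lt.2 h.le)
  let u : ℕ → W := fun k => cs.wordProd (CoxeterSystem.alternatingWord i j k)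
  have hu : ∀ k, w * (u (k + 1))⁻¹ = w * (u k)⁻¹ * cs.simple (if Even k then j else i) := by
    intro k
    change w * (cs.wordProd (CoxeterSystem.alternatingWord i j (k + 1)))⁻¹ = _
    rw [CoxeterSystem.alternatingWord_succ', cs.wordProd_cons, mul_inv_rev, cs.inv_simple,
      mul_assoc]
  let P : ℕ → Prop := fun k => cs.length (w * (u k)⁻¹) + k = cs.length w
  have hP1 : P 1 := by
    have := cs.isRightDescent_iff.1 hj
    simpa [P, u, CoxeterSystem.alternatingWord] using this
  have hPsucc : ∀ k, P (k + 1) → P k := by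
    intro k hk
    have h1 : cs.length (w * (u (k + 1))⁻¹) + (k + 1) = cs.length w := hk
    have h2 : cs.length w ≤ cs.length (w * (u k)⁻¹) + cs.length (u k) := by
      have := cs.length_mul_le (w * (u k)⁻¹) (u k)
      rwa [inv_mul_cancel_right] at this
    have h3 : cs.length (u k) ≤ k :=
      (cs.length_wordProd_le _).trans_eq (CoxeterSystem.length_alternatingWord i j k)
    have h4 := hu k
    have h5 := cs.length_mul_simple (w * (u k)⁻¹) (if Even k then j else i)
    rw [← h4] at h5
    change cs.length (w * (u k)⁻¹) + k = cs.length w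
    omega
  have hPle : ∀ k, P k → ∀ l ≤ k, P l := by
    intro k hk l hl
    induction k with
    | zero => rwa [Nat.le_zero.1 hl]
    | succ k ih' =>
      rcases Nat.lt_or_eq_of_le hl with h' | rfl
      · exact ih' (hPsucc k hk) (Nat.lt_succ_iff.1 h')
      · exact hk
  -- the braid relation bounds the length of the factor
  have hlt : ∀ k, P k → M i j ≠ 0 → k < M i j := by
    intro k hk hm
    by_contra hcon
    have hPm := hPle k hk (M i j) (not_lt.1 hcon)
    obtain ⟨m, hm'⟩ := Nat.exists_eq_succ_of_ne_zero hm
    have e : u (M i j) =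
        cs.wordProd (CoxeterSystem.alternatingWord i j m) * cs.simple i := by
      have := cs.wordProd_braidWord_eq i j
      rw [CoxeterSystem.braidWord, CoxeterSystem.braidWord, M.symmetric j i] at this
      change cs.wordProd (CoxeterSystem.alternatingWord i j (M i j)) = _
      rw [this, hm', Nat.succ_eq_add_one, CoxeterSystem.alternatingWord_succ, cs.wordProd_concat]
    have h1 : cs.length (w * (u (M i j))⁻¹) + M i j = cs.length w := hPm
    have h2 : w * cs.simple i =
        (w * (u (M i j))⁻¹) * cs.wordProd (CoxeterSystem.alternatingWord i j m) := by
      rw [e, mul_inv_rev, cs.inv_simple]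
      group
    have h3 := cs.length_mul_le (w * (u (M i j))⁻¹)
      (cs.wordProd (CoxeterSystem.alternatingWord i j m))
    have h4 : cs.length (cs.wordProd (CoxeterSystem.alternatingWord i j m)) ≤ m :=
      (cs.length_wordProd_le _).trans_eq (CoxeterSystem.length_alternatingWord i j m)
    rw [← h2] at h3
    omega
  obtain ⟨k, hk, hkmax⟩ : ∃ k, P (k + 1) ∧ ¬ P (k + 2) := by
    by_contra! hcon
    have : ∀ k, P (k + 1) := fun k => by
      induction k with
      | zero => exact hP1
      | succ k ih' => exact hcon k ih'
    have : cs.length (w * (u (cs.length w + 1))⁻¹) + (cs.length w + 1) = cs.length w := this _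
    omega
  set v := w * (u (k + 1))⁻¹ with hv
  have hvl : cs.length v + (k + 1) = cs.length w := hk
  have hup : ∀ l, l = i ∨ l = j → cs.length v < cs.length (v * cs.simple l) := by
    have h1 : cs.length v < cs.length (v * cs.simple (if Even (k + 1) then j else i)) := by
      have h5 := cs.length_mul_simple v (if Even (k + 1) then j else i)
      have h6 : ¬ (cs.length (w * (u (k + 2))⁻¹) + (k + 2) = cs.length w) := hkmax
      rw [hu (k + 1), ← hv] at h6
      omega
    have h2 : cs.length v < cs.length (v * cs.simple (if Even k then j else i)) := by
      have h7 : cs.length (w * (u k)⁻¹) + k = cs.length w := hPsucc k hk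
      have h8 : v * cs.simple (if Even k then j else i) = w * (u k)⁻¹ := by
        rw [hv, hu, cs.simple_mul_simple_cancel_right]
      rw [h8]
      omega
    by_cases hev : Even k
    · rw [if_pos hev] at h2
      rw [if_neg (by simpa [Nat.even_add_one] using hev)] at h1
      rintro l (rfl | rfl) <;> assumption
    · rw [if_neg hev] at h2
      rw [if_pos (by simpa [Nat.even_add_one] using hev)] at h1
      rintro l (rfl | rfl) <;> assumption
  have hi := ih (cs.length v) (by omega) v i (hup i (Or.inl rfl)) rfl
  have hj' := ih (cs.length v) (by omega) v j (hup j (Or.inr rfl)) rfl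
  have hwv : w = v * u (k + 1) := by rw [hv, inv_mul_cancel_right]
  have hm1 := M.off_diagonal i j hij
  have c1 := chebU_nonneg hm1 (k := k + 1) fun hm => (hlt _ hk hm).le
  have c2 := chebU_nonneg hm1 (k := k + 1 + 1) fun hm => hlt _ hk hm
  rw [hwv, geomRep_mul]
  change 0 ≤ geomRep cs v
    (geomRep cs (cs.wordProd (CoxeterSystem.alternatingWord i j (k + 1))) (simpleRoot i))
  rw [geomRep_alternatingWord]
  split_ifs <;> rw [map_add, map_smul, map_smul] <;>
    exact add_nonneg (smul_nonneg c2 (by assumption)) (smul_nonneg c1 (by assumption))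

end Geometric

/-! ### Roots and inversion sets -/

section Roots

variable {B : Type*} [Fintype B] [DecidableEq B] {M : CoxeterMatrix B}

/-- Twice the invariant symmetric bilinear form of the geometric representation. -/
noncomputable def rootForm (M : CoxeterMatrix B) (u v : B → ℝ) : ℝ := ∑ i, u i * coroot M i v

omit [DecidableEq B] in
lemma rootForm_comm (u v : B → ℝ) : rootForm M u v = rootForm M v u := by
  simp only [rootForm, coroot_apply, Finset.mul_sum]
  rw [Finset.sum_comm]
  refine Finset.sum_congr rfl fun i _ => Finset.sum_congr rfl fun j _ => ?_
  rw [M.symmetric]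
  ring

lemma rootForm_simpleRoot (i : B) (v : B → ℝ) : rootForm M (simpleRoot i) v = coroot M i v := by
  rw [rootForm, Finset.sum_eq_single i]
  · simp [simpleRoot]
  · intro k _ hk
    simp [simpleRoot, hk]
  · simp

omit [DecidableEq B] in
lemma rootForm_sub_smul (u v w : B → ℝ) (c : ℝ) :
    rootForm M u (v - c • w) = rootForm M u v - c * rootForm M u w := by
  simp only [rootForm, map_sub, map_smul, smul_eq_mul, mul_sub, Finset.sum_sub_distrib,
    Finset.mul_sum]
  congr 1
  exact Finset.sum_congr rfl fun i _ => by ring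

omit [DecidableEq B] in
lemma rootForm_smul (u v : B → ℝ) (c : ℝ) : rootForm M u (c • v) = c * rootForm M u v := by
  simp only [rootForm, map_smul, smul_eq_mul, Finset.mul_sum]
  exact Finset.sum_congr rfl fun i _ => by ring

variable {W : Type*} [Group W] (cs : CoxeterSystem M W)

lemma rootForm_geomRep (w : W) (u v : B → ℝ) :
    rootForm M (geomRep cs w u) (geomRep cs w v) = rootForm M u v := by
  induction w using cs.simple_induction_left with
  | one => rw [geomRep_one, geomRep_one]
  | mul_simple_left w i ih =>
    rw [geomRep_mul, geomRep_mul, ← ih]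
    generalize geomRep cs w u = u
    generalize geomRep cs w v = v
    rw [geomRep_simple, geomRep_simple, rootForm_sub_smul, rootForm_comm _ v,
      rootForm_comm _ (simpleRoot i), rootForm_sub_smul, rootForm_sub_smul, rootForm_simpleRoot,
      rootForm_simpleRoot, coroot_simpleRoot_self, rootForm_comm v (simpleRoot i),
      rootForm_simpleRoot, rootForm_comm v u]
    ring

/-- The predicate of being a root, that is, a vector in the orbit of a simple root. -/
def IsRoot (β : B → ℝ) : Prop := ∃ w i, β = geomRep cs w (simpleRoot i)

variable {cs} {β : B → ℝ}

lemma IsRoot.map (h : IsRoot cs β) (w : W) : IsRoot cs (geomRep cs w β) := by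
  obtain ⟨x, i, rfl⟩ := h
  exact ⟨w * x, i, (geomRep_mul cs w x _).symm⟩

lemma IsRoot.neg (h : IsRoot cs β) : IsRoot cs (-β) := by
  obtain ⟨x, i, rfl⟩ := h
  exact ⟨x * cs.simple i, i, by rw [geomRep_mul, geomRep_simple_self, map_neg]⟩

lemma IsRoot.rootForm_self (h : IsRoot cs β) : rootForm M β β = 2 := by
  obtain ⟨x, i, rfl⟩ := h
  rw [rootForm_geomRep, rootForm_simpleRoot, coroot_simpleRoot_self]

lemma IsRoot.ne_zero (h : IsRoot cs β) : β ≠ 0 := by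
  rintro rfl
  have := h.rootForm_self
  simp [rootForm] at this

lemma IsRoot.nonneg_or_nonpos (h : IsRoot cs β) : 0 ≤ β ∨ β ≤ 0 := by
  obtain ⟨w, i, rfl⟩ := h
  rcases cs.length_mul_simple w i with h | h
  · exact Or.inl (geomRep_simpleRoot_nonneg cs w i (by omega))
  · right
    have := geomRep_simpleRoot_nonneg cs (w * cs.simple i) i
      (by rw [cs.simple_mul_simple_cancel_right]; omega)
    rw [geomRep_mul, geomRep_simple_self, map_neg] at this
    exact neg_nonneg.1 this

lemma IsRoot.not_nonpos (h : IsRoot cs β) (h0 : 0 ≤ β) : ¬ β ≤ 0 := fun h' =>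
  h.ne_zero (le_antisymm h' h0)

lemma IsRoot.nonneg_iff (h : IsRoot cs β) : 0 ≤ β ↔ ¬ β ≤ 0 :=
  ⟨h.not_nonpos, fun h' => h.nonneg_or_nonpos.resolve_right h'⟩

/-- The only positive root which a simple reflection makes negative is the simple root. -/
lemma IsRoot.eq_simpleRoot (h : IsRoot cs β) (h0 : 0 ≤ β) {i : B}
    (hi : geomRep cs (cs.simple i) β ≤ 0) : β = simpleRoot i := by
  have hz : ∀ j, j ≠ i → β j = 0 := by
    intro j hj
    have h1 := hi j
    rw [geomRep_simple] at h1
    simp only [simpleRoot, Pi.sub_apply, Pi.smul_apply, Pi.single_eq_of_ne hj, smul_zero, sub_zero,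
      Pi.zero_apply] at h1
    exact le_antisymm h1 (h0 j)
  have e : β = β i • simpleRoot i := by
    ext j
    rcases eq_or_ne j i with rfl | hj
    · simp [simpleRoot]
    · simp [simpleRoot, hj, hz j hj]
  have h2 := h.rootForm_self
  rw [e, rootForm_smul, rootForm_comm, rootForm_smul, rootForm_simpleRoot,
    coroot_simpleRoot_self] at h2
  have h3 : β i = 1 := by
    have := h0 i
    simp only [Pi.zero_apply] at this
    nlinarith
  rw [e, h3, one_smul]

variable (cs)

/-- The positive roots. -/
abbrev PosRoot : Type _ := {β : B → ℝ // IsRoot cs β ∧ 0 ≤ β}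

/-- The set of positive roots that `w` makes negative. -/
def invSet (w : W) : Set (PosRoot cs) := {β | geomRep cs w β.1 ≤ 0}

/-- The length of `w` is the number of positive roots that `w` makes negative. -/
lemma encard_invSet (w : W) : (invSet cs w).encard = cs.length w := by
  induction hn : cs.length w generalizing w with
  | zero =>
    rw [cs.length_eq_zero_iff.1 hn, Nat.cast_zero, Set.encard_eq_zero]
    refine Set.eq_empty_of_forall_notMem fun β hβ => ?_
    change geomRep cs 1 β.1 ≤ 0 at hβ
    rw [geomRep_one] at hβ
    exact β.2.1.not_nonpos β.2.2 hβ
  | succ n ih =>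
    have hw : w ≠ 1 := by
      rintro rfl
      simp at hn
    obtain ⟨i, hi⟩ := cs.exists_leftDescent_of_ne_one hw
    set w' := cs.simple i * w with hw'
    have hl : cs.length w' = n := by
      have := cs.isLeftDescent_iff.1 hi
      rw [← hw'] at this
      omega
    have hww : w = cs.simple i * w' := by rw [hw', cs.simple_mul_simple_cancel_left]
    have hpos : 0 ≤ geomRep cs w'⁻¹ (simpleRoot i) := by
      refine geomRep_simpleRoot_nonneg cs _ _ ?_
      rw [cs.length_inv, ← cs.length_inv (w'⁻¹ * _), mul_inv_rev, inv_inv, cs.inv_simple, ← hww]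
      omega
    let γ : PosRoot cs := ⟨geomRep cs w'⁻¹ (simpleRoot i), ⟨_, _, rfl⟩, hpos⟩
    have hγ : geomRep cs w' γ.1 = simpleRoot i := geomRep_self_inv cs w' _
    have hγ' : γ ∉ invSet cs w' := by
      intro h
      change geomRep cs w' γ.1 ≤ 0 at h
      exact (γ.2.1.map w').not_nonpos (by rw [hγ]; exact simpleRoot_nonneg i) h
    have hset : invSet cs w = insert γ (invSet cs w') := by
      ext β
      have h1 : ∀ δ : B → ℝ, geomRep cs w' δ = simpleRoot i → δ = γ.1 := by
        intro δ h
        change δ = geomRep cs w'⁻¹ (simpleRoot i)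
        rw [← h, geomRep_inv_self]
      have hr := β.2.1.map w'
      change geomRep cs w β.1 ≤ 0 ↔ β = γ ∨ geomRep cs w' β.1 ≤ 0
      rw [hww, geomRep_mul]
      constructor
      · intro h
        rcases hr.nonneg_or_nonpos with h' | h'
        · exact Or.inl (Subtype.ext (h1 _ (hr.eq_simpleRoot h' h)))
        · exact Or.inr h'
      · rintro (rfl | h)
        · rw [hγ, geomRep_simple_self]
          exact neg_nonpos.2 (simpleRoot_nonneg i)
        · by_contra hcon
          have h2 := ((hr.map (cs.simple i)).nonneg_iff).2 hcon
          have h3 := hr.neg.eq_simpleRoot (neg_nonneg.2 h) (i := i)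
            (by rw [map_neg]; exact neg_nonpos.2 h2)
          have h4 := h1 (-β.1) (by rw [map_neg, h3])
          refine β.2.1.ne_zero (le_antisymm ?_ β.2.2)
          have := γ.2.2
          rw [← h4] at this
          exact neg_nonneg.1 this
    rw [hset, Set.encard_insert_of_notMem hγ', ih w' hl]
    push_cast
    rfl

lemma finite_invSet (w : W) : (invSet cs w).Finite := by
  rw [← Set.encard_lt_top_iff, encard_invSet]
  exact ENat.natCast_lt_top _

/-- The action of `W` on positive roots, that is, on roots up to sign. -/
noncomputable def posAct (w : W) (β : PosRoot cs) : PosRoot cs :=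
  open Classical in
  if h : geomRep cs w β.1 ≤ 0 then ⟨-geomRep cs w β.1, (β.2.1.map w).neg, neg_nonneg.2 h⟩
  else ⟨geomRep cs w β.1, β.2.1.map w, (β.2.1.map w).nonneg_iff.2 h⟩

variable {cs} in
lemma posAct_of_nonpos {w : W} {β : PosRoot cs} (h : geomRep cs w β.1 ≤ 0) :
    (posAct cs w β).1 = -geomRep cs w β.1 := by
  unfold posAct
  rw [dif_pos h]

variable {cs} in
lemma posAct_of_not_nonpos {w : W} {β : PosRoot cs} (h : ¬ geomRep cs w β.1 ≤ 0) :
    (posAct cs w β).1 = geomRep cs w β.1 := by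
  unfold posAct
  rw [dif_neg h]

lemma posAct_inv_posAct (w : W) (β : PosRoot cs) : posAct cs w⁻¹ (posAct cs w β) = β := by
  refine Subtype.ext ?_
  by_cases h : geomRep cs w β.1 ≤ 0
  · have e := posAct_of_nonpos h
    have e' : geomRep cs w⁻¹ (posAct cs w β).1 = -β.1 := by rw [e, map_neg, geomRep_inv_self]
    rw [posAct_of_nonpos (by rw [e']; exact neg_nonpos.2 β.2.2), e', neg_neg]
  · have e := posAct_of_not_nonpos h
    have e' : geomRep cs w⁻¹ (posAct cs w β).1 = β.1 := by rw [e, geomRep_inv_self]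
    rw [posAct_of_not_nonpos (by rw [e']; exact β.2.1.not_nonpos β.2.2), e']

lemma posAct_mem_invSet (x y : W) (β : PosRoot cs) :
    posAct cs y β ∈ invSet cs (x * y⁻¹) ↔ β ∈ symmDiff (invSet cs x) (invSet cs y) := by
  have e : geomRep cs (x * y⁻¹) (geomRep cs y β.1) = geomRep cs x β.1 := by
    rw [← geomRep_mul, inv_mul_cancel_right]
  have hx := (β.2.1.map x).nonneg_iff
  rw [Set.mem_symmDiff]
  change geomRep cs (x * y⁻¹) (posAct cs y β).1 ≤ 0 ↔
    geomRep cs x β.1 ≤ 0 ∧ ¬ geomRep cs y β.1 ≤ 0 ∨ geomRep cs y β.1 ≤ 0 ∧ ¬ geomRep cs x β.1 ≤ 0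
  by_cases h : geomRep cs y β.1 ≤ 0
  · rw [posAct_of_nonpos h, map_neg, e, neg_nonpos, hx]
    tauto
  · rw [posAct_of_not_nonpos h, e]
    tauto

/-- The length metric is the cardinality of the symmetric difference of inversion sets. -/
lemma encard_symmDiff_invSet (x y : W) :
    (symmDiff (invSet cs x) (invSet cs y)).encard = cs.length (x * y⁻¹) := by
  have hl := posAct_inv_posAct cs y
  have hr : ∀ β, posAct cs y (posAct cs y⁻¹ β) = β := by
    simpa using posAct_inv_posAct cs y⁻¹
  rw [← encard_invSet, ← Set.encard_preimage_of_injective_subset_range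
    (t := invSet cs (x * y⁻¹)) (Function.LeftInverse.injective hl) fun β _ => ⟨_, hr β⟩]
  congr 1
  ext β
  exact (posAct_mem_invSet cs x y β).symm

/-- Distinct positive roots are separated by inversion sets. -/
lemma eq_of_forall_mem_invSet {β γ : PosRoot cs}
    (h : ∀ x, β ∈ invSet cs x ↔ γ ∈ invSet cs x) : β = γ := by
  obtain ⟨w, i, hβ⟩ := β.2.1
  have e : geomRep cs w⁻¹ β.1 = simpleRoot i := by rw [hβ, geomRep_inv_self]
  have h1 : ¬ geomRep cs w⁻¹ β.1 ≤ 0 :=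
    (β.2.1.map _).not_nonpos (by rw [e]; exact simpleRoot_nonneg i)
  have h2 : geomRep cs (cs.simple i * w⁻¹) β.1 ≤ 0 := by
    rw [geomRep_mul, e, geomRep_simple_self]
    exact neg_nonpos.2 (simpleRoot_nonneg i)
  have h3 : ¬ geomRep cs w⁻¹ γ.1 ≤ 0 := fun hc => h1 ((h _).2 hc)
  have h4 : geomRep cs (cs.simple i * w⁻¹) γ.1 ≤ 0 := (h _).1 h2
  rw [geomRep_mul] at h4
  have hr := γ.2.1.map w⁻¹
  have h5 := hr.eq_simpleRoot (hr.nonneg_iff.2 h3) h4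
  refine Subtype.ext ?_
  rw [hβ, ← h5, geomRep_self_inv]

end Roots

/-! ### Congruences between roots -/

section Lattice

variable {B : Type*} (A : Subalgebra ℤ ℝ)

/-- `v` is `n` times a vector with coordinates in `A`. -/
def DivBy (n : ℕ) (v : B → ℝ) : Prop := ∃ u : B → ℝ, (∀ i, u i ∈ A) ∧ v = (n : ℝ) • u

variable {A}

/-- In a finitely generated `ℤ`-module of reals, only zero is divisible by all powers of `q`. -/
lemma eq_zero_of_divBy_pow [Module.Finite ℤ A] {q : ℕ} (hq : 2 ≤ q) {v : B → ℝ}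
    (h : ∀ k, DivBy A (q ^ k) v) : v = 0 := by
  ext i
  have hvA : v i ∈ A := by
    obtain ⟨u, hu, e⟩ := h 0
    rw [e]
    simpa using hu i
  have hz : (⟨v i, hvA⟩ : A) = 0 := by
    refine (Module.Free.chooseBasis ℤ A).ext_elem fun j => ?_
    rw [map_zero, Finsupp.zero_apply]
    have hdvd : ∀ k : ℕ, (q : ℤ) ^ k ∣ (Module.Free.chooseBasis ℤ A).repr ⟨v i, hvA⟩ j := by
      intro k
      obtain ⟨u, hu, e⟩ := h k
      have e' : (⟨v i, hvA⟩ : A) = ((q : ℤ) ^ k) • (⟨u i, hu i⟩ : A) := by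
        apply Subtype.ext
        rw [SetLike.val_smul]
        change v i = _
        rw [congrFun e i]
        simp [zsmul_eq_mul]
      rw [e', map_smul, Finsupp.smul_apply, smul_eq_mul]
      exact dvd_mul_right _ _
    by_contra hne
    obtain ⟨k, hk⟩ := pow_unbounded_of_one_lt
      ((Module.Free.chooseBasis ℤ A).repr ⟨v i, hvA⟩ j).natAbs (show 1 < q by omega)
    have := Nat.le_of_dvd (Int.natAbs_pos.2 hne)
      (by simpa [Int.natAbs_pow] using Int.natAbs_dvd_natAbs.2 (hdvd k))
    omega
  exact congrArg Subtype.val hz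

lemma mem_of_divBy {n : ℕ} {v : B → ℝ} (h : DivBy A n v) (i : B) : v i ∈ A := by
  obtain ⟨u, hu, rfl⟩ := h
  exact A.mul_mem (natCast_mem A n) (hu i)

lemma DivBy.add {n : ℕ} {v w : B → ℝ} (h : DivBy A n v) (h' : DivBy A n w) :
    DivBy A n (v + w) := by
  obtain ⟨u, hu, rfl⟩ := h
  obtain ⟨u', hu', rfl⟩ := h'
  exact ⟨u + u', fun i => A.add_mem (hu i) (hu' i), by rw [smul_add]⟩

lemma DivBy.of_dvd {n m : ℕ} (hnm : m ∣ n) {v : B → ℝ} (h : DivBy A n v) : DivBy A m v := by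
  obtain ⟨u, hu, rfl⟩ := h
  obtain ⟨k, rfl⟩ := hnm
  exact ⟨(k : ℝ) • u, fun i => A.mul_mem (natCast_mem A k) (hu i), by
    rw [smul_smul]; push_cast; rfl⟩

lemma DivBy.sum {ι : Type*} {n : ℕ} (s : Finset ι) {v : ι → B → ℝ}
    (h : ∀ i ∈ s, DivBy A n (v i)) : DivBy A n (∑ i ∈ s, v i) := by
  classical
  induction s using Finset.induction_on with
  | empty => exact ⟨0, fun _ => A.zero_mem, by simp⟩
  | insert a s ha ih =>
    rw [Finset.sum_insert ha]
    exact (h a (Finset.mem_insert_self _ _)).add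
      (ih fun i hi => h i (Finset.mem_insert_of_mem hi))

section Unipotent

variable {h : Module.End ℝ (B → ℝ)} {n : ℕ}
  (hn : ∀ u : B → ℝ, (∀ i, u i ∈ A) → DivBy A n (h u - u))

include hn

lemma mem_of_divBy_sub {u : B → ℝ} (hu : ∀ i, u i ∈ A) (i : B) : h u i ∈ A := by
  have := A.add_mem (mem_of_divBy (hn u hu) i) (hu i)
  rwa [Pi.sub_apply, sub_add_cancel] at this

lemma mem_pow_of_divBy_sub {u : B → ℝ} (hu : ∀ i, u i ∈ A) (k : ℕ) (i : B) :
    (h ^ k) u i ∈ A := by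
  induction k generalizing i with
  | zero => exact hu i
  | succ k ih =>
    rw [pow_succ', Module.End.mul_apply]
    exact mem_of_divBy_sub hn ih i

lemma divBy_pow_sub {u : B → ℝ} (hu : ∀ i, u i ∈ A) (k : ℕ) : DivBy A n ((h ^ k) u - u) := by
  induction k with
  | zero => exact ⟨0, fun _ => A.zero_mem, by simp⟩
  | succ k ih =>
    have := (hn _ (mem_pow_of_divBy_sub hn hu k)).add ih
    rwa [sub_add_sub_cancel, ← Module.End.mul_apply, ← pow_succ'] at this

/-- An endomorphism congruent to the identity modulo a prime `q` has no orbit of prime length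
`p ≠ q` on lattice vectors: `v = h β - β` satisfies `∑_{i < p} h^i v = 0`, and modulo each `q^k`
this yields that `p v`, hence `v`, is divisible by one more power of `q`. -/
lemma fixed_of_pow_prime [Module.Finite ℤ A] {p q : ℕ} (hp : p.Prime) (hq : q.Prime) (hpq : p ≠ q)
    (hqn : q ∣ n) {β : B → ℝ} (hβ : ∀ i, β i ∈ A) (hfix : (h ^ p) β = β) : h β = β := by
  refine sub_eq_zero.1 (eq_zero_of_divBy_pow (A := A) hq.two_le fun k => ?_)
  induction k with
  | zero => exact ⟨h β - β, fun i => A.sub_mem (mem_of_divBy_sub hn hβ i) (hβ i), by simp⟩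
  | succ k ih =>
    obtain ⟨w, hw, e⟩ := ih
    have hqk : ((q ^ k : ℕ) : ℝ) ≠ 0 := by
      have := hq.pos
      positivity
    have hsum : ∑ i ∈ Finset.range p, (h ^ i) w = 0 := by
      have h1 : ∑ i ∈ Finset.range p, (h ^ i) (h β - β) = 0 := by
        have h2 : ∀ i ∈ Finset.range p, (h ^ i) (h β - β) = (h ^ (i + 1)) β - (h ^ i) β := by
          intro i _
          rw [map_sub, ← Module.End.mul_apply, ← pow_succ]
        rw [Finset.sum_congr rfl h2, Finset.sum_range_sub (fun i => (h ^ i) β), hfix, pow_zero,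
          Module.End.one_apply, sub_self]
      rw [e] at h1
      simp only [map_smul] at h1
      rw [← Finset.smul_sum] at h1
      exact (smul_eq_zero.1 h1).resolve_left hqk
    obtain ⟨U, hU, eU⟩ : DivBy A q (∑ i ∈ Finset.range p, ((h ^ i) w - w)) :=
      DivBy.sum _ fun i _ => (divBy_pow_sub hn hw i).of_dvd hqn
    rw [Finset.sum_sub_distrib, hsum, Finset.sum_const, Finset.card_range, zero_sub] at eU
    have hcop : IsCoprime (p : ℤ) q :=
      Nat.isCoprime_iff_coprime.2 ((Nat.coprime_primes hp hq).2 hpq)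
    obtain ⟨a, b, hab⟩ := hcop
    have hab' : (a : ℝ) * p + b * q = 1 := by exact_mod_cast hab
    refine ⟨(b : ℝ) • w - (a : ℝ) • U, fun i => A.sub_mem (A.mul_mem (intCast_mem A b) (hw i))
      (A.mul_mem (intCast_mem A a) (hU i)), ?_⟩
    have ew : w = (q : ℝ) • ((b : ℝ) • w - (a : ℝ) • U) := by
      calc w = ((a : ℝ) * p + b * q) • w := by rw [hab', one_smul]
        _ = (q : ℝ) • (b : ℝ) • w - (a : ℝ) • -(p • w) := by
          rw [← Nat.cast_smul_eq_nsmul ℝ p w]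
          module
        _ = _ := by
          rw [eU]
          module
    rw [e, pow_succ, Nat.cast_mul, mul_smul, ← ew]

end Unipotent

/-- An endomorphism congruent to the identity modulo `6` fixes every periodic lattice vector.
Having both primes `2` and `3` available covers every prime divisor of the period. -/
lemma fixed_of_periodic [Module.Finite ℤ A] {h : Module.End ℝ (B → ℝ)}
    (hn : ∀ u : B → ℝ, (∀ i, u i ∈ A) → DivBy A 6 (h u - u))
    {β : B → ℝ} (hβ : ∀ i, β i ∈ A) {n : ℕ} (hn0 : n ≠ 0) (hfix : (h ^ n) β = β) : h β = β := by
  induction n using Nat.strong_induction_on with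
  | _ n ih =>
  rcases eq_or_ne n 1 with rfl | hn1
  · simpa using hfix
  have hp := Nat.minFac_prime hn1
  set p := n.minFac with hpdef
  obtain ⟨m, hm⟩ := n.minFac_dvd
  rw [← hpdef] at hm
  have hm0 : m ≠ 0 := by
    rintro rfl
    exact hn0 (by simpa using hm)
  refine ih m ?_ hm0 ?_
  · rw [hm]
    exact lt_mul_left (Nat.pos_of_ne_zero hm0) hp.one_lt
  · have hfix' : ((h ^ m) ^ p) β = β := by rwa [← pow_mul, mul_comm, ← hm]
    have hn' : ∀ u : B → ℝ, (∀ i, u i ∈ A) → DivBy A 6 ((h ^ m) u - u) :=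
      fun u hu => divBy_pow_sub hn hu m
    by_cases hp2 : p = 2
    · exact fixed_of_pow_prime hn' hp Nat.prime_three (by omega) (by norm_num) hβ hfix'
    · exact fixed_of_pow_prime hn' hp Nat.prime_two hp2 (by norm_num) hβ hfix'

variable [Fintype B] [DecidableEq B] {M : CoxeterMatrix B}

omit [DecidableEq B] in
/-- The numbers `2 cos (π / M i j)` are algebraic integers, so they generate a ring which is finite
over `ℤ`. Roots have their coordinates in this ring. -/
lemma exists_coeffRing (M : CoxeterMatrix B) : ∃ A : Subalgebra ℤ ℝ, Module.Finite ℤ A ∧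
    ∀ i j, 2 * Real.cos (Real.pi / M i j) ∈ A := by
  let s : Set ℝ := Set.range fun x : B × B => 2 * Real.cos (Real.pi / M x.1 x.2)
  refine ⟨Algebra.adjoin ℤ s, ?_, fun i j => Algebra.subset_adjoin ⟨(i, j), rfl⟩⟩
  refine Module.Finite.iff_fg.2 (fg_adjoin_of_finite (Set.finite_range _) ?_)
  rintro _ ⟨⟨i, j⟩, rfl⟩
  have := Real.isIntegral_two_mul_cos_rat_mul_pi (1 / (M i j : ℚ))
  convert! this using 3
  push_cast
  ring

omit [Fintype B] in
lemma simpleRoot_mem (i j : B) : simpleRoot i j ∈ A := by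
  rw [simpleRoot]
  rcases eq_or_ne j i with rfl | h
  · rw [Pi.single_eq_same]
    exact A.one_mem
  · rw [Pi.single_eq_of_ne h]
    exact A.zero_mem

variable (hA : ∀ i j, 2 * Real.cos (Real.pi / M i j) ∈ A)

include hA

omit [DecidableEq B] in
lemma coroot_mem {v : B → ℝ} (hv : ∀ i, v i ∈ A) (i : B) : coroot M i v ∈ A := by
  rw [coroot_apply]
  exact A.sum_mem fun j _ => A.mul_mem (A.neg_mem (hA i j)) (hv j)

omit [DecidableEq B] in
lemma rootForm_mem {u v : B → ℝ} (hu : ∀ i, u i ∈ A) (hv : ∀ i, v i ∈ A) :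
    rootForm M u v ∈ A :=
  A.sum_mem fun i _ => A.mul_mem (hu i) (coroot_mem hA hv i)

variable {W : Type*} [Group W] {cs : CoxeterSystem M W}

lemma IsRoot.mem {β : B → ℝ} (hβ : IsRoot cs β) (j : B) : β j ∈ A := by
  obtain ⟨w, i, rfl⟩ := hβ
  induction w using cs.simple_induction_left generalizing j with
  | one =>
    rw [geomRep_one]
    exact simpleRoot_mem i j
  | mul_simple_left w k ih =>
    rw [geomRep_mul, geomRep_simple]
    exact A.sub_mem (ih j) (A.mul_mem (coroot_mem hA ih k) (simpleRoot_mem k j))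

omit hA

/-- The reflection in a root is the action of an element of the group. -/
lemma IsRoot.exists_reflection {β : B → ℝ} (hβ : IsRoot cs β) :
    ∃ r : W, ∀ v, geomRep cs r v = v - rootForm M β v • β := by
  obtain ⟨w, i, rfl⟩ := hβ
  refine ⟨w * cs.simple i * w⁻¹, fun v => ?_⟩
  have e : rootForm M (geomRep cs w (simpleRoot i)) v = coroot M i (geomRep cs w⁻¹ v) := by
    rw [← rootForm_simpleRoot, ← rootForm_geomRep cs w (simpleRoot i), geomRep_self_inv]
  rw [geomRep_mul, geomRep_mul, geomRep_simple, map_sub, map_smul, geomRep_self_inv, e]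

include hA

/-- The product of the reflections in two roots which are congruent modulo `6` is congruent to the
identity modulo `6`. -/
lemma divBy_reflections {β γ : B → ℝ} (hβ : IsRoot cs β) (hγ : IsRoot cs γ)
    (hβγ : DivBy A 6 (γ - β)) {r r' : W} (hr : ∀ v, geomRep cs r v = v - rootForm M β v • β)
    (hr' : ∀ v, geomRep cs r' v = v - rootForm M γ v • γ) (v : B → ℝ) (hv : ∀ i, v i ∈ A) :
    DivBy A 6 (geomRep cs (r * r') v - v) := by
  obtain ⟨u, hu, e⟩ := hβγ
  have hγe : γ = β - (-6 : ℝ) • u := by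
    have : γ = β + (γ - β) := by abel
    rw [this, e]
    push_cast
    module
  have hmβ := hβ.mem hA
  have hmγ := hγ.mem hA
  set b1 := rootForm M β v with hb1
  set b2 := rootForm M u v with hb2
  have hb : rootForm M γ v = b1 + 6 * b2 := by
    rw [hγe, rootForm_comm, rootForm_sub_smul, rootForm_comm v β, rootForm_comm v u]
    ring
  set x : B → ℝ := b2 • γ + b1 • u with hx
  have hxA : ∀ i, x i ∈ A := fun i =>
    A.add_mem (A.mul_mem (rootForm_mem hA hu hv) (hmγ i))
      (A.mul_mem (rootForm_mem hA hmβ hv) (hu i))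
  have e1 : geomRep cs r' v = geomRep cs r v - (6 : ℝ) • x := by
    rw [hr', hr, hb, hx, ← hb1]
    nth_rw 1 [add_smul]
    nth_rw 1 [hγe]
    module
  have hrr : ∀ v, geomRep cs r (geomRep cs r v) = v := by
    intro v
    rw [hr, hr v, rootForm_sub_smul, hβ.rootForm_self]
    module
  refine ⟨-(x - rootForm M β x • β), fun i => A.neg_mem (A.sub_mem (hxA i)
    (A.mul_mem (rootForm_mem hA hmβ hxA) (hmβ i))), ?_⟩
  rw [geomRep_mul, e1, map_sub, hrr, map_smul, hr x]
  push_cast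
  module

/-- Positive roots congruent modulo `6` do not cross: their inversion half-spaces are disjoint,
nested, or cover. Otherwise the roots in the plane they span would all be, up to sign, in three
inversion sets, so the product of the two reflections would permute a finite set of roots. -/
lemma not_crossing [Module.Finite ℤ A] {β γ : PosRoot cs} (hβγ : DivBy A 6 (γ.1 - β.1)) {x y w : W}
    (hβx : β ∈ invSet cs x) (hγx : γ ∈ invSet cs x) (hβy : β ∈ invSet cs y)
    (hγy : γ ∉ invSet cs y) (hβw : β ∉ invSet cs w) (hγw : γ ∈ invSet cs w) : False := by
  change geomRep cs x β.1 ≤ 0 at hβx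
  change geomRep cs x γ.1 ≤ 0 at hγx
  change geomRep cs y β.1 ≤ 0 at hβy
  change geomRep cs w γ.1 ≤ 0 at hγw
  replace hγy := (γ.2.1.map y).nonneg_iff.2 hγy
  replace hβw := (β.2.1.map w).nonneg_iff.2 hβw
  obtain ⟨r, hr⟩ := β.2.1.exists_reflection
  obtain ⟨r', hr'⟩ := γ.2.1.exists_reflection
  -- the roots in the plane of `β` and `γ`
  set R : Set (B → ℝ) := {δ | IsRoot cs δ ∧ ∃ p q : ℝ, δ = p • β.1 + q • γ.1} with hR
  have hRfin : R.Finite := by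
    set F : Set (B → ℝ) := Subtype.val '' (invSet cs x ∪ invSet cs y ∪ invSet cs w) with hF
    have hFfin : F.Finite :=
      (((finite_invSet cs x).union (finite_invSet cs y)).union (finite_invSet cs w)).image _
    have hmem : ∀ (δ : B → ℝ), IsRoot cs δ → 0 ≤ δ → ∀ z, geomRep cs z δ ≤ 0 →
        z = x ∨ z = y ∨ z = w → δ ∈ F := by
      rintro δ hδ h0 z hz (rfl | rfl | rfl)
      · exact ⟨⟨δ, hδ, h0⟩, Or.inl (Or.inl hz), rfl⟩
      · exact ⟨⟨δ, hδ, h0⟩, Or.inl (Or.inr hz), rfl⟩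
      · exact ⟨⟨δ, hδ, h0⟩, Or.inr hz, rfl⟩
    -- combinations with coefficients `p` and `-q` of opposite signs
    have hmixed : ∀ p q : ℝ, 0 ≤ p → 0 ≤ q → ∀ δ, IsRoot cs δ → δ = p • β.1 - q • γ.1 →
        δ ∈ F ∨ -δ ∈ F := by
      intro p q hp hq δ hδ e
      rcases hδ.nonneg_or_nonpos with h0 | h0
      · refine Or.inl (hmem δ hδ h0 y ?_ (by simp))
        rw [e, map_sub, map_smul, map_smul]
        exact sub_nonpos.2 ((smul_nonpos_of_nonneg_of_nonpos hp hβy).trans (smul_nonneg hq hγy))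
      · refine Or.inr (hmem _ hδ.neg (neg_nonneg.2 h0) w ?_ (by simp))
        rw [e, map_neg, map_sub, map_smul, map_smul, neg_sub]
        exact sub_nonpos.2 ((smul_nonpos_of_nonneg_of_nonpos hq hγw).trans (smul_nonneg hp hβw))
    -- combinations with coefficients of the same sign
    have hsame : ∀ p q : ℝ, 0 ≤ p → 0 ≤ q → ∀ δ, IsRoot cs δ → δ = p • β.1 + q • γ.1 →
        δ ∈ F := by
      intro p q hp hq δ hδ e
      refine hmem δ hδ ?_ x ?_ (by simp)
      · rw [e]
        exact add_nonneg (smul_nonneg hp β.2.2) (smul_nonneg hq γ.2.2)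
      · rw [e, map_add, map_smul, map_smul]
        exact add_nonpos (smul_nonpos_of_nonneg_of_nonpos hp hβx)
          (smul_nonpos_of_nonneg_of_nonpos hq hγx)
    refine (hFfin.union (hFfin.image fun v => -v)).subset ?_
    rintro δ ⟨hδ, p, q, e⟩
    suffices δ ∈ F ∨ -δ ∈ F by
      rcases this with h | h
      · exact Or.inl h
      · exact Or.inr ⟨-δ, h, neg_neg δ⟩
    rcases le_total 0 p with hp | hp <;> rcases le_total 0 q with hq | hq
    · exact Or.inl (hsame p q hp hq δ hδ e)
    · exact hmixed p (-q) hp (neg_nonneg.2 hq) δ hδ (by rw [e]; module)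
    · have := hmixed (-p) q (neg_nonneg.2 hp) hq (-δ) hδ.neg (by rw [e]; module)
      rw [neg_neg] at this
      exact this.symm
    · exact Or.inr (hsame (-p) (-q) (neg_nonneg.2 hp) (neg_nonneg.2 hq) (-δ) hδ.neg
        (by rw [e]; module))
  have horb : ∀ n : ℕ, geomRep cs ((r * r') ^ n) β.1 ∈ R := by
    intro n
    refine ⟨β.2.1.map _, ?_⟩
    induction n with
    | zero => exact ⟨1, 0, by rw [pow_zero, geomRep_one]; module⟩
    | succ n ih =>
      obtain ⟨p, q, e⟩ := ih
      rw [pow_succ', geomRep_mul, e, geomRep_mul, hr', hr]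
      generalize rootForm M γ.1 _ = a
      generalize rootForm M β.1 _ = b
      exact ⟨p - b, q - a, by module⟩
  obtain ⟨n, hn0, hn⟩ : ∃ n : ℕ, n ≠ 0 ∧ geomRep cs ((r * r') ^ n) β.1 = β.1 := by
    have hninj : ¬ Function.Injective fun n : ℕ => geomRep cs ((r * r') ^ n) β.1 := fun hinj =>
      Set.infinite_of_injective_forall_mem hinj horb hRfin
    have key : ∀ a b : ℕ, a < b →
        geomRep cs ((r * r') ^ a) β.1 = geomRep cs ((r * r') ^ b) β.1 →
        ∃ n : ℕ, n ≠ 0 ∧ geomRep cs ((r * r') ^ n) β.1 = β.1 := by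
      intro a b hab h
      refine ⟨b - a, by omega, ?_⟩
      have h2 := congrArg (geomRep cs ((r * r') ^ a)⁻¹) h
      rw [geomRep_inv_self, show b = a + (b - a) by omega, pow_add, geomRep_mul,
        geomRep_inv_self] at h2
      exact h2.symm
    simp only [Function.Injective, not_forall] at hninj
    obtain ⟨a, b, h, hab⟩ := hninj
    rcases lt_or_gt_of_ne hab with h' | h'
    · exact key a b h' h
    · exact key b a h' h.symm
  have hfix : geomRep cs (r * r') β.1 = β.1 :=
    fixed_of_periodic (fun u hu => divBy_reflections hA β.2.1 γ.2.1 hβγ hr hr' u hu)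
      (β.2.1.mem hA) hn0 (by rw [← map_pow]; exact hn)
  -- the second reflection negates `β`, so `β` is a multiple of `γ`
  have h1 : geomRep cs r' β.1 = -β.1 := by
    rw [geomRep_mul] at hfix
    have h2 := congrArg (geomRep cs r) hfix
    have h3 : ∀ v, geomRep cs r (geomRep cs r v) = v := by
      intro v
      rw [hr, hr v, rootForm_sub_smul, β.2.1.rootForm_self]
      module
    rw [h3, hr β.1, β.2.1.rootForm_self] at h2
    rw [h2]
    module
  rw [hr'] at h1
  set a := rootForm M γ.1 β.1
  have h2 : β.1 = (a / 2) • γ.1 := by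
    have h3 : (2 : ℝ) • β.1 = a • γ.1 := by
      calc (2 : ℝ) • β.1 = β.1 - -β.1 := by module
        _ = a • γ.1 := by rw [← h1]; module
    calc β.1 = (2⁻¹ : ℝ) • (2 : ℝ) • β.1 := by rw [smul_smul]; norm_num
      _ = _ := by rw [h3, smul_smul]; congr 1; ring
  rcases le_total 0 (a / 2) with ha | ha
  · have h3 : 0 ≤ geomRep cs y β.1 := by
      rw [h2, map_smul]
      exact smul_nonneg ha hγy
    exact (β.2.1.map y).not_nonpos h3 hβy
  · refine β.2.1.not_nonpos β.2.2 ?_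
    rw [h2]
    exact smul_nonpos_of_nonpos_of_nonneg ha γ.2.2

end Lattice

/-! ### Bounded sesquilinear forms and Schur multipliers -/

/-- The matrix `m`, indexed by `W × W`, defines a form on finitely supported vectors which is
bounded by `K` in the `ℓ²` norm. The form is taken bilinear, which avoids conjugations. -/
def FormBdd {W : Type*} (m : W → W → ℂ) (K : ℝ) : Prop :=
  ∀ (F : Finset W) (u v : W → ℂ), ‖∑ x ∈ F, ∑ y ∈ F, m x y * u x * v y‖ ≤
    K * (√(∑ x ∈ F, ‖u x‖ ^ 2) * √(∑ y ∈ F, ‖v y‖ ^ 2))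

/-- The kernel `k` is a Schur multiplier of norm at most `C`: the entrywise product with `k`
enlarges bounds of forms by a factor at most `C`. -/
def IsSchur {W : Type*} (k : W → W → ℂ) (C : ℝ) : Prop :=
  ∀ (m : W → W → ℂ) (K : ℝ), 0 ≤ K → FormBdd m K → FormBdd (fun x y => k x y * m x y) (C * K)

lemma FormBdd.mono {W : Type*} {m : W → W → ℂ} {K K' : ℝ} (h : FormBdd m K) (hK : K ≤ K') :
    FormBdd m K' := fun F u v =>
  (h F u v).trans (mul_le_mul_of_nonneg_right hK (by positivity))

lemma FormBdd.add {W : Type*} {m m' : W → W → ℂ} {K K' : ℝ} (h : FormBdd m K)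
    (h' : FormBdd m' K') : FormBdd (fun x y => m x y + m' x y) (K + K') := by
  intro F u v
  have e : ∑ x ∈ F, ∑ y ∈ F, (m x y + m' x y) * u x * v y =
      ∑ x ∈ F, ∑ y ∈ F, m x y * u x * v y + ∑ x ∈ F, ∑ y ∈ F, m' x y * u x * v y := by
    simp only [← Finset.sum_add_distrib]
    refine Finset.sum_congr rfl fun x _ => Finset.sum_congr rfl fun y _ => by ring
  rw [e, add_mul]
  exact (norm_add_le _ _).trans (add_le_add (h F u v) (h' F u v))

lemma FormBdd.const_mul {W : Type*} {m : W → W → ℂ} {K : ℝ} (h : FormBdd m K) (c : ℂ) :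
    FormBdd (fun x y => c * m x y) (‖c‖ * K) := by
  intro F u v
  have e : ∑ x ∈ F, ∑ y ∈ F, (c * m x y) * u x * v y =
      c * ∑ x ∈ F, ∑ y ∈ F, m x y * u x * v y := by
    simp only [Finset.mul_sum]
    refine Finset.sum_congr rfl fun x _ => Finset.sum_congr rfl fun y _ => by ring
  rw [e, norm_mul, mul_assoc]
  exact mul_le_mul_of_nonneg_left (h F u v) (norm_nonneg _)

lemma FormBdd.sub {W : Type*} {m m' : W → W → ℂ} {K K' : ℝ} (h : FormBdd m K)
    (h' : FormBdd m' K') : FormBdd (fun x y => m x y - m' x y) (K + K') := by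
  have := h.add (h'.const_mul (-1))
  simpa [sub_eq_add_neg] using this

lemma FormBdd.sum {W ι : Type*} (I : Finset ι) {m : ι → W → W → ℂ} {K : ι → ℝ}
    (h : ∀ i ∈ I, FormBdd (m i) (K i)) : FormBdd (fun x y => ∑ i ∈ I, m i x y) (∑ i ∈ I, K i) := by
  classical
  induction I using Finset.induction_on with
  | empty => intro F u v; simp
  | insert a s ha ih =>
    simp only [Finset.sum_insert ha]
    exact (h a (Finset.mem_insert_self _ _)).add
      (ih fun i hi => h i (Finset.mem_insert_of_mem hi))

lemma IsSchur.mul {W : Type*} {k k' : W → W → ℂ} {C C' : ℝ} (hC' : 0 ≤ C') (h : IsSchur k C)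
    (h' : IsSchur k' C') : IsSchur (fun x y => k x y * k' x y) (C * C') := by
  intro m K hK hm
  have := h _ _ (mul_nonneg hC' hK) (h' m K hK hm)
  simpa only [mul_assoc] using this

lemma IsSchur.prod {W ι : Type*} (I : Finset ι) {k : ι → W → W → ℂ} {C : ℝ} (hC : 0 ≤ C)
    (h : ∀ i ∈ I, IsSchur (k i) C) : IsSchur (fun x y => ∏ i ∈ I, k i x y) (C ^ I.card) := by
  classical
  induction I using Finset.induction_on with
  | empty => intro m K _ hm; simpa using hm
  | insert a s ha ih =>
    simp only [Finset.prod_insert ha, Finset.card_insert_of_notMem ha, pow_succ']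
    exact IsSchur.mul (by positivity) (h a (Finset.mem_insert_self _ _))
      (ih fun i hi => h i (Finset.mem_insert_of_mem hi))

/-- A kernel that factors through vectors `ξ x`, `η y` of square norm at most `C` is a Schur
multiplier of norm at most `C` (the easy half of Grothendieck's characterization). -/
lemma isSchur_of_factor {W ι : Type*} {k : W → W → ℂ} {C : ℝ} (hC : 0 ≤ C)
    (h : ∀ F : Finset W, ∃ (I : Finset ι) (ξ η : W → ι → ℂ),
      (∀ x ∈ F, ∀ y ∈ F, k x y = ∑ i ∈ I, ξ x i * η y i) ∧
      (∀ x ∈ F, ∑ i ∈ I, ‖ξ x i‖ ^ 2 ≤ C) ∧ (∀ x ∈ F, ∑ i ∈ I, ‖η x i‖ ^ 2 ≤ C)) :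
    IsSchur k C := by
  intro m K hK hm F u v
  obtain ⟨I, ξ, η, hk, hξ, hη⟩ := h F
  have e : ∑ x ∈ F, ∑ y ∈ F, (k x y * m x y) * u x * v y =
      ∑ i ∈ I, ∑ x ∈ F, ∑ y ∈ F, m x y * (ξ x i * u x) * (η y i * v y) := by
    rw [Finset.sum_comm' (t' := F) (s' := fun _ => I) (by simp)]
    refine Finset.sum_congr rfl fun x hx => ?_
    rw [Finset.sum_comm' (t' := F) (s' := fun _ => I) (by simp)]
    refine Finset.sum_congr rfl fun y hy => ?_
    rw [hk x hx y hy, Finset.sum_mul, Finset.sum_mul, Finset.sum_mul]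
    exact Finset.sum_congr rfl fun i _ => by ring
  have key : ∀ (ζ : W → ι → ℂ) (w : W → ℂ), (∀ x ∈ F, ∑ i ∈ I, ‖ζ x i‖ ^ 2 ≤ C) →
      √(∑ i ∈ I, √(∑ x ∈ F, ‖ζ x i * w x‖ ^ 2) ^ 2) ≤ √C * √(∑ x ∈ F, ‖w x‖ ^ 2) := by
    intro ζ w hζ
    rw [← Real.sqrt_mul hC]
    refine Real.sqrt_le_sqrt ?_
    have : ∀ i ∈ I, √(∑ x ∈ F, ‖ζ x i * w x‖ ^ 2) ^ 2 = ∑ x ∈ F, ‖ζ x i * w x‖ ^ 2 :=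
      fun i _ => Real.sq_sqrt (Finset.sum_nonneg fun _ _ => by positivity)
    rw [Finset.sum_congr rfl this, Finset.sum_comm, Finset.mul_sum]
    refine Finset.sum_le_sum fun x hx => ?_
    simp only [norm_mul, mul_pow]
    rw [← Finset.sum_mul]
    exact mul_le_mul_of_nonneg_right (hζ x hx) (by positivity)
  rw [e]
  calc _ ≤ ∑ i ∈ I, K * (√(∑ x ∈ F, ‖ξ x i * u x‖ ^ 2) * √(∑ y ∈ F, ‖η y i * v y‖ ^ 2)) :=
        norm_sum_le_of_le _ fun i _ => hm F _ _
    _ ≤ K * (√(∑ i ∈ I, √(∑ x ∈ F, ‖ξ x i * u x‖ ^ 2) ^ 2) *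
          √(∑ i ∈ I, √(∑ x ∈ F, ‖η x i * v x‖ ^ 2) ^ 2)) := by
        rw [← Finset.mul_sum]
        exact mul_le_mul_of_nonneg_left (Real.sum_mul_le_sqrt_mul_sqrt _ _ _) hK
    _ ≤ K * ((√C * √(∑ x ∈ F, ‖u x‖ ^ 2)) * (√C * √(∑ x ∈ F, ‖v x‖ ^ 2))) :=
        mul_le_mul_of_nonneg_left (mul_le_mul (key ξ u hξ) (key η v hη) (by positivity)
          (by positivity)) hK
    _ = _ := by
        have := Real.mul_self_sqrt hC
        linear_combination (K * √(∑ x ∈ F, ‖u x‖ ^ 2) * √(∑ x ∈ F, ‖v x‖ ^ 2)) * this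

/-! ### The kernel `z ^ d` of a family of pairwise non-crossing walls -/

section Rank

variable {T : Type*} [DecidableEq T] {P : T → T → Prop} [DecidableRel P]

/-- For a relation `P s t` (read: `s` lies below `t`), the number of elements of `A` strictly
below `t`. -/
def rankIn (P : T → T → Prop) [DecidableRel P] (A : Finset T) (t : T) : ℕ :=
  (A.filter fun s => s ≠ t ∧ P s t).card

lemma rankIn_lt {A : Finset T} {t : T} (ht : t ∈ A) : rankIn P A t < A.card :=
  Finset.card_lt_card ⟨Finset.filter_subset _ _, fun h => by simpa using h ht⟩

/-- On a finite chain the ranks are `0, 1, …, |A| - 1`. -/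
lemma sum_rankIn {M : Type*} [AddCommMonoid M] (hPt : ∀ a b c, P a b → P b c → P a c)
    (hPa : ∀ a b, P a b → P b a → a = b) {A : Finset T}
    (hA : ∀ a ∈ A, ∀ b ∈ A, P a b ∨ P b a) (g : ℕ → M) :
    ∑ t ∈ A, g (rankIn P A t) = ∑ j ∈ Finset.range A.card, g j := by
  have lt : ∀ a ∈ A, ∀ b ∈ A, a ≠ b → P a b → rankIn P A a < rankIn P A b := by
    intro a ha b hb hab h
    refine Finset.card_lt_card ⟨?_, fun hs => ?_⟩
    · intro s hs
      simp only [Finset.mem_filter] at hs ⊢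
      refine ⟨hs.1, ?_, hPt _ _ _ hs.2.2 h⟩
      rintro rfl
      exact hab (hPa _ _ h hs.2.2)
    · have : a ∈ A.filter fun s => s ≠ a ∧ P s a := hs (by simp [ha, hab, h])
      simp at this
  have inj : Set.InjOn (rankIn P A) A := by
    intro a ha b hb hab
    by_contra hne
    rcases hA a ha b hb with h | h
    · exact (lt a ha b hb hne h).ne hab
    · exact (lt b hb a ha (Ne.symm hne) h).ne' hab
  rw [← Finset.sum_image (f := g) inj]
  congr 1
  refine Finset.eq_of_subset_of_card_le ?_ ?_
  · intro j hj
    obtain ⟨t, ht, rfl⟩ := Finset.mem_image.1 hj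
    exact Finset.mem_range.2 (rankIn_lt ht)
  · rw [Finset.card_image_of_injOn inj, Finset.card_range]

end Rank

/-- If the walls in `N x`, for `x : W`, are pairwise non-crossing, i.e. dual to a tree, then
`z ^ #(N x ∆ N y)` is a Schur multiplier for `|z| < 1`, of norm `1` for real `z ≥ 0`. The vectors
of the factorization are geometric series along the path in the tree from `x` to the root. -/
lemma isSchur_tree {W T : Type*} [DecidableEq T] (N : W → Finset T)
    (hsep : ∀ s t, (∀ x, s ∈ N x ↔ t ∈ N x) → s = t)
    (hN : ∀ s t x y w, s ∈ N x → t ∈ N x → s ∈ N y → t ∉ N y → s ∉ N w → t ∈ N w → False)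
    {z : ℂ} (hz : ‖z‖ < 1) :
    IsSchur (fun x y => z ^ (symmDiff (N x) (N y)).card) (‖1 - z ^ 2‖ / (1 - ‖z‖ ^ 2)) := by
  classical
  have hz2 : ‖z‖ ^ 2 < 1 := by
    have := norm_nonneg z
    nlinarith
  have hpos : 0 < 1 - ‖z‖ ^ 2 := by linarith
  have hC1 : 1 ≤ ‖1 - z ^ 2‖ / (1 - ‖z‖ ^ 2) := by
    rw [le_div_iff₀ hpos, one_mul]
    have := norm_sub_norm_le (1 : ℂ) (z ^ 2)
    simpa using this
  have hne : (1 - z ^ 2 : ℂ) ≠ 0 := by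
    intro h
    have : ‖z‖ ^ 2 = 1 := by rw [← norm_pow, ← sub_eq_zero.1 h]; simp
    linarith
  let P : T → T → Prop := fun s t => ∀ x, s ∈ N x → t ∈ N x
  have hPt : ∀ a b c, P a b → P b c → P a c := fun a b c h h' x hx => h' x (h x hx)
  have hPa : ∀ a b, P a b → P b a → a = b := fun a b h h' => hsep a b fun x => ⟨h x, h' x⟩
  have hch : ∀ x, ∀ a ∈ N x, ∀ b ∈ N x, P a b ∨ P b a := by
    intro x a ha b hb
    by_contra hcon
    simp only [P, not_or, not_forall] at hcon
    obtain ⟨⟨y, hy, hy'⟩, ⟨w, hw, hw'⟩⟩ := hcon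
    exact hN a b x y w ha hb hy hy' hw' hw
  -- a square root of `1 - z ^ 2`, so that both vectors are balanced
  obtain ⟨q, hq⟩ := IsAlgClosed.exists_pow_nat_eq (1 - z ^ 2 : ℂ) (n := 2) (by norm_num)
  let ξ : W → Option T → ℂ := fun x o =>
    o.elim (z ^ (N x).card) fun t => if t ∈ N x then q * z ^ rankIn P (N x) t else 0
  have hnorm : ∀ (x : W) (I : Finset T), N x ⊆ I →
      ∑ o ∈ Finset.insertNone I, ‖ξ x o‖ ^ 2 ≤ ‖1 - z ^ 2‖ / (1 - ‖z‖ ^ 2) := by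
    intro x I hI
    rw [Finset.sum_insertNone]
    have e1 : ∑ t ∈ I, ‖ξ x (some t)‖ ^ 2 = ∑ t ∈ N x, ‖q‖ ^ 2 * (‖z‖ ^ 2) ^ rankIn P (N x) t := by
      rw [← Finset.sum_subset hI]
      · refine Finset.sum_congr rfl fun t ht => ?_
        simp only [ξ, Option.elim, ht, if_true, norm_mul, norm_pow, mul_pow]
        ring
      · intro t _ ht
        simp [ξ, ht]
    have hq2 : ‖q‖ ^ 2 = ‖1 - z ^ 2‖ := by rw [← norm_pow, hq]
    rw [e1, ← Finset.mul_sum, sum_rankIn hPt hPa (hch x) fun j => (‖z‖ ^ 2) ^ j, hq2,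
      geom_sum_eq hz2.ne]
    have e2 : ‖ξ x none‖ ^ 2 = (‖z‖ ^ 2) ^ (N x).card := by
      simp only [ξ, Option.elim, norm_pow]
      ring
    rw [e2]
    have hp : 0 ≤ (‖z‖ ^ 2) ^ (N x).card := by positivity
    set p := (‖z‖ ^ 2) ^ (N x).card
    have e3 : p + ‖1 - z ^ 2‖ * ((p - 1) / (‖z‖ ^ 2 - 1)) =
        ‖1 - z ^ 2‖ / (1 - ‖z‖ ^ 2) + p * (1 - ‖1 - z ^ 2‖ / (1 - ‖z‖ ^ 2)) := by
      have h1 : ‖z‖ ^ 2 - 1 ≠ 0 := by linarith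
      have h2 : 1 - ‖z‖ ^ 2 ≠ 0 := hpos.ne'
      field_simp
      ring
    rw [e3]
    nlinarith
  refine isSchur_of_factor (ι := Option T) (by linarith) fun F => ?_
  refine ⟨Finset.insertNone (F.biUnion N), ξ, ξ, ?_, fun x hx => hnorm x _ ?_,
    fun x hx => hnorm x _ ?_⟩
  rotate_left
  · exact Finset.subset_biUnion_of_mem N hx
  · exact Finset.subset_biUnion_of_mem N hx
  intro x hx y hy
  set C := N x ∩ N y with hCdef
  -- elements of the common part lie above all the others
  have hrank : ∀ (a b : W), ∀ t ∈ N a ∩ N b, rankIn P (N a) t =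
      (N a \ N b).card + rankIn P (N a ∩ N b) t := by
    intro a b t ht
    rw [Finset.mem_inter] at ht
    unfold rankIn
    rw [← Finset.card_union_of_disjoint]
    · congr 1
      ext s
      simp only [Finset.mem_filter, Finset.mem_union, Finset.mem_sdiff, Finset.mem_inter]
      constructor
      · rintro ⟨h1, h2⟩
        by_cases hs : s ∈ N b
        · exact Or.inr ⟨⟨h1, hs⟩, h2⟩
        · exact Or.inl ⟨h1, hs⟩
      · rintro (⟨h1, h2⟩ | ⟨⟨h1, _⟩, h2⟩)
        · refine ⟨h1, ?_, ?_⟩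
          · rintro rfl
            exact h2 ht.2
          · rcases hch a s h1 t ht.1 with h | h
            · exact h
            · exact absurd (h b ht.2) h2
        · exact ⟨h1, h2⟩
    · rw [Finset.disjoint_left]
      intro s hs hs'
      simp only [Finset.mem_filter, Finset.mem_sdiff, Finset.mem_inter] at hs hs'
      exact hs.2 hs'.1.2
  rw [Finset.sum_insertNone]
  have e1 : ∑ t ∈ F.biUnion N, ξ x (some t) * ξ y (some t) =
      ∑ t ∈ C, (1 - z ^ 2) * z ^ ((N x \ N y).card + (N y \ N x).card) *
        (z ^ 2) ^ rankIn P C t := by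
    rw [← Finset.sum_subset (s₁ := C)]
    · refine Finset.sum_congr rfl fun t ht => ?_
      have h1 := hrank x y t ht
      have h2 := hrank y x t (by rwa [Finset.inter_comm])
      rw [Finset.inter_comm (N y) (N x)] at h2
      rw [hCdef, Finset.mem_inter] at ht
      simp only [ξ, Option.elim, ht.1, ht.2, if_true, h1, h2, ← hq, ← hCdef]
      ring
    · exact Finset.inter_subset_left.trans (Finset.subset_biUnion_of_mem N hx)
    · intro t _ ht
      rw [hCdef, Finset.mem_inter, not_and_or] at ht
      rcases ht with h | h <;> simp [ξ, h]
  rw [e1, ← Finset.mul_sum, sum_rankIn hPt hPa (fun a ha b hb => hch x a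
    (Finset.mem_inter.1 ha).1 b (Finset.mem_inter.1 hb).1) fun j => (z ^ 2) ^ j]
  have hs : (symmDiff (N x) (N y)).card = (N x \ N y).card + (N y \ N x).card := by
    rw [symmDiff_def, Finset.sup_eq_union, Finset.card_union_of_disjoint disjoint_sdiff_sdiff]
  have hx' : (N x).card = (N x \ N y).card + C.card := by
    rw [hCdef, Finset.card_sdiff_add_card_inter]
  have hy' : (N y).card = (N y \ N x).card + C.card := by
    rw [hCdef, Finset.inter_comm, Finset.card_sdiff_add_card_inter]
  have hg : (1 - z ^ 2) * ∑ j ∈ Finset.range C.card, (z ^ 2) ^ j = 1 - (z ^ 2) ^ C.card :=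
    mul_neg_geom_sum (z ^ 2) C.card
  simp only [ξ, Option.elim]
  rw [hs, hx', hy']
  linear_combination (-z ^ ((N x \ N y).card + (N y \ N x).card)) * hg

/-- If the walls in the sets `N x` are coloured by `κ` so that walls of the same colour do not
cross, then `z ^ #(N x ∆ N y)` is a product of kernels of trees. -/
lemma isSchur_pow {W T κ : Type*} [Fintype κ] [DecidableEq T] (N : W → Finset T) (col : T → κ)
    (hsep : ∀ s t, (∀ x, s ∈ N x ↔ t ∈ N x) → s = t)
    (hN : ∀ s t x y w, col s = col t →
      s ∈ N x → t ∈ N x → s ∈ N y → t ∉ N y → s ∉ N w → t ∈ N w → False)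
    {z : ℂ} (hz : ‖z‖ < 1) :
    IsSchur (fun x y => z ^ (symmDiff (N x) (N y)).card)
      ((‖1 - z ^ 2‖ / (1 - ‖z‖ ^ 2)) ^ Fintype.card κ) := by
  classical
  have hpos : 0 ≤ 1 - ‖z‖ ^ 2 := by
    have := norm_nonneg z
    nlinarith
  have key : ∀ c ∈ (Finset.univ : Finset κ), IsSchur (fun x y => z ^ (symmDiff
      ((N x).filter (col · = c)) ((N y).filter (col · = c))).card)
      (‖1 - z ^ 2‖ / (1 - ‖z‖ ^ 2)) := by
    intro c _
    -- restrict the walls to those of colour `c`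
    have := isSchur_tree (T := {t // col t = c}) (fun x => (N x).subtype (col · = c)) (by
        intro s t h
        refine Subtype.ext (hsep _ _ fun x => ?_)
        simpa using h x) (by
        intro s t x y w h1 h2 h3 h4 h5 h6
        simp only [Finset.mem_subtype] at h1 h2 h3 h4 h5 h6
        exact hN s t x y w (s.2.trans t.2.symm) h1 h2 h3 h4 h5 h6) hz
    convert this using 4 with x y
    rw [← Finset.card_map (Function.Embedding.subtype _)]
    congr 1
    ext t
    simp only [Finset.mem_symmDiff, Finset.mem_filter, Finset.mem_map, Finset.mem_subtype,
      Function.Embedding.coe_subtype, Subtype.exists, exists_and_left, exists_prop,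
      exists_eq_right_right]
    tauto
  have := IsSchur.prod Finset.univ (div_nonneg (norm_nonneg _) hpos) key
  rw [Finset.card_univ] at this
  convert this using 3 with x y
  rw [Finset.prod_pow_eq_pow_sum]
  congr 1
  rw [Finset.card_eq_sum_card_fiberwise (f := col) (t := Finset.univ) (by simp)]
  refine Finset.sum_congr rfl fun c _ => ?_
  congr 1
  ext t
  simp only [Finset.mem_symmDiff, Finset.mem_filter]
  tauto

/-! ### Truncation of a matrix with respect to a length kernel -/

section Truncation

variable {W : Type*} {d : W → W → ℕ} {c : ℕ}

/-- The indicator of `d = n` is, up to the factor `R ^ n`, an average of the kernels `z ^ d` over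
roots of unity times `R`; this gives a bound that grows like `R ^ (-n)`, for every `R < 1`. -/
lemma formBdd_sphere
    (hS : ∀ z : ℂ, ‖z‖ < 1 → IsSchur (fun x y => z ^ d x y) ((‖1 - z ^ 2‖ / (1 - ‖z‖ ^ 2)) ^ c))
    {R : ℝ} (hR0 : 0 < R) (hR1 : R < 1) {m : W → W → ℂ} (hm : FormBdd m 1) (n : ℕ) :
    FormBdd (fun x y => if d x y = n then (R : ℂ) ^ n * m x y else 0)
      (((1 + R ^ 2) / (1 - R ^ 2)) ^ c) := by
  have hR2 : 0 < 1 - R ^ 2 := by nlinarith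
  intro F u v
  -- a modulus larger than `n` and all values of `d` on `F`
  obtain ⟨L, hLn, hLd⟩ : ∃ L, n < L ∧ ∀ x ∈ F, ∀ y ∈ F, d x y < L := by
    refine ⟨n + (∑ x ∈ F, ∑ y ∈ F, d x y) + 1, by omega, fun x hx y hy => ?_⟩
    have h1 : d x y ≤ ∑ y ∈ F, d x y := Finset.single_le_sum (f := fun y => d x y) (by simp) hy
    have h2 : ∑ y ∈ F, d x y ≤ ∑ x ∈ F, ∑ y ∈ F, d x y :=
      Finset.single_le_sum (f := fun x => ∑ y ∈ F, d x y) (by simp) hx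
    omega
  have hL0 : L ≠ 0 := by omega
  have hprim := Complex.isPrimitiveRoot_exp L hL0
  set ω := Complex.exp (2 * Real.pi * Complex.I / L)
  have hω : ‖ω‖ = 1 := hprim.norm'_eq_one hL0
  have hb : ∀ j ∈ Finset.range L, FormBdd (fun x y => ω ^ (j * (L - n)) *
      ((R * ω ^ j) ^ d x y * m x y)) (((1 + R ^ 2) / (1 - R ^ 2)) ^ c) := by
    intro j _
    have hz : ‖(R * ω ^ j : ℂ)‖ = R := by simp [hω, abs_of_pos hR0]
    have h1 := (hS (R * ω ^ j) (by rw [hz]; exact hR1) m 1 zero_le_one hm).const_mul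
      (ω ^ (j * (L - n)))
    refine h1.mono ?_
    rw [norm_pow, hω, one_pow, one_mul, mul_one, hz]
    have h2 : ‖1 - (R * ω ^ j : ℂ) ^ 2‖ ≤ 1 + R ^ 2 := by
      refine (norm_sub_le _ _).trans ?_
      rw [norm_pow, hz, norm_one]
    gcongr
  have hsum := (FormBdd.sum (Finset.range L) hb).const_mul ((L : ℂ)⁻¹) F u v
  have hL' : (L : ℝ) ≠ 0 := by exact_mod_cast hL0
  have hLc : (L : ℂ) ≠ 0 := by exact_mod_cast hL0
  rw [Finset.sum_const, Finset.card_range, nsmul_eq_mul, norm_inv, Complex.norm_natCast,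
    inv_mul_cancel_left₀ hL'] at hsum
  convert hsum using 2
  refine Finset.sum_congr rfl fun x hx => Finset.sum_congr rfl fun y hy => ?_
  congr 2
  beta_reduce
  have hd := hLd x hx y hy
  have e : ∀ j ∈ Finset.range L, ω ^ (j * (L - n)) * ((R * ω ^ j) ^ d x y * m x y) =
      ((ω ^ (d x y + (L - n))) ^ j) * (R ^ d x y * m x y) := fun j _ => by
    rw [mul_pow, ← pow_mul, ← pow_mul]
    ring
  rw [Finset.sum_congr rfl e, ← Finset.sum_mul]
  by_cases h : d x y = n
  · have h1 : d x y + (L - n) = L := by omega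
    rw [if_pos h, h1, hprim.pow_eq_one, h]
    simp [hLc]
  · have h1 : ω ^ (d x y + (L - n)) ≠ 1 := by
      rw [Ne, hprim.pow_eq_one_iff_dvd]
      rintro ⟨q, hq⟩
      have hq0 : 0 < q := by
        rcases Nat.eq_zero_or_pos q with rfl | h'
        · simp at hq; omega
        · exact h'
      have hq2 : q < 2 := by
        by_contra h'
        have : L * 2 ≤ L * q := Nat.mul_le_mul_left _ (by omega)
        omega
      have : q = 1 := by omega
      subst this
      omega
    rw [if_neg h, geom_sum_eq h1, ← pow_mul, mul_comm _ L, pow_mul, hprim.pow_eq_one]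
    simp

/-- Summing `formBdd_sphere` over `n ≥ N` with the weights `R ^ n` gives a geometrically small
bound for the part of the multiplier `(R ^ 2) ^ d` beyond distance `N`. -/
lemma formBdd_tail
    (hS : ∀ z : ℂ, ‖z‖ < 1 → IsSchur (fun x y => z ^ d x y) ((‖1 - z ^ 2‖ / (1 - ‖z‖ ^ 2)) ^ c))
    {R : ℝ} (hR0 : 0 < R) (hR1 : R < 1) {m : W → W → ℂ} (hm : FormBdd m 1) (N : ℕ) :
    FormBdd (fun x y => if N ≤ d x y then ((R ^ 2 : ℝ) : ℂ) ^ d x y * m x y else 0)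
      (R ^ N * (1 - R)⁻¹ * ((1 + R ^ 2) / (1 - R ^ 2)) ^ c) := by
  have hR2 : 0 < 1 - R ^ 2 := by nlinarith
  intro F u v
  obtain ⟨L, hLd⟩ : ∃ L, ∀ x ∈ F, ∀ y ∈ F, d x y < N + L := by
    refine ⟨(∑ x ∈ F, ∑ y ∈ F, d x y) + 1, fun x hx y hy => ?_⟩
    have h1 : d x y ≤ ∑ y ∈ F, d x y := Finset.single_le_sum (f := fun y => d x y) (by simp) hy
    have h2 : ∑ y ∈ F, d x y ≤ ∑ x ∈ F, ∑ y ∈ F, d x y :=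
      Finset.single_le_sum (f := fun x => ∑ y ∈ F, d x y) (by simp) hx
    omega
  have h1 := (FormBdd.sum (Finset.range L) fun k _ =>
    (formBdd_sphere hS hR0 hR1 hm (N + k)).const_mul ((R : ℂ) ^ (N + k))) F u v
  have h2 : ∑ k ∈ Finset.range L, ‖(R : ℂ) ^ (N + k)‖ * ((1 + R ^ 2) / (1 - R ^ 2)) ^ c ≤
      R ^ N * (1 - R)⁻¹ * ((1 + R ^ 2) / (1 - R ^ 2)) ^ c := by
    rw [← Finset.sum_mul]
    refine mul_le_mul_of_nonneg_right ?_ (by positivity)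
    have : ∀ k ∈ Finset.range L, ‖(R : ℂ) ^ (N + k)‖ = R ^ N * R ^ k := fun k _ => by
      rw [norm_pow, Complex.norm_real, Real.norm_of_nonneg hR0.le, pow_add]
    rw [Finset.sum_congr rfl this, ← Finset.mul_sum]
    refine mul_le_mul_of_nonneg_left ?_ (by positivity)
    rw [← tsum_geometric_of_lt_one hR0.le hR1]
    exact (summable_geometric_of_lt_one hR0.le hR1).sum_le_tsum _ fun _ _ => by positivity
  refine le_trans (le_of_eq ?_) (h1.trans (mul_le_mul_of_nonneg_right h2 (by positivity)))
  congr 1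
  refine Finset.sum_congr rfl fun x hx => Finset.sum_congr rfl fun y hy => ?_
  congr 2
  beta_reduce
  have hd := hLd x hx y hy
  by_cases h : N ≤ d x y
  · obtain ⟨k, hk⟩ := Nat.exists_eq_add_of_le h
    rw [if_pos h, Finset.sum_eq_single k, if_pos hk, hk]
    · push_cast
      ring
    · intro j _ hj
      rw [if_neg (by omega), mul_zero]
    · intro hk'
      simp at hk'
      omega
  · rw [if_neg h]
    symm
    refine Finset.sum_eq_zero fun k _ => ?_
    rw [if_neg (by omega), mul_zero]

/-- The distance of `m` to its image under the multiplier `r ^ d` is controlled by the size of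
`d · m`, by integrating the derivative in the parameter. -/
lemma formBdd_sub_pow
    (hS : ∀ z : ℂ, ‖z‖ < 1 → IsSchur (fun x y => z ^ d x y) ((‖1 - z ^ 2‖ / (1 - ‖z‖ ^ 2)) ^ c))
    {r : ℝ} (hr0 : 0 < r) (hr1 : r < 1) {m : W → W → ℂ}
    (hdm : FormBdd (fun x y => (d x y : ℂ) * m x y) 1) :
    FormBdd (fun x y => m x y - (r : ℂ) ^ d x y * m x y) (r⁻¹ * (1 - r)) := by
  intro F u v
  set Q := √(∑ x ∈ F, ‖u x‖ ^ 2) * √(∑ y ∈ F, ‖v y‖ ^ 2) with hQ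
  let G : ℝ → ℂ := fun s => ∑ x ∈ F, ∑ y ∈ F, ((s : ℂ) ^ d x y * m x y) * u x * v y
  let G' : ℝ → ℂ := fun s =>
    ∑ x ∈ F, ∑ y ∈ F, ((d x y * (s : ℂ) ^ (d x y - 1)) * m x y) * u x * v y
  have hG : ∀ s : ℝ, HasDerivAt G (G' s) s := by
    intro s
    refine HasDerivAt.fun_sum fun x _ => HasDerivAt.fun_sum fun y _ => ?_
    refine ((HasDerivAt.mul_const ?_ _).mul_const _).mul_const _
    exact (hasDerivAt_pow (d x y) (s : ℂ)).comp_ofReal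
  have hb : ∀ s ∈ Set.Ico r 1, ‖G' s‖ ≤ r⁻¹ * Q := by
    rintro s ⟨hs, hs1⟩
    have hs0 : 0 < s := hr0.trans_le hs
    have hz : ‖(s : ℂ)‖ = s := by simp [abs_of_pos hs0]
    have h1 := (hS s (by rw [hz]; exact hs1) _ 1 zero_le_one hdm) F u v
    have h2 : ‖1 - (s : ℂ) ^ 2‖ = 1 - s ^ 2 := by
      have : (1 - (s : ℂ) ^ 2) = ((1 - s ^ 2 : ℝ) : ℂ) := by push_cast; rfl
      rw [this, Complex.norm_real, Real.norm_of_nonneg]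
      nlinarith
    have h3 : (1 - s ^ 2 : ℝ) ≠ 0 := by nlinarith
    rw [h2, hz, div_self h3, one_pow, one_mul, one_mul] at h1
    have e : ∑ x ∈ F, ∑ y ∈ F, ((s : ℂ) ^ d x y * ((d x y : ℂ) * m x y)) * u x * v y =
        s * G' s := by
      simp only [G', Finset.mul_sum]
      refine Finset.sum_congr rfl fun x _ => Finset.sum_congr rfl fun y _ => ?_
      rcases Nat.eq_zero_or_pos (d x y) with h | h
      · simp [h]
      · obtain ⟨k, hk⟩ := Nat.exists_eq_add_of_lt h
        simp only [hk, Nat.zero_add, Nat.add_sub_cancel]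
        ring
    rw [e, norm_mul, hz] at h1
    rw [inv_mul_eq_div, le_div_iff₀ hr0]
    calc ‖G' s‖ * r ≤ ‖G' s‖ * s := mul_le_mul_of_nonneg_left hs (norm_nonneg _)
      _ ≤ Q := by rw [mul_comm]; exact h1
  have := norm_image_sub_le_of_norm_deriv_le_segment' (f := G) (f' := G') (a := r) (b := 1)
    (fun s _ => (hG s).hasDerivWithinAt) hb 1 ⟨hr1.le, le_rfl⟩
  have e : ∑ x ∈ F, ∑ y ∈ F, (m x y - (r : ℂ) ^ d x y * m x y) * u x * v y = G 1 - G r := by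
    simp only [G, ← Finset.sum_sub_distrib]
    refine Finset.sum_congr rfl fun x _ => Finset.sum_congr rfl fun y _ => ?_
    simp
    ring
  rw [e]
  linarith

/-- Uniform approximation by matrices supported on a band `d < N`. -/
lemma exists_band_approx
    (hS : ∀ z : ℂ, ‖z‖ < 1 → IsSchur (fun x y => z ^ d x y) ((‖1 - z ^ 2‖ / (1 - ‖z‖ ^ 2)) ^ c))
    {ε : ℝ} (hε : 0 < ε) :
    ∃ (N : ℕ) (r : ℝ), 0 < r ∧ r < 1 ∧ ∀ m : W → W → ℂ, FormBdd m 1 →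
      FormBdd (fun x y => (d x y : ℂ) * m x y) 1 →
      FormBdd (fun x y => m x y - if d x y < N then (r : ℂ) ^ d x y * m x y else 0) ε := by
  obtain ⟨R, hR0, hR1, hR⟩ : ∃ R : ℝ, 0 < R ∧ R < 1 ∧ (R ^ 2)⁻¹ * (1 - R ^ 2) < ε / 2 := by
    have hc : ContinuousAt (fun R : ℝ => (R ^ 2)⁻¹ * (1 - R ^ 2)) 1 := by
      refine ContinuousAt.mul (ContinuousAt.inv₀ ?_ (by norm_num)) ?_ <;> fun_prop
    have h1 : ∀ᶠ R in nhds (1 : ℝ), (R ^ 2)⁻¹ * (1 - R ^ 2) < ε / 2 :=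
      hc.eventually (gt_mem_nhds (by simpa using hε))
    have h2 := (h1.filter_mono nhdsWithin_le_nhds).and
      (Ioo_mem_nhdsLT (show (0 : ℝ) < 1 by norm_num) : ∀ᶠ R in nhdsWithin (1 : ℝ) (Set.Iio 1),
        R ∈ Set.Ioo (0 : ℝ) 1)
    obtain ⟨R, h, h'⟩ := h2.exists
    exact ⟨R, h'.1, h'.2, h⟩
  have hr1 : R ^ 2 < 1 := by nlinarith
  obtain ⟨N, hN⟩ : ∃ N : ℕ, R ^ N * (1 - R)⁻¹ * ((1 + R ^ 2) / (1 - R ^ 2)) ^ c < ε / 2 := by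
    have := ((tendsto_pow_atTop_nhds_zero_of_lt_one hR0.le hR1).mul_const (1 - R)⁻¹).mul_const
      (((1 + R ^ 2) / (1 - R ^ 2)) ^ c)
    rw [zero_mul, zero_mul] at this
    exact (this.eventually (gt_mem_nhds (half_pos hε))).exists
  refine ⟨N, R ^ 2, by positivity, hr1, fun m hm hdm => ?_⟩
  have h1 := (formBdd_sub_pow hS (by positivity) hr1 hdm).mono hR.le
  have h2 := (formBdd_tail hS hR0 hR1 hm N).mono hN.le
  have h3 := h1.add h2
  rw [add_halves] at h3
  convert h3 using 3 with x y
  by_cases h : d x y < N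
  · rw [if_pos h, if_neg (by omega), add_zero]
  · rw [if_neg h, if_pos (by omega)]
    ring

end Truncation

/-! ### Matrix coefficients of operators on `ℓ²(W)` -/

section Operators

variable {W : Type*} [DecidableEq W]

/-- The matrix of `T` in the standard basis of `ℓ²(W)`. -/
noncomputable def opMat (T : lp (fun _ : W => ℂ) 2 →L[ℂ] lp (fun _ : W => ℂ) 2) (x y : W) : ℂ :=
  T (lp.single 2 y 1) x

lemma lp_single_eq_smul (y : W) (c : ℂ) :
    (lp.single 2 y c : lp (fun _ : W => ℂ) 2) = c • lp.single 2 y (1 : ℂ) := by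
  rw [← lp.single_smul]
  simp

lemma norm_sum_single_eq (F : Finset W) (v : W → ℂ) :
    ‖∑ y ∈ F, (lp.single 2 y (v y) : lp (fun _ : W => ℂ) 2)‖ = √(∑ y ∈ F, ‖v y‖ ^ 2) := by
  have h := lp.norm_sum_single (E := fun _ : W => ℂ) (p := 2) (by norm_num) v F
  simp only [ENNReal.toReal_ofNat, Real.rpow_two] at h
  rw [← h, Real.sqrt_sq (norm_nonneg _)]

omit [DecidableEq W] in
lemma sum_norm_sq_le (f : lp (fun _ : W => ℂ) 2) (F : Finset W) :
    √(∑ x ∈ F, ‖f x‖ ^ 2) ≤ ‖f‖ := by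
  have h := lp.sum_rpow_le_norm_rpow (p := 2) (by norm_num) f F
  simp only [ENNReal.toReal_ofNat, Real.rpow_two] at h
  exact Real.sqrt_le_iff.2 ⟨norm_nonneg _, h⟩

lemma apply_sum_single (T : lp (fun _ : W => ℂ) 2 →L[ℂ] lp (fun _ : W => ℂ) 2) (F : Finset W)
    (v : W → ℂ) (x : W) :
    T (∑ y ∈ F, lp.single 2 y (v y)) x = ∑ y ∈ F, opMat T x y * v y := by
  rw [map_sum, lp.coeFn_sum, Finset.sum_apply]
  refine Finset.sum_congr rfl fun y _ => ?_
  rw [lp_single_eq_smul, map_smul, lp.coeFn_smul, Pi.smul_apply, smul_eq_mul, mul_comm]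
  rfl

lemma formBdd_opMat (T : lp (fun _ : W => ℂ) 2 →L[ℂ] lp (fun _ : W => ℂ) 2) :
    FormBdd (opMat T) ‖T‖ := by
  intro F u v
  set h : lp (fun _ : W => ℂ) 2 := ∑ y ∈ F, lp.single 2 y (v y) with hh
  have e : ∑ x ∈ F, ∑ y ∈ F, opMat T x y * u x * v y = ∑ x ∈ F, u x * T h x := by
    refine Finset.sum_congr rfl fun x _ => ?_
    rw [hh, apply_sum_single, Finset.mul_sum]
    exact Finset.sum_congr rfl fun y _ => by ring
  rw [e]
  calc ‖∑ x ∈ F, u x * T h x‖ ≤ ∑ x ∈ F, ‖u x‖ * ‖T h x‖ :=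
        norm_sum_le_of_le _ fun x _ => (norm_mul _ _).le
    _ ≤ √(∑ x ∈ F, ‖u x‖ ^ 2) * √(∑ x ∈ F, ‖T h x‖ ^ 2) := Real.sum_mul_le_sqrt_mul_sqrt _ _ _
    _ ≤ √(∑ x ∈ F, ‖u x‖ ^ 2) * (‖T‖ * √(∑ y ∈ F, ‖v y‖ ^ 2)) := by
        refine mul_le_mul_of_nonneg_left ?_ (Real.sqrt_nonneg _)
        refine (sum_norm_sq_le _ F).trans ((T.le_opNorm h).trans_eq ?_)
        rw [hh, norm_sum_single_eq]
    _ = _ := by ring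

lemma norm_le_of_formBdd (T : lp (fun _ : W => ℂ) 2 →L[ℂ] lp (fun _ : W => ℂ) 2) {K : ℝ}
    (hK : 0 ≤ K) (hT : FormBdd (opMat T) K) : ‖T‖ ≤ K := by
  -- bound on finitely supported vectors
  have key : ∀ (F : Finset W) (v : W → ℂ), ‖T (∑ y ∈ F, lp.single 2 y (v y))‖ ≤
      K * ‖∑ y ∈ F, (lp.single 2 y (v y) : lp (fun _ : W => ℂ) 2)‖ := by
    intro F v
    set h : lp (fun _ : W => ℂ) 2 := ∑ y ∈ F, lp.single 2 y (v y) with hh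
    refine lp.norm_le_of_forall_sum_le (by norm_num) (by positivity) fun E => ?_
    simp only [ENNReal.toReal_ofNat, Real.rpow_two]
    -- test the form on the conjugate of the image, on a set containing both supports
    let u : W → ℂ := fun x => if x ∈ E then (starRingEnd ℂ) (T h x) else 0
    let v' : W → ℂ := fun y => if y ∈ F then v y else 0
    have h1 := hT (E ∪ F) u v'
    have eu : ∑ x ∈ E ∪ F, ‖u x‖ ^ 2 = ∑ x ∈ E, ‖T h x‖ ^ 2 := by
      rw [← Finset.sum_subset Finset.subset_union_left]
      · exact Finset.sum_congr rfl fun x hx => by simp [u, hx]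
      · intro x _ hx
        simp [u, hx]
    have ev : ∑ x ∈ E ∪ F, ‖v' x‖ ^ 2 = ∑ x ∈ F, ‖v x‖ ^ 2 := by
      rw [← Finset.sum_subset Finset.subset_union_right]
      · exact Finset.sum_congr rfl fun x hx => by simp [v', hx]
      · intro x _ hx
        simp [v', hx]
    have e : ∑ x ∈ E ∪ F, ∑ y ∈ E ∪ F, opMat T x y * u x * v' y =
        ((∑ x ∈ E, ‖T h x‖ ^ 2 : ℝ) : ℂ) := by
      rw [← Finset.sum_subset Finset.subset_union_left]
      · push_cast
        refine Finset.sum_congr rfl fun x hx => ?_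
        rw [← Finset.sum_subset Finset.subset_union_right]
        · have ex : T h x = ∑ y ∈ F, opMat T x y * v y := by rw [hh, apply_sum_single]
          rw [← Complex.conj_mul']
          conv_rhs => rw [ex, Finset.mul_sum]
          rw [← ex]
          refine Finset.sum_congr rfl fun y hy => ?_
          simp only [u, v', hx, hy, if_true]
          ring
        · intro y _ hy
          simp [v', hy]
      · intro x _ hx
        simp [u, hx]
    rw [e, eu, ev, ← norm_sum_single_eq F v, ← hh, Complex.norm_real, Real.norm_of_nonneg
      (Finset.sum_nonneg fun _ _ => by positivity)] at h1
    have h0 : 0 ≤ ∑ x ∈ E, ‖T h x‖ ^ 2 := Finset.sum_nonneg fun _ _ => by positivity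
    set S := ∑ x ∈ E, ‖T h x‖ ^ 2
    have hs := Real.mul_self_sqrt h0
    have hs0 := Real.sqrt_nonneg S
    have h2 : √S ≤ K * ‖h‖ := by
      by_contra hcon
      push Not at hcon
      have : 0 < √S := lt_of_le_of_lt (by positivity) hcon
      nlinarith
    calc S = √S ^ 2 := (Real.sq_sqrt h0).symm
      _ ≤ (K * ‖h‖) ^ 2 := by gcongr
  refine T.opNorm_le_bound hK fun f => ?_
  have hs : Filter.Tendsto (fun F : Finset W => ∑ y ∈ F, lp.single 2 y (f y)) Filter.atTop
      (nhds f) := lp.hasSum_single (by norm_num) f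
  exact le_of_tendsto_of_tendsto' ((T.continuous.tendsto f).comp hs).norm
    (hs.norm.const_mul K) fun F => key F _

lemma opMat_sub (S T : lp (fun _ : W => ℂ) 2 →L[ℂ] lp (fun _ : W => ℂ) 2) (x y : W) :
    opMat (S - T) x y = opMat S x y - opMat T x y := rfl

end Operators

section Convolution

variable {W : Type*} [Group W] [DecidableEq W]

lemma IsConvOp.opMat_eq {f : W → ℂ} {T : lp (fun _ : W => ℂ) 2 →L[ℂ] lp (fun _ : W => ℂ) 2}
    (h : IsConvOp f T) (x y : W) : opMat T x y = f (x * y⁻¹) := by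
  rw [opMat, h, tsum_eq_single (x * y⁻¹)]
  · simp
  · intro z hz
    rw [lp.single_apply, Pi.single_eq_of_ne, mul_zero]
    rintro rfl
    exact hz (by simp)

/-- Elements of the reduced C*-algebra have right-invariant matrices. -/
lemma opMat_of_mem_redCStar {a : lp (fun _ : W => ℂ) 2 →L[ℂ] lp (fun _ : W => ℂ) 2}
    (ha : a ∈ redCStar W) (x y : W) : opMat a x y = a (lp.single 2 (1 : W) 1) (x * y⁻¹) := by
  have hcont : ∀ x y : W, Continuous
      fun T : lp (fun _ : W => ℂ) 2 →L[ℂ] lp (fun _ : W => ℂ) 2 => opMat T x y := by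
    intro x y
    have h1 : Continuous fun T : lp (fun _ : W => ℂ) 2 →L[ℂ] lp (fun _ : W => ℂ) 2 =>
        T (lp.single 2 y 1) := by fun_prop
    exact (lp.evalCLM ℂ (fun _ : W => ℂ) 2 x).continuous.comp h1
  have hle : redCStar W ≤
      { carrier := {T | ∀ x y : W, opMat T x y = opMat T (x * y⁻¹) 1}
        add_mem' := fun {S T} hS hT x y => by
          have e : ∀ x y, opMat (S + T) x y = opMat S x y + opMat T x y := fun _ _ => rfl
          rw [e, e, hS x y, hT x y]
        zero_mem' := fun x y => rfl
        smul_mem' := fun c T hT x y => by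
          have e : ∀ x y, opMat (c • T) x y = c * opMat T x y := fun _ _ => rfl
          rw [e, e, hT x y] } := by
    refine Submodule.topologicalClosure_minimal _ (Submodule.span_le.2 ?_) ?_
    · rintro T ⟨g, hT⟩ x y
      rw [hT.opMat_eq, hT.opMat_eq]
      simp
    · change IsClosed {T | ∀ x y : W, opMat T x y = opMat T (x * y⁻¹) 1}
      simp only [Set.ofPred_forall]
      exact isClosed_iInter fun x => isClosed_iInter fun y =>
        isClosed_eq (hcont _ _) (hcont _ _)
  exact hle ha x y

/-- The matrix of the translation by `g` defines a contractive form. -/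
lemma formBdd_translation (g : W) (c : ℂ) :
    FormBdd (fun x y : W => if x * y⁻¹ = g then c else 0) ‖c‖ := by
  intro F u v
  have e : ∀ y ∈ F, ∑ x ∈ F, (if x * y⁻¹ = g then c else 0) * u x * v y =
      c * ((if g * y ∈ F then u (g * y) else 0) * v y) := by
    intro y _
    have : ∀ x ∈ F, (if x * y⁻¹ = g then c else 0) * u x * v y =
        if g * y = x then c * (u x * v y) else 0 := by
      intro x _
      by_cases h : x * y⁻¹ = g
      · rw [if_pos h, if_pos (by rw [← h]; group)]
        ring
      · rw [if_neg h, if_neg (by rintro rfl; exact h (by group))]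
        ring
    rw [Finset.sum_congr rfl this, Finset.sum_ite_eq]
    split_ifs <;> ring
  rw [Finset.sum_comm, Finset.sum_congr rfl e, ← Finset.mul_sum, norm_mul]
  refine mul_le_mul_of_nonneg_left ?_ (norm_nonneg _)
  calc _ ≤ ∑ y ∈ F, ‖if g * y ∈ F then u (g * y) else 0‖ * ‖v y‖ :=
        norm_sum_le_of_le _ fun x _ => (norm_mul _ _).le
    _ ≤ _ := Real.sum_mul_le_sqrt_mul_sqrt _ _ _
    _ ≤ _ := by
        refine mul_le_mul_of_nonneg_right (Real.sqrt_le_sqrt ?_) (Real.sqrt_nonneg _)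
        have : ∀ y ∈ F, ‖if g * y ∈ F then u (g * y) else 0‖ ^ 2 =
            if g * y ∈ F then ‖u (g * y)‖ ^ 2 else 0 := fun y _ => by split_ifs <;> simp
        rw [Finset.sum_congr rfl this, ← Finset.sum_filter,
          ← Finset.sum_image (s := F.filter (g * · ∈ F)) (g := (g * ·)) (f := fun x => ‖u x‖ ^ 2)
            (fun a _ b _ h => mul_left_cancel h)]
        refine Finset.sum_le_sum_of_subset_of_nonneg ?_ fun _ _ _ => by positivity
        intro x hx
        obtain ⟨y, hy, rfl⟩ := Finset.mem_image.1 hx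
        exact (Finset.mem_filter.1 hy).2

/-- The analytic half of the argument: if the kernels `z ^ ℓ(x y⁻¹)` are Schur multipliers with
the stated norms and balls of `ℓ` are finite, then the set of the theorem is totally bounded. -/
lemma totallyBounded_of_isSchur (len : W → ℕ) (hball : ∀ N, {g | len g < N}.Finite) (c : ℕ)
    (hS : ∀ z : ℂ, ‖z‖ < 1 → IsSchur (fun x y : W => z ^ len (x * y⁻¹))
      ((‖1 - z ^ 2‖ / (1 - ‖z‖ ^ 2)) ^ c)) :
    TotallyBounded {a : lp (fun _ : W => ℂ) 2 →L[ℂ] lp (fun _ : W => ℂ) 2 |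
        a ∈ redCStar W ∧ ‖a‖ ≤ 1 ∧
        ∃ b : lp (fun _ : W => ℂ) 2 →L[ℂ] lp (fun _ : W => ℂ) 2,
          IsConvOp (fun g => (len g : ℂ) * a (lp.single 2 (1 : W) 1) g) b ∧ ‖b‖ ≤ 1} := by
  refine Metric.totallyBounded_of_finite_discretization fun ε hε => ?_
  obtain ⟨N, r, hr0, hr1, happ⟩ := exists_band_approx hS (show 0 < ε / 4 by positivity)
  set Bl : Finset W := (hball N).toFinset with hBl
  obtain ⟨δ, hδ, hδB⟩ : ∃ δ : ℝ, 0 < δ ∧ Bl.card * (2 * δ) < ε / 2 := by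
    refine ⟨ε / (8 * (Bl.card + 1)), by positivity, ?_⟩
    rw [show (Bl.card : ℝ) * (2 * (ε / (8 * (Bl.card + 1)))) =
      (Bl.card / (Bl.card + 1)) * (ε / 4) by field_simp; ring]
    have : (Bl.card : ℝ) / (Bl.card + 1) ≤ 1 := by
      rw [div_le_one (by positivity)]
      linarith
    nlinarith
  obtain ⟨t, -, htf, ht⟩ := finite_cover_balls_of_compact (isCompact_closedBall (0 : ℂ) 1) hδ
  have hpick : ∀ z : ℂ, ‖z‖ ≤ 1 → ∃ p : t, dist z p < δ := by
    intro z hz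
    obtain ⟨p, hp, hzp⟩ := Set.mem_iUnion₂.1 (ht (mem_closedBall_zero_iff.2 hz))
    exact ⟨⟨p, hp⟩, hzp⟩
  choose pick hpick using hpick
  have hcoef : ∀ (a : lp (fun _ : W => ℂ) 2 →L[ℂ] lp (fun _ : W => ℂ) 2), ‖a‖ ≤ 1 → ∀ g : W,
      ‖a (lp.single 2 (1 : W) 1) g‖ ≤ 1 := by
    intro a ha g
    have h1 : ‖(lp.single 2 (1 : W) (1 : ℂ) : lp (fun _ : W => ℂ) 2)‖ = 1 := by
      rw [lp.norm_single (by norm_num)]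
      simp
    refine (lp.norm_apply_le_norm (by norm_num) _ g).trans ((a.le_opNorm _).trans ?_)
    rw [h1, mul_one]
    exact ha
  have := htf.to_subtype
  have := Fintype.ofFinite t
  refine ⟨Bl → t, inferInstance,
    fun a g => pick (a.1 (lp.single 2 (1 : W) 1) g) (hcoef a.1 a.2.2.1 g), ?_⟩
  rintro ⟨a, haR, ha1, b, hb, hb1⟩ ⟨a', haR', ha1', b', hb', hb1'⟩ hF
  change dist a a' < ε
  have hclose : ∀ g ∈ Bl, ‖a (lp.single 2 (1 : W) 1) g - a' (lp.single 2 (1 : W) 1) g‖ ≤ 2 * δ := by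
    intro g hg
    have e := congrFun hF ⟨g, hg⟩
    have h1 := hpick _ (hcoef a ha1 g)
    have h2 := hpick _ (hcoef a' ha1' g)
    simp only at e
    rw [e] at h1
    rw [← dist_eq_norm]
    have := dist_triangle_right (a (lp.single 2 (1 : W) 1) g) (a' (lp.single 2 (1 : W) 1) g)
      (pick _ (hcoef a' ha1' g) : ℂ)
    linarith
  have happrox : ∀ a b : lp (fun _ : W => ℂ) 2 →L[ℂ] lp (fun _ : W => ℂ) 2, a ∈ redCStar W →
      ‖a‖ ≤ 1 → IsConvOp (fun g => (len g : ℂ) * a (lp.single 2 (1 : W) 1) g) b → ‖b‖ ≤ 1 →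
      FormBdd (fun x y => opMat a x y - if len (x * y⁻¹) < N then
        (r : ℂ) ^ len (x * y⁻¹) * opMat a x y else 0) (ε / 4) := by
    intro a b haR ha1 hb hb1
    refine happ _ ((formBdd_opMat a).mono ha1) ?_
    have e : (fun x y => (len (x * y⁻¹) : ℂ) * opMat a x y) = opMat b := by
      funext x y
      rw [hb.opMat_eq, opMat_of_mem_redCStar haR]
    rw [e]
    exact (formBdd_opMat b).mono hb1
  have h1 := (happrox a b haR ha1 hb hb1).sub (happrox a' b' haR' ha1' hb' hb1')
  have h2 := FormBdd.sum Bl (m := fun g x y => if x * y⁻¹ = g then (r : ℂ) ^ len g *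
    (a (lp.single 2 (1 : W) 1) g - a' (lp.single 2 (1 : W) 1) g) else 0)
    (K := fun g => 2 * δ) fun g hg => (formBdd_translation g _).mono (by
      rw [norm_mul, norm_pow, Complex.norm_real, Real.norm_of_nonneg hr0.le]
      calc _ ≤ 1 * (2 * δ) := mul_le_mul (pow_le_one₀ hr0.le hr1.le) (hclose g hg)
            (norm_nonneg _) zero_le_one
        _ = _ := one_mul _)
  have h3 : FormBdd (opMat (a - a')) (ε / 4 + ε / 4 + ∑ g ∈ Bl, 2 * δ) := by
    convert h1.add h2 using 3 with x y
    rw [opMat_sub, Finset.sum_ite_eq]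
    simp only [hBl, Set.Finite.mem_toFinset, Set.mem_ofPred_eq]
    rw [opMat_of_mem_redCStar haR x y, opMat_of_mem_redCStar haR' x y]
    split_ifs <;> ring
  rw [dist_eq_norm]
  refine (norm_le_of_formBdd _ (add_nonneg (by linarith)
    (Finset.sum_nonneg fun _ _ => by linarith)) h3).trans_lt ?_
  rw [Finset.sum_const, nsmul_eq_mul]
  linarith

end Convolution

/-! ### The length kernel of a Coxeter group -/

/-- Lattice vectors whose coordinates agree modulo `n` in a basis of the coefficient ring differ by
`n` times a lattice vector. -/
lemma divBy_of_repr_eq {B ι : Type*} {A : Subalgebra ℤ ℝ} [Finite ι] (b : Module.Basis ι ℤ A)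
    {u v : B → ℝ} (hu : ∀ i, u i ∈ A) (hv : ∀ i, v i ∈ A) {n : ℕ}
    (h : ∀ i j, ((b.repr ⟨u i, hu i⟩ j : ℤ) : ZMod n) = (b.repr ⟨v i, hv i⟩ j : ℤ)) :
    DivBy A n (v - u) := by
  have := Fintype.ofFinite ι
  have hd : ∀ i j, ∃ c : ℤ, b.repr ⟨v i, hv i⟩ j - b.repr ⟨u i, hu i⟩ j = n * c := fun i j =>
    (ZMod.intCast_eq_intCast_iff_dvd_sub _ _ n).1 (h i j)
  choose c hc using hd
  refine ⟨fun i => (∑ j, c i j • b j : A), fun i => Subtype.property _, ?_⟩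
  ext i
  have e : (⟨v i, hv i⟩ : A) - ⟨u i, hu i⟩ = (n : A) * ∑ j, c i j • b j := by
    rw [← b.sum_repr ⟨v i, hv i⟩, ← b.sum_repr ⟨u i, hu i⟩, ← Finset.sum_sub_distrib,
      Finset.mul_sum]
    refine Finset.sum_congr rfl fun j _ => ?_
    rw [← sub_smul, hc, mul_smul, natCast_zsmul, nsmul_eq_mul]
  have := congrArg (Subtype.val : A → ℝ) e
  simpa using this

/-- The kernels `z ^ ℓ(x y⁻¹)` are Schur multipliers, with norm bounded by a fixed power of
`|1 - z²| / (1 - |z|²)`. The exponent is the number of residue classes of lattice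
vectors modulo `6`. -/
lemma exists_isSchur_length {B : Type*} [Finite B] {W : Type*} [Group W] {M : CoxeterMatrix B}
    (cs : CoxeterSystem M W) : ∃ c : ℕ, ∀ z : ℂ, ‖z‖ < 1 →
      IsSchur (fun x y : W => z ^ cs.length (x * y⁻¹)) ((‖1 - z ^ 2‖ / (1 - ‖z‖ ^ 2)) ^ c) := by
  classical
  have := Fintype.ofFinite B
  obtain ⟨A, hfin, hA⟩ := exists_coeffRing M
  let b := Module.Free.chooseBasis ℤ A
  let N : W → Finset (PosRoot cs) := fun w => (finite_invSet cs w).toFinset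
  let col : PosRoot cs → B → Module.Free.ChooseBasisIndex ℤ A → ZMod 6 :=
    fun t i j => (b.repr ⟨t.1 i, t.2.1.mem hA i⟩ j : ℤ)
  have hN : ∀ w t, t ∈ N w ↔ t ∈ invSet cs w := fun w t => Set.Finite.mem_toFinset _
  have hlen : ∀ x y, cs.length (x * y⁻¹) = (symmDiff (N x) (N y)).card := by
    intro x y
    have h := encard_symmDiff_invSet cs x y
    have e : symmDiff (invSet cs x) (invSet cs y) = ↑(symmDiff (N x) (N y)) := by
      rw [Finset.coe_symmDiff, Set.Finite.coe_toFinset, Set.Finite.coe_toFinset]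
    rw [e, Set.encard_coe_eq_coe_finsetCard] at h
    exact_mod_cast h.symm
  refine ⟨Fintype.card (B → Module.Free.ChooseBasisIndex ℤ A → ZMod 6), fun z hz => ?_⟩
  simp only [hlen]
  refine isSchur_pow N col (fun s t h => ?_) (fun s t x y w hst h1 h2 h3 h4 h5 h6 => ?_) hz
  · simp only [hN] at h
    exact eq_of_forall_mem_invSet cs h
  · rw [hN] at h1 h2 h3 h4 h5 h6
    exact not_crossing hA (divBy_of_repr_eq b (s.2.1.mem hA) (t.2.1.mem hA)
      fun i j => congrFun (congrFun hst i) j) h1 h2 h3 h4 h5 h6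

lemma finite_length_lt {B : Type*} [Finite B] {W : Type*} [Group W] {M : CoxeterMatrix B}
    (cs : CoxeterSystem M W) (n : ℕ) : {w | cs.length w < n}.Finite := by
  refine ((List.finite_length_lt B n).image cs.wordProd).subset fun w hw => ?_
  obtain ⟨ω, hω, rfl⟩ := cs.exists_isReduced w
  exact ⟨ω, by rwa [Set.mem_ofPred_eq, ← hω], rfl⟩

/-- Main theorem: for a finitely generated Coxeter group `(W, S)` with word length `ℓ`,
the set `K = {λ(f) : ‖λ(f)‖ ≤ 1 and ‖λ(ℓ·f)‖ ≤ 1}` is relatively norm-compact in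
`C*_λ(W)`.  Here each `a ∈ C*_λ(W)` is identified with `λ(f)`, `f = a δ_e ∈ ℓ²(W)`. -/
theorem stmt_16 {B : Type*} [Finite B] {W : Type*} [Group W] [DecidableEq W]
    {M : CoxeterMatrix B} (cs : CoxeterSystem M W) :
    IsCompact (closure
      {a : lp (fun _ : W => ℂ) 2 →L[ℂ] lp (fun _ : W => ℂ) 2 |
        a ∈ redCStar W ∧ ‖a‖ ≤ 1 ∧
        ∃ b : lp (fun _ : W => ℂ) 2 →L[ℂ] lp (fun _ : W => ℂ) 2,
          IsConvOp (fun g => (cs.length g : ℂ) * a (lp.single 2 (1 : W) 1) g) b ∧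
          ‖b‖ ≤ 1}) := by
  obtain ⟨c, hc⟩ := exists_isSchur_length cs
  exact (totallyBounded_of_isSchur cs.length (finite_length_lt cs) c hc).closure.isCompact_of_isClosed
    isClosed_closure
end

section
/- Let (G,S) be a finitely generated Coxeter group. There exists a sequence of finitely supported functions ψ_m : G → ℂ such that for every λ(f) ∈ C*_λ(G): λ(ψ_m·f) → λ(f) in operator norm as m → ∞, and ‖λ(ψ_m·f)‖ ≤ 3‖λ(f)‖ for all m. -/
/-!
The multipliers are `ψ_m g = r_m ^ ℓ(g)` with `r_m → 1`, truncated to a finite set of lengths that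
contains `0, …, m`. Here `ℓ(g)` is the number of inversions of `g`, which is its Coxeter length.
Two bounds on Schur multipliers, that is, on entrywise multiplication of matrices `a x y` by a kernel
`K x y`, control them.

* The kernel `r ^ ℓ(x y⁻¹)` has multiplier norm at most `1`. Indeed `ℓ(x y⁻¹)` counts the walls
  that separate `x` from `y` (`card_symmDiff_invs`), so the kernel is a product over the walls of
  kernels `1` or `r` according to whether the wall separates, and each of these is a convex
  combination of `1` and of a block diagonal kernel (`Schur.geometric`).
* The indicator kernel of the sphere `ℓ(x y⁻¹) = j` has multiplier norm at most
  `(2 (j + 1)²) ^ n`, with `n` independent of `j` (`Schur.sphere`). This is the polynomial bound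
  that takes the place of the Haagerup inequality.

Since `∑ r ^ j (2 (j + 1)²) ^ n` converges, the discarded spheres can be made to contribute at most
`1`, so the truncated kernel has multiplier norm at most `2`, and a fortiori at most `3`.

The sphere bound comes from a finite coloring of the walls such that two walls of the same color
never cross (`exists_coloring`): the walls of one color then form a tree, the group embeds in a
product of `n` trees, and in a tree the indicator of a sphere is a sum of few block diagonal
kernels, indexed by the position of the last common ancestor. For the coloring, take the coordinates
of a positive root in the basis of simple roots; they lie in the ring of integers of a number
field, and the color is their class modulo `5`. Let `γ ≠ δ` be congruent positive roots and
`c = ⟨γ, δ⟩`, normalized by `⟨γ, γ⟩ = 2`. Then `5` divides `2 - c`, hence also `4 - c²`. If the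
product of the two reflections had finite order on `γ`, all conjugates of `c² - 2` would be at most
`2` in absolute value, so all conjugates of the algebraic integer `(4 - c²) / 5` would be at most
`4 / 5`, which forces `c² = 4` and then `γ = δ` (`eq_of_periodic`). So the rotation has infinite
order on `γ`, and if the walls crossed, with all four quadrants nonempty, infinitely many walls of
its orbit would separate two elements of the group (`nested`).

Roots and inversions are those of the geometric representation. The fact that a root is nonnegative
or nonpositive (`IsRoot.nonneg_or_nonpos`) is the usual induction on the length through dihedral
subgroups.

On `ℓ²(W)`, the matrix of an element `a` of the reduced C*-algebra depends only on `x y⁻¹`, so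
the Schur bound is a bound on the norm of `λ(ψ_m · f)`. Convergence is clear for translation
operators, and follows in general by density and uniform boundedness.
-/

set_option synthInstance.maxHeartbeats 1000000

open Filter

set_option linter.unusedSectionVars false

/-! ### The geometric representation -/

namespace CoxMult

section Rep

variable {B : Type*} [Fintype B] [DecidableEq B] (M : CoxeterMatrix B)

/-- The Cartan matrix entry `-2 cos (π / m_ij)`. For `m_ij = ∞`, encoded by `M i j = 0`, division
by zero makes it `-2 cos 0 = -2`, which is the usual convention. -/
noncomputable def cartan (i j : B) : ℝ := -(2 * Real.cos (Real.pi / (M i j : ℝ)))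

lemma cartan_self (i : B) : cartan M i i = 2 := by simp [cartan]

lemma cartan_symm (i j : B) : cartan M i j = cartan M j i := by
  rw [cartan, cartan, M.symmetric]

/-- The coroot of the simple root `Pi.single i 1`: the linear form `x ↦ ∑ j, cartan i j * x j`. -/
noncomputable def coroot (i : B) : Module.Dual ℝ (B → ℝ) :=
  ∑ j, cartan M i j • LinearMap.proj j

lemma coroot_apply (i : B) (x : B → ℝ) : coroot M i x = ∑ j, cartan M i j * x j := by
  simp [coroot, LinearMap.sum_apply]

lemma coroot_single (i j : B) : coroot M i (Pi.single j 1) = cartan M i j := by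
  simp [coroot_apply, Pi.single_apply]

lemma coroot_single_self (i : B) : coroot M i (Pi.single i 1) = 2 := by
  rw [coroot_single, cartan_self]

/-- The invariant symmetric bilinear form, normalized so that roots have square length `2`. -/
noncomputable def form (x y : B → ℝ) : ℝ := ∑ i, x i * coroot M i y

lemma form_eq (x y : B → ℝ) : form M x y = ∑ i, ∑ j, cartan M i j * (x i * y j) := by
  simp only [form, coroot_apply, Finset.mul_sum]
  exact Finset.sum_congr rfl fun i _ => Finset.sum_congr rfl fun j _ => by ring

lemma form_symm (x y : B → ℝ) : form M x y = form M y x := by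
  rw [form_eq, form_eq, Finset.sum_comm]
  refine Finset.sum_congr rfl fun i _ => Finset.sum_congr rfl fun j _ => ?_
  rw [cartan_symm]; ring

lemma form_add_right (x y z : B → ℝ) : form M x (y + z) = form M x y + form M x z := by
  simp [form, mul_add, Finset.sum_add_distrib]

lemma form_sub_right (x y z : B → ℝ) : form M x (y - z) = form M x y - form M x z := by
  simp [form, mul_sub, Finset.sum_sub_distrib]

lemma form_smul_right (a : ℝ) (x y : B → ℝ) : form M x (a • y) = a * form M x y := by
  simp only [form, map_smul, smul_eq_mul, Finset.mul_sum]
  exact Finset.sum_congr rfl fun j _ => by ring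

lemma form_sub_left (x y z : B → ℝ) : form M (x - y) z = form M x z - form M y z := by
  rw [form_symm, form_sub_right, form_symm M z x, form_symm M z y]

lemma form_smul_left (a : ℝ) (x y : B → ℝ) : form M (a • x) y = a * form M x y := by
  rw [form_symm, form_smul_right, form_symm]

lemma form_single_left (i : B) (y : B → ℝ) : form M (Pi.single i 1) y = coroot M i y := by
  simp [form, Pi.single_apply]

/-- The simple reflection `x ↦ x - ⟨α_i, x⟩ α_i`. -/
noncomputable def refl (i : B) : (B → ℝ) ≃ₗ[ℝ] (B → ℝ) :=
  Module.reflection (coroot_single_self M i)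

lemma refl_apply (i : B) (x : B → ℝ) : refl M i x = x - coroot M i x • Pi.single i 1 :=
  Module.reflection_apply _ _

lemma refl_refl (i : B) (x : B → ℝ) : refl M i (refl M i x) = x :=
  Module.involutive_reflection _ x

lemma form_refl (i : B) (x y : B → ℝ) : form M (refl M i x) (refl M i y) = form M x y := by
  simp only [refl_apply, form_sub_left, form_sub_right, form_smul_left, form_smul_right,
    form_single_left, coroot_single_self]
  rw [form_symm M x (Pi.single i 1), form_single_left]
  ring

/-- The rotation `refl i * refl j` through the angle `2π / m_ij` has order dividing `m_ij`; the
Chebyshev values in Mathlib's formula for its powers vanish. The angle `π` is separate because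
its sine is zero. -/
lemma refl_liftable : M.IsLiftable (refl M) := by
  intro i j
  rcases eq_or_ne i j with rfl | hij
  · rw [M.diagonal, pow_one]
    ext1 x
    exact refl_refl M i x
  rcases Nat.eq_zero_or_pos (M i j) with h0 | hpos
  · rw [h0, pow_zero]
  have h1 : M i j ≠ 1 := M.off_diagonal i j hij
  rcases eq_or_ne (M i j) 2 with h2 | h2
  · have hc : cartan M i j = 0 := by simp [cartan, h2]
    have hc' : cartan M j i = 0 := by rw [cartan_symm, hc]
    rw [h2, pow_two]
    ext1 x
    simp only [LinearEquiv.mul_apply, refl_apply, map_sub, map_smul, coroot_single, hc, hc',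
      cartan_self]
    ext b
    simp
    ring
  have h3 : 3 ≤ M i j := by omega
  set m := M i j with hm
  set θ : ℝ := 2 * Real.pi / m with hθ
  have hmR : (3 : ℝ) ≤ m := by exact_mod_cast h3
  have hmθ : m * θ = 2 * Real.pi := by rw [hθ]; field_simp
  have hθ0 : 0 < θ := by rw [hθ]; positivity
  have hθπ : θ < Real.pi := by
    have := Real.pi_pos
    nlinarith
  have hsin : Real.sin θ ≠ 0 := (Real.sin_pos_of_pos_of_lt_pi hθ0 hθπ).ne'
  have ht : 2 * Real.cos θ = coroot M i (Pi.single j 1) * coroot M j (Pi.single i 1) - 2 := by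
    rw [coroot_single, coroot_single, cartan_symm M j i, cartan]
    have : θ = 2 * (Real.pi / m) := by rw [hθ]; ring
    rw [this, Real.cos_two_mul, ← hm]
    ring
  have key : ∀ a b : ℤ, Real.sin ((a + 1) * θ) + Real.sin ((b + 1) * θ) = 0 →
      ((Polynomial.Chebyshev.S ℝ a).eval (2 * Real.cos θ) +
        (Polynomial.Chebyshev.S ℝ b).eval (2 * Real.cos θ)) = 0 := by
    intro a b h
    have ha := Polynomial.Chebyshev.S_two_mul_real_cos θ a
    have hb := Polynomial.Chebyshev.S_two_mul_real_cos θ b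
    rw [← ha, ← hb, ← add_mul] at h
    exact (mul_eq_zero.mp h).resolve_right hsin
  have key1 : ∀ a : ℤ, Real.sin ((a + 1) * θ) = 0 →
      (Polynomial.Chebyshev.S ℝ a).eval (2 * Real.cos θ) = 0 := by
    intro a h
    have ha := key a a (by rw [h, add_zero])
    linarith
  have hA : (Polynomial.Chebyshev.S ℝ (((m : ℤ) - 2) / 2)).eval (2 * Real.cos θ) *
      ((Polynomial.Chebyshev.S ℝ (((m : ℤ) - 1) / 2)).eval (2 * Real.cos θ) +
        (Polynomial.Chebyshev.S ℝ (((m : ℤ) - 3) / 2)).eval (2 * Real.cos θ)) = 0 ∧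
      (Polynomial.Chebyshev.S ℝ (((m : ℤ) - 1) / 2)).eval (2 * Real.cos θ) *
      ((Polynomial.Chebyshev.S ℝ ((m : ℤ) / 2)).eval (2 * Real.cos θ) +
        (Polynomial.Chebyshev.S ℝ (((m : ℤ) - 2) / 2)).eval (2 * Real.cos θ)) = 0 := by
    rcases Nat.even_or_odd' m with ⟨p, hp | hp⟩
    · have e1 : ((m : ℤ) - 2) / 2 = p - 1 := by omega
      have e2 : ((m : ℤ) - 1) / 2 = p - 1 := by omega
      have hpθ : ((p : ℝ)) * θ = Real.pi := by
        have : (m : ℝ) = 2 * p := by exact_mod_cast hp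
        rw [this] at hmθ; linarith
      have hz := key1 (p - 1) (by push_cast; rw [sub_add_cancel, hpθ, Real.sin_pi])
      rw [e1, e2, hz]
      simp
    · have e1 : ((m : ℤ) - 2) / 2 = p - 1 := by omega
      have e2 : ((m : ℤ) - 1) / 2 = p := by omega
      have e3 : ((m : ℤ) - 3) / 2 = p - 1 := by omega
      have e4 : (m : ℤ) / 2 = p := by omega
      have hz := key p (p - 1) (by
        have : (m : ℝ) = 2 * p + 1 := by exact_mod_cast hp
        rw [this] at hmθ
        push_cast
        rw [sub_add_cancel, show ((p : ℝ) + 1) * θ = 2 * Real.pi - p * θ by linarith,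
          Real.sin_two_pi_sub]
        ring)
      rw [e1, e2, e3, e4, hz]
      simp
  ext1 z
  have := Module.reflection_mul_reflection_pow_apply (coroot_single_self M i)
    (coroot_single_self M j) m z (2 * Real.cos θ) ht
  rw [hA.1, hA.2, zero_smul, zero_smul, add_zero, add_zero] at this
  exact this

variable {M} {W : Type*} [Group W] (cs : CoxeterSystem M W)

/-- The geometric representation of a Coxeter group. -/
noncomputable def rho : W →* ((B → ℝ) ≃ₗ[ℝ] (B → ℝ)) := cs.lift ⟨refl M, refl_liftable M⟩

lemma rho_simple (i : B) : rho cs (cs.simple i) = refl M i :=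
  cs.lift_apply_simple (refl_liftable M) i

lemma rho_mul_apply (v w : W) (x : B → ℝ) : rho cs (v * w) x = rho cs v (rho cs w x) := by
  rw [map_mul, LinearEquiv.mul_apply]

lemma rho_one_apply (x : B → ℝ) : rho cs 1 x = x := by
  rw [map_one]; rfl

lemma rho_inv_apply (w : W) (x : B → ℝ) : rho cs w⁻¹ (rho cs w x) = x := by
  rw [← rho_mul_apply, inv_mul_cancel, rho_one_apply]

lemma rho_apply_inv (w : W) (x : B → ℝ) : rho cs w (rho cs w⁻¹ x) = x := by
  rw [← rho_mul_apply, mul_inv_cancel, rho_one_apply]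

lemma form_rho (w : W) (x y : B → ℝ) : form M (rho cs w x) (rho cs w y) = form M x y := by
  induction w using cs.simple_induction_left with
  | one => simp only [rho_one_apply]
  | mul_simple_left w i ih => rw [rho_mul_apply, rho_mul_apply, rho_simple, form_refl, ih]

/-! ### Positive and negative roots -/

/-- The coefficients `sin (k π / m) / sin (π / m)` (or `k` if `m = ∞`) of the roots of a dihedral
group, given by their recurrence. -/
noncomputable def dih (c : ℝ) : ℕ → ℝ
  | 0 => 0
  | 1 => 1
  | (k + 2) => c * dih c (k + 1) - dih c k

lemma dih_two (k : ℕ) : dih 2 k = k := by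
  have : ∀ k : ℕ, dih 2 k = k ∧ dih 2 (k + 1) = k + 1 := by
    intro k
    induction k with
    | zero => simp [dih]
    | succ k ih =>
      refine ⟨by rw [ih.2]; push_cast; ring, ?_⟩
      rw [dih, ih.1, ih.2]
      push_cast; ring
  exact (this k).1

lemma dih_cos (θ : ℝ) (k : ℕ) : dih (2 * Real.cos θ) k * Real.sin θ = Real.sin (k * θ) := by
  have : ∀ k : ℕ, dih (2 * Real.cos θ) k * Real.sin θ = Real.sin (k * θ) ∧
      dih (2 * Real.cos θ) (k + 1) * Real.sin θ = Real.sin ((k + 1 : ℝ) * θ) := by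
    intro k
    induction k with
    | zero => simp [dih]
    | succ k ih =>
      refine ⟨by rw [ih.2]; push_cast; rfl, ?_⟩
      rw [dih, sub_mul, ih.1, mul_assoc, ih.2]
      push_cast
      rw [show (k : ℝ) * θ = (k + 1 : ℝ) * θ - θ by ring,
        show ((k : ℝ) + 1 + 1) * θ = (k + 1 : ℝ) * θ + θ by ring, Real.sin_sub, Real.sin_add]
      ring
  exact (this k).1

lemma dih_nonneg {i j : B} (hij : i ≠ j) {k : ℕ} (hk : M i j = 0 ∨ k ≤ M i j) :
    0 ≤ dih (-cartan M i j) k := by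
  rw [cartan, neg_neg]
  rcases Nat.eq_zero_or_pos (M i j) with h0 | hpos
  · simp [h0, dih_two]
  · have h1 : M i j ≠ 1 := M.off_diagonal i j hij
    have hk : k ≤ M i j := by omega
    have h2 : (2 : ℝ) ≤ M i j := by exact_mod_cast (by omega : 2 ≤ M i j)
    have hkR : (k : ℝ) ≤ M i j := by exact_mod_cast hk
    have hpi := Real.pi_pos
    have hs : 0 < Real.sin (Real.pi / M i j) := by
      apply Real.sin_pos_of_pos_of_lt_pi (by positivity)
      rw [div_lt_iff₀ (by linarith)]
      nlinarith
    have hd := dih_cos (Real.pi / M i j) k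
    have : 0 ≤ Real.sin (k * (Real.pi / M i j)) := by
      apply Real.sin_nonneg_of_nonneg_of_le_pi (by positivity)
      rw [← mul_div_assoc, div_le_iff₀ (by linarith)]
      nlinarith
    rw [← hd] at this
    exact nonneg_of_mul_nonneg_left this hs

lemma rho_alternating (i j : B) (k : ℕ) :
    rho cs (cs.wordProd (CoxeterSystem.alternatingWord i j k)) (Pi.single i 1) =
      if Even k then dih (-cartan M i j) (k + 1) • Pi.single i (1 : ℝ) +
        dih (-cartan M i j) k • Pi.single j (1 : ℝ)
      else dih (-cartan M i j) k • Pi.single i (1 : ℝ) +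
        dih (-cartan M i j) (k + 1) • Pi.single j (1 : ℝ) := by
  induction k with
  | zero => simp [CoxeterSystem.alternatingWord, dih]
  | succ k ih =>
    rw [CoxeterSystem.alternatingWord_succ', cs.wordProd_cons, rho_mul_apply, ih, rho_simple]
    by_cases hk : Even k
    · have hk' : ¬ Even (k + 1) := by simpa [Nat.even_add_one] using hk
      simp only [hk, hk', if_true, if_false]
      rw [refl_apply, map_add, map_smul, map_smul, coroot_single, coroot_single_self,
        cartan_symm M j i, dih]
      simp only [smul_eq_mul]
      module
    · have hk' : Even (k + 1) := by simpa [Nat.even_add_one] using hk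
      simp only [hk, hk', if_true, if_false]
      rw [refl_apply, map_add, map_smul, map_smul, coroot_single, cartan_self, coroot_single, dih]
      simp only [smul_eq_mul]
      module

/-- If `ℓ (w s_i) > ℓ w` then `w α_i` is a nonnegative combination of simple roots. Writing
`w = v u` with `u` in the dihedral group `⟨s_i, s_j⟩`, `j` a descent of `w`, and `v` as short as
possible reduces the claim to `v` and to the explicit dihedral coefficients. -/
theorem rho_simple_nonneg (w : W) (i : B) (h : cs.length w < cs.length (w * cs.simple i)) (b : B) :
    0 ≤ rho cs w (Pi.single i 1) b := by
  induction hn : cs.length w using Nat.strong_induction_on generalizing w i with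
  | _ n ih =>
  subst hn
  by_cases hw : w = 1
  · subst hw
    rw [rho_one_apply, Pi.single_apply]
    split_ifs <;> norm_num
  obtain ⟨j, hj⟩ := cs.exists_rightDescent_of_ne_one hw
  have hij : i ≠ j := by
    rintro rfl
    unfold CoxeterSystem.IsRightDescent at hj
    omega
  set D : ℕ → W := fun k => cs.wordProd (CoxeterSystem.alternatingWord i j k) with hD
  have hDs : ∀ k, D (k + 1) = cs.simple (if Even k then j else i) * D k := fun k => by
    simp only [hD, CoxeterSystem.alternatingWord_succ', cs.wordProd_cons]
  have hstep : ∀ k, w * (D (k + 1))⁻¹ = w * (D k)⁻¹ * cs.simple (if Even k then j else i) :=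
    fun k => by rw [hDs, mul_inv_rev, cs.inv_simple, mul_assoc]
  have hlow : ∀ k, cs.length w ≤ cs.length (w * (D k)⁻¹) + k := fun k => by
    have h1 := cs.length_mul_le (w * (D k)⁻¹) (D k)
    have h2 := cs.length_wordProd_le (CoxeterSystem.alternatingWord i j k)
    rw [inv_mul_cancel_right] at h1
    rw [CoxeterSystem.length_alternatingWord] at h2
    change cs.length (D k) ≤ k at h2
    omega
  let P : ℕ → Prop := fun k => cs.length (w * (D k)⁻¹) + k = cs.length w
  classical
  have hP1 : P 1 := by
    have : D 1 = cs.simple j := by rw [hDs 0]; simp [hD, CoxeterSystem.alternatingWord]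
    simp only [P, this, cs.inv_simple]
    exact cs.isRightDescent_iff.mp hj
  have hlen1 : 1 ≤ cs.length w := by simp only [P] at hP1; omega
  obtain ⟨k, hk1, hPk, hmax⟩ : ∃ k, 1 ≤ k ∧ P k ∧ ¬ P (k + 1) := by
    refine ⟨Nat.findGreatest P (cs.length w), Nat.le_findGreatest hlen1 hP1,
      Nat.findGreatest_spec hlen1 hP1, fun hbad => ?_⟩
    have hb : cs.length (w * (D (Nat.findGreatest P (cs.length w) + 1))⁻¹) +
      (Nat.findGreatest P (cs.length w) + 1) = cs.length w := hbad
    have := Nat.le_findGreatest (n := cs.length w) (by omega) hbad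
    omega
  obtain ⟨k, rfl⟩ : ∃ k', k = k' + 1 := ⟨k - 1, by omega⟩
  set v := w * (D (k + 1))⁻¹ with hv
  have hPk' : cs.length v + (k + 1) = cs.length w := hPk
  have hup1 : cs.length v < cs.length (v * cs.simple (if Even (k + 1) then j else i)) := by
    have h1 := hlow (k + 2)
    have h2 : ¬ (cs.length (w * (D (k + 2))⁻¹) + (k + 2) = cs.length w) := hmax
    have h3 : w * (D (k + 2))⁻¹ = v * cs.simple (if Even (k + 1) then j else i) := hstep (k + 1)
    rw [h3] at h1 h2
    have := cs.length_mul_simple v (if Even (k + 1) then j else i)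
    omega
  have hup2 : cs.length v < cs.length (v * cs.simple (if Even k then j else i)) := by
    rw [hv, hstep k, cs.simple_mul_simple_cancel_right, ← hstep k]
    have := hlow k
    omega
  have hups : cs.length v < cs.length (v * cs.simple i) ∧
      cs.length v < cs.length (v * cs.simple j) := by
    by_cases hk : Even k
    · have hk' : ¬ Even (k + 1) := by simpa [Nat.even_add_one] using hk
      rw [if_neg hk'] at hup1
      rw [if_pos hk] at hup2
      exact ⟨hup1, hup2⟩
    · have hk' : Even (k + 1) := by simpa [Nat.even_add_one] using hk
      rw [if_pos hk'] at hup1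
      rw [if_neg hk] at hup2
      exact ⟨hup2, hup1⟩
  have hkM : M i j = 0 ∨ k + 2 ≤ M i j := by
    by_contra! hcon
    have hred := cs.not_isReduced_alternatingWord j i (m := k + 2) (by rw [M.symmetric]; exact hcon.1)
      (by rw [M.symmetric]; exact hcon.2)
    unfold CoxeterSystem.IsReduced at hred
    have h1 := cs.length_wordProd_le (CoxeterSystem.alternatingWord j i (k + 2))
    rw [CoxeterSystem.length_alternatingWord] at h1 hred
    have h2 := cs.length_mul_le v (cs.wordProd (CoxeterSystem.alternatingWord j i (k + 2)))
    rw [CoxeterSystem.alternatingWord_succ, cs.wordProd_concat, ← mul_assoc] at h2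
    change cs.length (v * D (k + 1) * cs.simple i) ≤ cs.length v +
      cs.length (D (k + 1) * cs.simple i) at h2
    rw [CoxeterSystem.alternatingWord_succ, cs.wordProd_concat] at h1 hred
    change cs.length (D (k + 1) * cs.simple i) ≤ _ at h1
    change ¬ cs.length (D (k + 1) * cs.simple i) = _ at hred
    rw [hv, inv_mul_cancel_right, ← hv] at h2
    omega
  have hwv : rho cs w (Pi.single i 1) = rho cs v (rho cs (D (k + 1)) (Pi.single i 1)) := by
    rw [← rho_mul_apply, hv, inv_mul_cancel_right]
  have n1 := ih (cs.length v) (by omega) v i hups.1 rfl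
  have n2 := ih (cs.length v) (by omega) v j hups.2 rfl
  have d1 := dih_nonneg (M := M) hij (k := k + 1) (by omega)
  have d2 := dih_nonneg (M := M) hij (k := k + 2) (by omega)
  rw [hwv, hD]
  dsimp only
  rw [rho_alternating]
  split_ifs <;> simp only [map_add, map_smul, Pi.add_apply, Pi.smul_apply, smul_eq_mul]
  · exact add_nonneg (mul_nonneg d2 n1) (mul_nonneg d1 n2)
  · exact add_nonneg (mul_nonneg d1 n1) (mul_nonneg d2 n2)

/-! ### Roots and inversions -/

/-- A root: an element of the orbit of a simple root. -/
def IsRoot (x : B → ℝ) : Prop := ∃ w i, x = rho cs w (Pi.single i 1)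

variable {cs}

lemma IsRoot.rho_apply {x : B → ℝ} (hx : IsRoot cs x) (w : W) : IsRoot cs (rho cs w x) := by
  obtain ⟨v, i, rfl⟩ := hx
  exact ⟨w * v, i, by rw [rho_mul_apply]⟩

lemma IsRoot.neg {x : B → ℝ} (hx : IsRoot cs x) : IsRoot cs (-x) := by
  obtain ⟨v, i, rfl⟩ := hx
  refine ⟨v * cs.simple i, i, ?_⟩
  rw [rho_mul_apply, rho_simple, refl_apply, coroot_single_self, ← map_neg]
  congr 1
  module

lemma isRoot_simple (i : B) : IsRoot cs (Pi.single i 1) := ⟨1, i, by rw [rho_one_apply]⟩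

lemma IsRoot.form_self {x : B → ℝ} (hx : IsRoot cs x) : form M x x = 2 := by
  obtain ⟨v, i, rfl⟩ := hx
  rw [form_rho, form_single_left, coroot_single_self]

lemma IsRoot.nonneg_or_nonpos {x : B → ℝ} (hx : IsRoot cs x) :
    (∀ b, 0 ≤ x b) ∨ (∀ b, x b ≤ 0) := by
  obtain ⟨v, i, rfl⟩ := hx
  rcases lt_or_gt_of_ne (cs.length_mul_simple_ne v i) with h | h
  · right
    intro b
    have := rho_simple_nonneg cs (v * cs.simple i) i
      (by rwa [cs.simple_mul_simple_cancel_right]) b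
    rw [rho_mul_apply, rho_simple, refl_apply, coroot_single_self,
      show (Pi.single i (1 : ℝ) : B → ℝ) - (2 : ℝ) • Pi.single i 1 = -Pi.single i 1 by module,
      map_neg, Pi.neg_apply] at this
    linarith
  · exact Or.inl (rho_simple_nonneg cs v i h)

/-- The height of a vector, whose sign on a root is the sign of the root. -/
noncomputable def ht : (B → ℝ) →ₗ[ℝ] ℝ := ∑ b, LinearMap.proj b

lemma ht_apply (x : B → ℝ) : ht x = ∑ b, x b := by simp [ht, LinearMap.sum_apply]

lemma IsRoot.ne_zero {x : B → ℝ} (hx : IsRoot cs x) : x ≠ 0 := by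
  rintro rfl
  have := hx.form_self
  simp [form] at this

lemma IsRoot.ht_ne_zero {x : B → ℝ} (hx : IsRoot cs x) : ht x ≠ 0 := by
  intro h0
  rw [ht_apply] at h0
  apply hx.ne_zero
  ext b
  rcases hx.nonneg_or_nonpos with h | h
  · exact (Finset.sum_eq_zero_iff_of_nonneg fun b _ => h b).mp h0 b (Finset.mem_univ b)
  · exact (Finset.sum_eq_zero_iff_of_nonpos fun b _ => h b).mp h0 b (Finset.mem_univ b)

lemma IsRoot.nonneg {x : B → ℝ} (hx : IsRoot cs x) (h : 0 < ht x) (b : B) : 0 ≤ x b := by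
  rcases hx.nonneg_or_nonpos with h' | h'
  · exact h' b
  · rw [ht_apply] at h
    exact absurd (Finset.sum_nonpos fun b _ => h' b) (not_le.mpr h)

lemma IsRoot.nonpos {x : B → ℝ} (hx : IsRoot cs x) (h : ht x < 0) (b : B) : x b ≤ 0 := by
  have := hx.neg.nonneg (by rw [map_neg]; linarith) b
  rw [Pi.neg_apply] at this
  linarith

/-- A simple reflection makes only its own simple root negative. -/
lemma IsRoot.eq_simple {x : B → ℝ} (hx : IsRoot cs x) (h : 0 < ht x) {i : B}
    (hi : ht (refl M i x) < 0) : x = Pi.single i 1 := by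
  have hr : IsRoot cs (refl M i x) := by rw [← rho_simple cs]; exact hx.rho_apply _
  have hb : ∀ b, b ≠ i → x b = 0 := fun b hb => by
    have h1 := hx.nonneg h b
    have h2 := hr.nonpos hi b
    rw [refl_apply, Pi.sub_apply, Pi.smul_apply, Pi.single_eq_of_ne hb, smul_zero, sub_zero] at h2
    linarith
  have hx' : x = x i • Pi.single i 1 := by
    ext b
    rcases eq_or_ne b i with rfl | hbi
    · simp
    · simp [hb b hbi, hbi]
  have hf := hx.form_self
  rw [hx', form_smul_left, form_smul_right, form_single_left, coroot_single_self] at hf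
  have h1 := hx.nonneg h i
  have : x i = 1 := by nlinarith
  rw [hx', this, one_smul]

variable (cs)

/-- The positive roots made negative by `w`, i.e. the walls separating `1` from `w⁻¹`. -/
def invSet (w : W) : Set (B → ℝ) := {x | IsRoot cs x ∧ 0 < ht x ∧ ht (rho cs w x) < 0}

lemma invSet_finite (w : W) : (invSet cs w).Finite := by
  induction w using cs.simple_induction_left with
  | one =>
    convert Set.finite_empty
    ext x
    simp only [invSet, Set.mem_ofPred_eq, rho_one_apply, Set.mem_empty_iff_false, iff_false]
    rintro ⟨-, h1, h2⟩
    linarith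
  | mul_simple_left w i ih =>
    refine (ih.insert (rho cs w⁻¹ (Pi.single i 1))).subset ?_
    rintro x ⟨h1, h2, h3⟩
    by_cases h4 : ht (rho cs w x) < 0
    · exact Or.inr ⟨h1, h2, h4⟩
    · left
      have hr := h1.rho_apply w
      have h5 : 0 < ht (rho cs w x) := lt_of_le_of_ne (not_lt.mp h4) hr.ht_ne_zero.symm
      rw [rho_mul_apply, rho_simple] at h3
      rw [← hr.eq_simple h5 h3, rho_inv_apply]

lemma sepSet_finite (x y : W) :
    {z | IsRoot cs z ∧ 0 < ht (rho cs x z) ∧ ht (rho cs y z) < 0}.Finite := by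
  refine ((invSet_finite cs (y * x⁻¹)).image (rho cs x⁻¹)).subset ?_
  rintro z ⟨h1, h2, h3⟩
  refine ⟨rho cs x z, ⟨h1.rho_apply x, h2, ?_⟩, rho_inv_apply cs x z⟩
  rwa [rho_mul_apply, rho_inv_apply]

/-- The finite set `invSet` as a `Finset`. -/
noncomputable def invs (w : W) : Finset (B → ℝ) := (invSet_finite cs w).toFinset

lemma mem_invs {w : W} {x : B → ℝ} :
    x ∈ invs cs w ↔ IsRoot cs x ∧ 0 < ht x ∧ ht (rho cs w x) < 0 := by
  simp [invs, invSet]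

lemma invs_one : invs cs 1 = ∅ := by
  ext x
  rw [mem_invs, rho_one_apply]
  simp only [Finset.notMem_empty, iff_false]
  rintro ⟨-, h1, h2⟩
  linarith

/-- The positive one among `x` and `-x`. -/
noncomputable def absRoot (x : B → ℝ) : B → ℝ := if 0 < ht x then x else -x

lemma absRoot_of_pos {x : B → ℝ} (h : 0 < ht x) : absRoot x = x := if_pos h

lemma absRoot_of_neg {x : B → ℝ} (h : ht x < 0) : absRoot x = -x := if_neg (by linarith)

open Classical in
/-- The number of walls that separate `x` from `y` is invariant under right translation, as `W`
permutes the walls. -/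
lemma card_symmDiff_invs (x y : W) :
    (symmDiff (invs cs x) (invs cs y)).card = (invs cs (x * y⁻¹)).card := by
  have key : ∀ z, z ∈ symmDiff (invs cs x) (invs cs y) ↔ IsRoot cs z ∧ 0 < ht z ∧
      ((ht (rho cs x z) < 0 ∧ 0 < ht (rho cs y z)) ∨
        (0 < ht (rho cs x z) ∧ ht (rho cs y z) < 0)) := by
    intro z
    rw [Finset.mem_symmDiff, mem_invs, mem_invs]
    by_cases hz : IsRoot cs z
    · have h1 := (hz.rho_apply x).ht_ne_zero
      have h2 := (hz.rho_apply y).ht_ne_zero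
      have h3 : 0 < ht (rho cs x z) ↔ ¬ ht (rho cs x z) < 0 :=
        ⟨fun h => by linarith, fun h => lt_of_le_of_ne (not_lt.mp h) h1.symm⟩
      have h4 : 0 < ht (rho cs y z) ↔ ¬ ht (rho cs y z) < 0 :=
        ⟨fun h => by linarith, fun h => lt_of_le_of_ne (not_lt.mp h) h2.symm⟩
      rw [h3, h4]
      tauto
    · tauto
  refine Finset.card_nbij' (fun z => absRoot (rho cs y z)) (fun z => absRoot (rho cs y⁻¹ z))
    ?_ ?_ ?_ ?_
  · intro z hz
    rw [Finset.mem_coe, key] at hz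
    rw [Finset.mem_coe, mem_invs]
    obtain ⟨h1, h2, ⟨h3, h4⟩ | ⟨h3, h4⟩⟩ := hz
    · dsimp only
      rw [absRoot_of_pos h4, rho_mul_apply, rho_inv_apply]
      exact ⟨h1.rho_apply y, h4, h3⟩
    · dsimp only
      rw [absRoot_of_neg h4, rho_mul_apply, map_neg (rho cs y⁻¹), rho_inv_apply, map_neg, map_neg,
        map_neg]
      exact ⟨(h1.rho_apply y).neg, by linarith, by linarith⟩
  · intro z hz
    rw [Finset.mem_coe, mem_invs] at hz
    rw [Finset.mem_coe, key]
    obtain ⟨h1, h2, h3⟩ := hz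
    rw [rho_mul_apply] at h3
    dsimp only
    rcases lt_or_gt_of_ne (h1.rho_apply y⁻¹).ht_ne_zero with h | h
    · rw [absRoot_of_neg h, map_neg (rho cs x), map_neg (rho cs y), rho_apply_inv, map_neg,
        map_neg, map_neg]
      exact ⟨(h1.rho_apply y⁻¹).neg, by linarith, Or.inr ⟨by linarith, by linarith⟩⟩
    · rw [absRoot_of_pos h, rho_apply_inv]
      exact ⟨h1.rho_apply y⁻¹, h, Or.inl ⟨h3, h2⟩⟩
  · intro z hz
    rw [Finset.mem_coe, key] at hz
    obtain ⟨h1, h2, ⟨h3, h4⟩ | ⟨h3, h4⟩⟩ := hz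
    · dsimp only
      rw [absRoot_of_pos h4, rho_inv_apply, absRoot_of_pos h2]
    · dsimp only
      rw [absRoot_of_neg h4, map_neg (rho cs y⁻¹), rho_inv_apply, absRoot_of_neg, neg_neg]
      rw [map_neg]; linarith
  · intro z hz
    rw [Finset.mem_coe, mem_invs] at hz
    obtain ⟨h1, h2, h3⟩ := hz
    dsimp only
    rcases lt_or_gt_of_ne (h1.rho_apply y⁻¹).ht_ne_zero with h | h
    · rw [absRoot_of_neg h, map_neg (rho cs y), rho_apply_inv, absRoot_of_neg, neg_neg]
      rw [map_neg]; linarith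
    · rw [absRoot_of_pos h, rho_apply_inv, absRoot_of_pos h2]

lemma card_invs_descent {w : W} {i : B} (h : cs.length (w * cs.simple i) < cs.length w) :
    (invs cs (w * cs.simple i)).card + 1 ≤ (invs cs w).card := by
  classical
  have hpos : 0 < ht (rho cs (w * cs.simple i) (Pi.single i 1)) := by
    have hr := (isRoot_simple (cs := cs) i).rho_apply (w * cs.simple i)
    refine lt_of_le_of_ne ?_ hr.ht_ne_zero.symm
    rw [ht_apply]
    exact Finset.sum_nonneg fun b _ => rho_simple_nonneg cs _ i
      (by rwa [cs.simple_mul_simple_cancel_right]) b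
  have hsi : ht (Pi.single i 1 : B → ℝ) = 1 := by simp [ht_apply]
  have hself : refl M i (Pi.single i 1) = -Pi.single i 1 := by
    rw [refl_apply, coroot_single_self]; module
  have hmem : Pi.single i 1 ∈ invs cs w := by
    rw [mem_invs, hsi]
    refine ⟨isRoot_simple i, one_pos, ?_⟩
    rw [rho_mul_apply, rho_simple, hself, map_neg, map_neg] at hpos
    linarith
  have hsub : (invs cs (w * cs.simple i)).image (refl M i) ⊆ (invs cs w).erase (Pi.single i 1) := by
    intro z hz
    obtain ⟨x, hx, rfl⟩ := Finset.mem_image.mp hz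
    rw [mem_invs] at hx
    obtain ⟨h1, h2, h3⟩ := hx
    have hr : IsRoot cs (refl M i x) := by rw [← rho_simple cs]; exact h1.rho_apply _
    have hpos' : 0 < ht (refl M i x) := by
      by_contra hcon
      have := h1.eq_simple h2 (lt_of_le_of_ne (not_lt.mp hcon) hr.ht_ne_zero)
      rw [this] at h3
      linarith
    rw [Finset.mem_erase, mem_invs]
    refine ⟨fun he => ?_, hr, hpos', ?_⟩
    · have : x = -Pi.single i 1 := by rw [← refl_refl M i x, he, hself]
      rw [this, map_neg, hsi] at h2
      linarith
    · rwa [rho_mul_apply, rho_simple] at h3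
  have h1 := Finset.card_le_card hsub
  rw [Finset.card_image_of_injective _ (refl M i).injective, Finset.card_erase_of_mem hmem] at h1
  have h2 : 0 < (invs cs w).card := Finset.card_pos.mpr ⟨_, hmem⟩
  omega

lemma length_le_card_invs (w : W) : cs.length w ≤ (invs cs w).card := by
  induction hn : cs.length w using Nat.strong_induction_on generalizing w with
  | _ n ih =>
  subst hn
  by_cases hw : w = 1
  · rw [hw, cs.length_one]; exact Nat.zero_le _
  obtain ⟨i, hi⟩ := cs.exists_rightDescent_of_ne_one hw
  have h1 := card_invs_descent cs hi
  have h2 := ih _ hi (w * cs.simple i) rfl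
  have h3 := cs.isRightDescent_iff.mp hi
  omega

lemma finite_card_invs_le (n : ℕ) : {w : W | (invs cs w).card ≤ n}.Finite := by
  refine ((List.finite_length_le B n).image cs.wordProd).subset ?_
  intro w hw
  obtain ⟨ω, h1, h2⟩ := cs.exists_isReduced w
  refine ⟨ω, ?_, h2.symm⟩
  have := length_le_card_invs cs w
  have h3 := h1.eq
  rw [← h2] at h3
  simp only [Set.mem_ofPred_eq] at hw ⊢
  omega

end Rep

/-! ### Coloring the walls -/

section

variable {B : Type*} [Fintype B] [DecidableEq B] (M : CoxeterMatrix B)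

lemma cartan_isIntegral (i j : B) : IsIntegral ℤ (cartan M i j) := by
  have h := Real.isIntegral_two_mul_cos_rat_mul_pi ((M i j : ℚ)⁻¹)
  rw [cartan, div_eq_inv_mul]
  push_cast at h
  exact h.neg

/-- The Cartan entries lie in the ring of integers of a number field. Congruence modulo `5` there
has finitely many classes, and a nonzero integer has some conjugate of absolute value at
least `1`. -/
lemma exists_integers : ∃ (O : Subring ℝ) (C : Type) (_ : Finite C) (κ : ℝ → C),
    (∀ i j, cartan M i j ∈ O) ∧
    (∀ x ∈ O, ∀ y ∈ O, κ x = κ y → ∃ z ∈ O, x - y = 5 * z) ∧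
    (∀ z : O, (∀ φ : O →+* ℂ, Function.Injective φ → ‖φ z‖ < 1) → z = 0) := by
  classical
  let S : Set ℝ := Set.range fun p : B × B => cartan M p.1 p.2
  have hS : ∀ x ∈ S, IsIntegral ℤ x := by
    rintro _ ⟨p, rfl⟩
    exact cartan_isIntegral M p.1 p.2
  have hfin : Finite S := Set.finite_range _
  let K := IntermediateField.adjoin ℚ S
  have hfd : FiniteDimensional ℚ K :=
    IntermediateField.finiteDimensional_adjoin fun x hx => (hS x hx).tower_top
  have : NumberField K := ⟨⟩
  let f : NumberField.RingOfIntegers K →+* ℝ :=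
    (algebraMap K ℝ).comp (algebraMap (NumberField.RingOfIntegers K) K)
  have hf : Function.Injective f :=
    (algebraMap K ℝ).injective.comp NumberField.RingOfIntegers.coe_injective
  let I : Ideal (NumberField.RingOfIntegers K) := Ideal.span {5}
  have hI : I ≠ ⊥ := by
    rw [Ne, Ideal.span_singleton_eq_bot]
    exact OfNat.ofNat_ne_zero 5
  refine ⟨f.range, NumberField.RingOfIntegers K ⧸ I, Ideal.finiteQuotientOfFreeOfNeBot I hI,
    fun x => if h : ∃ a, f a = x then Ideal.Quotient.mk I h.choose else 0, ?_, ?_, ?_⟩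
  · intro i j
    have hmem : cartan M i j ∈ K := IntermediateField.subset_adjoin ℚ S ⟨(i, j), rfl⟩
    have hx_int : IsIntegral ℤ (⟨cartan M i j, hmem⟩ : K) := by
      rw [← isIntegral_algebraMap_iff (algebraMap K ℝ).injective]
      exact cartan_isIntegral M i j
    exact ⟨⟨_, hx_int⟩, rfl⟩
  · rintro _ ⟨a, rfl⟩ _ ⟨b, rfl⟩ h
    have ha : ∃ a', f a' = f a := ⟨a, rfl⟩
    have hb : ∃ a', f a' = f b := ⟨b, rfl⟩
    simp only [dif_pos ha, dif_pos hb] at h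
    rw [hf ha.choose_spec, hf hb.choose_spec, Ideal.Quotient.eq,
      Ideal.mem_span_singleton'] at h
    obtain ⟨z, hz⟩ := h
    refine ⟨f z, ⟨z, rfl⟩, ?_⟩
    rw [← map_sub, ← hz, map_mul, mul_comm, map_ofNat]
  · rintro ⟨_, a, rfl⟩ h
    have ha : a = 0 := by
      by_contra hne
      obtain ⟨w⟩ := (inferInstance : Nonempty (NumberField.InfinitePlace K))
      let e : NumberField.RingOfIntegers K ≃+* f.range :=
        RingEquiv.ofBijective f.rangeRestrict
          ⟨fun x y hxy => by
            have h' := congrArg Subtype.val hxy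
            exact hf h', f.rangeRestrict_surjective⟩
      have key : ∀ w : NumberField.InfinitePlace K, w (a : K) < 1 := by
        intro w
        have := h ((w.embedding.comp (algebraMap (NumberField.RingOfIntegers K) K)).comp
          (e.symm : f.range →+* NumberField.RingOfIntegers K))
          ((w.embedding.injective.comp NumberField.RingOfIntegers.coe_injective).comp
            e.symm.injective)
        have he : e.symm ⟨f a, a, rfl⟩ = a := e.symm_apply_apply a
        simp only [RingHom.comp_apply, RingHom.coe_coe] at this
        rw [he] at this
        rwa [← NumberField.InfinitePlace.norm_embedding_eq]
      exact absurd (NumberField.InfinitePlace.one_le_of_lt_one (w := w) hne fun z _ => key z)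
        (not_le.mpr (key w))
    subst ha
    ext
    simp

end

/-- A nonzero periodic solution of `z (k+2) = t * z (k+1) - z k` forces `‖t‖ ≤ 2`: compare at an
index where `‖z‖` is maximal. -/
lemma norm_le_two_of_periodic {z : ℕ → ℂ} {t : ℂ} (hz : ∀ k, z (k + 2) = t * z (k + 1) - z k)
    {n : ℕ} (hn : 0 < n) (hp : ∀ k, z (k + n) = z k) (h0 : z 0 ≠ 0) : ‖t‖ ≤ 2 := by
  obtain ⟨m, -, hm⟩ := Finset.exists_max_image (Finset.range n) (fun k => ‖z k‖)
    ⟨0, Finset.mem_range.mpr hn⟩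
  have hper : Function.Periodic z n := hp
  have hmax : ∀ k, ‖z k‖ ≤ ‖z m‖ := fun k => by
    rw [← hper.map_mod_nat k]
    exact hm _ (Finset.mem_range.mpr (Nat.mod_lt _ hn))
  have hpos : 0 < ‖z m‖ := (norm_pos_iff.mpr h0).trans_le (hmax 0)
  obtain ⟨k, hk⟩ : ∃ k, k + 1 = m + n := ⟨m + n - 1, by omega⟩
  have h1 : t * z (k + 1) = z (k + 2) + z k := by rw [hz]; ring
  have h2 : ‖t‖ * ‖z m‖ ≤ 2 * ‖z m‖ := by
    rw [← hp m, ← hk, ← norm_mul, h1, hk, hp m]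
    linarith [norm_add_le (z (k + 2)) (z k), hmax k, hmax (k + 2)]
  exact le_of_mul_le_mul_right h2 hpos

/-- A solution of the recurrence with trace `τ < 2` is strictly concave while positive, so it
cannot stay positive. -/
lemma not_eventually_pos {a : ℕ → ℝ} {τ : ℝ} (ha : ∀ k, a (k + 2) = τ * a (k + 1) - a k)
    (hτ : τ < 2) (N : ℕ) (hpos : ∀ k, N ≤ k → 0 < a k) : False := by
  wlog hN : N = 0 generalizing a N
  · exact this (a := fun k => a (k + N)) (fun k => by
      have := ha (k + N)
      rw [show k + 2 + N = k + N + 2 by ring, show k + 1 + N = k + N + 1 by ring]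
      exact this) 0 (fun k _ => hpos _ (by omega)) rfl
  subst hN
  replace hpos : ∀ k, 0 < a k := fun k => hpos k (Nat.zero_le k)
  have hd : ∀ k, a (k + 2) - a (k + 1) = a (k + 1) - a k - (2 - τ) * a (k + 1) := fun k => by
    rw [ha]; ring
  by_cases hneg : ∃ k, a (k + 1) - a k < 0
  · obtain ⟨k, hk⟩ := hneg
    have h1 : ∀ j, a (k + j + 1) - a (k + j) ≤ a (k + 1) - a k ∧
        a (k + j) ≤ a k + j * (a (k + 1) - a k) := by
      intro j
      induction j with
      | zero => simp
      | succ j ih =>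
        obtain ⟨ih1, ih2⟩ := ih
        have := hd (k + j)
        have := mul_pos (sub_pos.mpr hτ) (hpos (k + j + 1))
        rw [show k + (j + 1) = k + j + 1 by ring]
        push_cast
        constructor <;> linarith
    obtain ⟨j, hj⟩ := exists_nat_gt (a k / (a k - a (k + 1)))
    rw [div_lt_iff₀ (by linarith)] at hj
    have := (h1 j).2
    have := hpos (k + j)
    nlinarith
  · push Not at hneg
    have h1 : ∀ k, a 0 ≤ a k := fun k => by
      induction k with
      | zero => exact le_rfl
      | succ k ih => linarith [hneg k]
    have h2 : ∀ k : ℕ, a (k + 1) - a k ≤ a 1 - a 0 - k * ((2 - τ) * a 0) := fun k => by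
      induction k with
      | zero => simp
      | succ k ih =>
        have := hd k
        have := mul_le_mul_of_nonneg_left (h1 (k + 1)) (sub_pos.mpr hτ).le
        push_cast
        linarith
    have h3 := mul_pos (sub_pos.mpr hτ) (hpos 0)
    obtain ⟨j, hj⟩ := exists_nat_gt ((a 1 - a 0) / ((2 - τ) * a 0))
    rw [div_lt_iff₀ h3] at hj
    linarith [h2 j, hneg j]

lemma pos_of_two_le {a : ℕ → ℝ} {τ : ℝ} (ha : ∀ k, a (k + 2) = τ * a (k + 1) - a k)
    (hτ : 2 ≤ τ) (h0 : 0 < a 0) (h1 : a 0 ≤ a 1) (k : ℕ) : 0 < a k := by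
  suffices 0 < a k ∧ a k ≤ a (k + 1) from this.1
  induction k with
  | zero => exact ⟨h0, h1⟩
  | succ k ih =>
    have := ha k
    have h : 0 < a (k + 1) := by linarith
    refine ⟨h, ?_⟩
    rw [show k + 1 + 1 = k + 2 by ring, ha]
    nlinarith

section

variable {B : Type*} [Fintype B] [DecidableEq B] {M : CoxeterMatrix B}
  {W : Type*} [Group W] {cs : CoxeterSystem M W}

lemma IsRoot.exists_reflection {γ : B → ℝ} (hγ : IsRoot cs γ) :
    ∃ t : W, ∀ x, rho cs t x = x - form M γ x • γ := by
  obtain ⟨w, i, rfl⟩ := hγ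
  refine ⟨w * cs.simple i * w⁻¹, fun x => ?_⟩
  have h : form M (rho cs w (Pi.single i 1)) x = coroot M i (rho cs w⁻¹ x) := by
    rw [← form_single_left, ← form_rho cs w⁻¹, rho_inv_apply]
  rw [rho_mul_apply, rho_mul_apply, rho_simple, refl_apply, map_sub, map_smul, rho_apply_inv, h]

/-- The product of two reflections, acting on the plane spanned by their roots. -/
lemma exists_rotation {γ δ : B → ℝ} (hγ : IsRoot cs γ) (hδ : IsRoot cs δ) :
    ∃ r : W, rho cs r γ = (form M γ δ ^ 2 - 1) • γ - form M γ δ • δ ∧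
      rho cs r (rho cs r γ) = (form M γ δ ^ 2 - 2) • rho cs r γ - γ := by
  obtain ⟨t, ht⟩ := hγ.exists_reflection
  obtain ⟨u, hu⟩ := hδ.exists_reflection
  have h1 : rho cs (t * u) γ = (form M γ δ ^ 2 - 1) • γ - form M γ δ • δ := by
    rw [rho_mul_apply, hu, map_sub, map_smul, ht, ht, hγ.form_self, form_symm M δ γ]
    module
  have h2 : rho cs (t * u) δ = form M γ δ • γ - δ := by
    rw [rho_mul_apply, hu, map_sub, map_smul, ht, hδ.form_self]
    module
  refine ⟨t * u, h1, ?_⟩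
  nth_rewrite 1 [h1]
  rw [map_sub, map_smul, map_smul, h2, h1]
  module

lemma IsRoot.mem_ring {O : Subring ℝ} (hO : ∀ i j, cartan M i j ∈ O) {γ : B → ℝ}
    (hγ : IsRoot cs γ) (b : B) : γ b ∈ O := by
  obtain ⟨w, i, rfl⟩ := hγ
  induction w using cs.simple_induction_left generalizing b with
  | one =>
    rw [rho_one_apply, Pi.single_apply]
    split_ifs
    exacts [O.one_mem, O.zero_mem]
  | mul_simple_left w j ih =>
    rw [rho_mul_apply, rho_simple, refl_apply, Pi.sub_apply, Pi.smul_apply, smul_eq_mul,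
      coroot_apply, Pi.single_apply]
    refine O.sub_mem (ih b) (O.mul_mem (O.sum_mem fun k _ => O.mul_mem (hO j k) (ih k)) ?_)
    split_ifs
    exacts [O.one_mem, O.zero_mem]

lemma form_mem_ring {O : Subring ℝ} (hO : ∀ i j, cartan M i j ∈ O) {x y : B → ℝ}
    (hx : ∀ b, x b ∈ O) (hy : ∀ b, y b ∈ O) : form M x y ∈ O := by
  rw [form_eq]
  exact O.sum_mem fun i _ => O.sum_mem fun j _ =>
    O.mul_mem (hO i j) (O.mul_mem (hx i) (hy j))

variable (cs)

/-- If the rotation generated by two congruent positive roots has finite order on `γ`, the roots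
agree. Every conjugate of `c ^ 2 - 2` is at most `2` in absolute value by periodicity, while
`4 - c ^ 2` is divisible by `5`, so all conjugates of the quotient have absolute value at
most `4 / 5` and it vanishes; then `c ^ 2 = 4` and the rotation is unipotent. -/
lemma eq_of_periodic {O : Subring ℝ} (hO : ∀ i j, cartan M i j ∈ O)
    (hO' : ∀ z : O, (∀ φ : O →+* ℂ, Function.Injective φ → ‖φ z‖ < 1) → z = 0)
    {γ δ : B → ℝ} (hγ : IsRoot cs γ) (hδ : IsRoot cs δ) (hγp : 0 < ht γ) (hδp : 0 < ht δ)
    (hcol : ∀ b, ∃ z ∈ O, γ b - δ b = 5 * z) {r : W}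
    (h1 : rho cs r γ = (form M γ δ ^ 2 - 1) • γ - form M γ δ • δ)
    (hrec : ∀ k, rho cs (r ^ (k + 2)) γ =
      (form M γ δ ^ 2 - 2) • rho cs (r ^ (k + 1)) γ - rho cs (r ^ k) γ)
    {n : ℕ} (hn : 0 < n) (hper : rho cs (r ^ n) γ = γ) : γ = δ := by
  set c := form M γ δ with hc
  have hmem : ∀ k b, rho cs (r ^ k) γ b ∈ O := fun k b => (hγ.rho_apply _).mem_ring hO b
  have hcO : c ∈ O := form_mem_ring hO (hγ.mem_ring hO) (hδ.mem_ring hO)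
  choose z hzO hz using hcol
  -- `2 - c = form γ (γ - δ)` is divisible by `5`
  have h5 : 2 - c = 5 * form M γ z := by
    have h : γ - δ = (5 : ℝ) • z := by ext b; simp [hz b]
    rw [← hγ.form_self, hc, ← form_sub_right, h, form_smul_right]
  have hfO : form M γ z ∈ O := form_mem_ring hO (hγ.mem_ring hO) hzO
  obtain ⟨b, hb⟩ : ∃ b, γ b ≠ 0 := Function.ne_iff.mp hγ.ne_zero
  have hzero : (⟨form M γ z, hfO⟩ * (2 + ⟨c, hcO⟩) : O) = 0 := by
    refine hO' _ fun φ hφ => ?_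
    have ht : ‖φ (⟨c, hcO⟩ ^ 2 - 2)‖ ≤ 2 := by
      refine norm_le_two_of_periodic (z := fun k => φ ⟨_, hmem k b⟩) (fun k => ?_) hn
        (fun k => ?_) ?_
      · rw [← map_mul, ← map_sub]
        congr 1
        ext
        exact congrFun (hrec k) b
      · congr 2
        rw [pow_add, rho_mul_apply, hper]
      · rw [Ne, map_eq_zero_iff φ hφ]
        intro h
        apply hb
        have := congrArg Subtype.val h
        simpa using this
    have h2 : (5 : O) * (⟨form M γ z, hfO⟩ * (2 + ⟨c, hcO⟩)) = 2 - (⟨c, hcO⟩ ^ 2 - 2) := by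
      ext
      change (5 : ℝ) * (form M γ z * (2 + c)) = 2 - (c ^ 2 - 2)
      linear_combination (-2 - c) * h5
    have h3 := congrArg (fun x => ‖φ x‖) h2
    rw [map_mul, map_ofNat, norm_mul, map_sub φ 2, map_ofNat] at h3
    have h4 := norm_sub_le (2 : ℂ) (φ (⟨c, hcO⟩ ^ 2 - 2))
    rw [← h3, Complex.norm_ofNat, Complex.norm_ofNat] at h4
    linarith
  have hc2 : c ^ 2 = 4 := by
    have : form M γ z * (2 + c) = 0 := congrArg Subtype.val hzero
    linear_combination (-2 - c) * h5 - 5 * this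
  -- the orbit is an arithmetic progression, and it is periodic
  have harith : ∀ k : ℕ, rho cs (r ^ k) γ = γ + (k : ℝ) • (rho cs r γ - γ) ∧
      rho cs (r ^ (k + 1)) γ = γ + ((k : ℝ) + 1) • (rho cs r γ - γ) := by
    intro k
    induction k with
    | zero => simp
    | succ k ih =>
      refine ⟨by rw [ih.2]; push_cast; rfl, ?_⟩
      rw [show k + 1 + 1 = k + 2 by ring, hrec, ih.1, ih.2, hc2]
      push_cast
      module
  have hfix : rho cs r γ - γ = 0 := by
    have h := (harith n).1
    rw [hper] at h
    have h' := left_eq_add.mp h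
    exact (smul_eq_zero.mp h').resolve_left (by exact_mod_cast hn.ne')
  have h6 : (2 : ℝ) • γ = c • δ := by
    rw [h1, hc2] at hfix
    have : (2 : ℝ) • γ - c • δ = 0 := by rw [← hfix]; module
    exact sub_eq_zero.mp this
  have hc' : c = 2 := by
    have h7 := congrArg ht h6
    rw [map_smul, map_smul, smul_eq_mul, smul_eq_mul] at h7
    have : 0 < c := by
      by_contra hcon
      nlinarith
    nlinarith
  rw [hc'] at h6
  exact smul_right_injective _ (two_ne_zero (α := ℝ)) h6

/-- Congruent positive roots are nested: the four quadrants cut out by their walls cannot all meet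
the group. -/
theorem nested {O : Subring ℝ} (hO : ∀ i j, cartan M i j ∈ O)
    (hO' : ∀ z : O, (∀ φ : O →+* ℂ, Function.Injective φ → ‖φ z‖ < 1) → z = 0)
    {γ δ : B → ℝ} (hγδ : γ ≠ δ) (hcol : ∀ b, ∃ z ∈ O, γ b - δ b = 5 * z) {x₁ x₂ x₃ : W}
    (h₁ : γ ∈ invs cs x₁) (h₁' : δ ∉ invs cs x₁) (h₂ : γ ∉ invs cs x₂) (h₂' : δ ∈ invs cs x₂)
    (h₃ : γ ∈ invs cs x₃) (h₃' : δ ∈ invs cs x₃) : False := by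
  rw [mem_invs] at h₁ h₂' h₃ h₃'
  obtain ⟨hγ, hγp, h₁⟩ := h₁
  obtain ⟨hδ, hδp, h₂'⟩ := h₂'
  have h₁'' : 0 < ht (rho cs x₁ δ) :=
    lt_of_le_of_ne (not_lt.mp fun h => h₁' ((mem_invs cs).mpr ⟨hδ, hδp, h⟩))
      (hδ.rho_apply _).ht_ne_zero.symm
  have h₂'' : 0 < ht (rho cs x₂ γ) :=
    lt_of_le_of_ne (not_lt.mp fun h => h₂ ((mem_invs cs).mpr ⟨hγ, hγp, h⟩))
      (hγ.rho_apply _).ht_ne_zero.symm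
  obtain ⟨r, hr1, hr2⟩ := exists_rotation hγ hδ
  have hrec : ∀ k, rho cs (r ^ (k + 2)) γ =
      (form M γ δ ^ 2 - 2) • rho cs (r ^ (k + 1)) γ - rho cs (r ^ k) γ := fun k => by
    rw [pow_add r k 2, rho_mul_apply, pow_two r, rho_mul_apply, hr2, map_sub, map_smul, pow_succ r,
      rho_mul_apply]
  have hinj : Function.Injective fun k => rho cs (r ^ k) γ := by
    have key : ∀ i j, i < j → rho cs (r ^ i) γ ≠ rho cs (r ^ j) γ := by
      intro i j hij h
      obtain ⟨n, rfl⟩ := Nat.exists_eq_add_of_lt hij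
      rw [add_assoc, pow_add r i, rho_mul_apply] at h
      exact hγδ (eq_of_periodic cs hO hO' hγ hδ hγp hδp hcol hr1 hrec (Nat.succ_pos n)
        ((rho cs (r ^ i)).injective h).symm)
    intro i j h
    rcases lt_trichotomy i j with hij | hij | hij
    · exact absurd h (key i j hij)
    · exact hij
    · exact absurd h.symm (key j i hij)
  have hfin : ∀ x y : W, {k : ℕ | 0 < ht (rho cs x (rho cs (r ^ k) γ)) ∧
      ht (rho cs y (rho cs (r ^ k) γ)) < 0}.Finite := fun x y =>
    ((sepSet_finite cs x y).preimage hinj.injOn).subset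
      fun k hk => ⟨hγ.rho_apply _, hk.1, hk.2⟩
  have hlin : ∀ (g : (B → ℝ) →ₗ[ℝ] ℝ) k, g (rho cs (r ^ (k + 2)) γ) =
      (form M γ δ ^ 2 - 2) * g (rho cs (r ^ (k + 1)) γ) - g (rho cs (r ^ k) γ) := fun g k => by
    rw [hrec, map_sub, map_smul, smul_eq_mul]
  set c := form M γ δ with hc
  have hgrow : ∀ g : (B → ℝ) →ₗ[ℝ] ℝ, 4 ≤ c ^ 2 → 0 < g γ → c * g δ ≤ 0 →
      ∀ k, 0 < g (rho cs (r ^ k) γ) := fun g hc4 hg1 hg2 k => by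
    refine pos_of_two_le (a := fun k => g (rho cs (r ^ k) γ)) (hlin g) (by linarith) ?_ ?_ k
    · rwa [pow_zero, rho_one_apply]
    · rw [pow_zero, rho_one_apply, pow_one, hr1, map_sub, map_smul, map_smul,
        smul_eq_mul, smul_eq_mul]
      nlinarith
  let e : W → (B → ℝ) →ₗ[ℝ] ℝ := fun x => ht ∘ₗ (rho cs x).toLinearMap
  have he : ∀ x v, e x v = ht (rho cs x v) := fun _ _ => rfl
  -- unboundedly many walls of the orbit would separate two group elements
  have hinf : ∀ x y : W, (∀ k, 0 < ht (rho cs x (rho cs (r ^ k) γ))) →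
      (∀ k, ht (rho cs y (rho cs (r ^ k) γ)) < 0) → False := fun x y hx hy =>
    Set.infinite_univ ((hfin x y).subset fun k _ => ⟨hx k, hy k⟩)
  rcases lt_or_ge (c ^ 2) 4 with hlt | hge
  · -- an elliptic rotation changes the sign of the height infinitely often
    obtain ⟨N, hN⟩ := ((hfin 1 r).union (hfin r 1)).bddAbove
    have hstep : ∀ k, N < k → (0 < ht (rho cs (r ^ k) γ) ↔ 0 < ht (rho cs (r ^ (k + 1)) γ)) := by
      intro k hk
      have hnot : k ∉ _ := fun h => absurd (hN h) (not_le.mpr hk)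
      simp only [Set.mem_union, Set.mem_ofPred_eq, rho_one_apply, not_or, not_and, not_lt] at hnot
      rw [pow_succ', rho_mul_apply]
      have hk1 := (hγ.rho_apply (r ^ k)).ht_ne_zero
      have hk2 := ((hγ.rho_apply (r ^ k)).rho_apply r).ht_ne_zero
      exact ⟨fun h => lt_of_le_of_ne (hnot.1 h) hk2.symm,
        fun h => lt_of_le_of_ne (hnot.2 h) hk1.symm⟩
    have hconst : ∀ k, N + 1 ≤ k →
        (0 < ht (rho cs (r ^ k) γ) ↔ 0 < ht (rho cs (r ^ (N + 1)) γ)) := by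
      intro k hk
      induction k, hk using Nat.le_induction with
      | base => rfl
      | succ k hk ih => rw [← ih, hstep k (by omega)]
    by_cases hs : 0 < ht (rho cs (r ^ (N + 1)) γ)
    · exact not_eventually_pos (a := fun k => ht (rho cs (r ^ k) γ)) (hlin ht) (by linarith)
        (N + 1) fun k hk => (hconst k hk).mpr hs
    · refine not_eventually_pos (a := fun k => (-ht) (rho cs (r ^ k) γ)) (hlin (-ht)) (by linarith)
        (N + 1) fun k hk => ?_
      have h := (hconst k hk).not.mpr hs
      rw [LinearMap.neg_apply, neg_pos]
      exact lt_of_le_of_ne (not_lt.mp h) (hγ.rho_apply _).ht_ne_zero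
  · rcases le_total c 0 with hneg | hpos
    · refine hinf 1 x₃ (fun k => ?_) fun k => ?_
      · rw [rho_one_apply]
        exact hgrow ht hge hγp (by nlinarith) k
      · have := hgrow (-e x₃) hge (by rw [LinearMap.neg_apply, he]; linarith [h₃.2.2])
          (by rw [LinearMap.neg_apply, he]; nlinarith [h₃'.2.2]) k
        rw [LinearMap.neg_apply, he] at this
        linarith
    · refine hinf x₂ x₁ (fun k => ?_) fun k => ?_
      · exact hgrow (e x₂) hge h₂'' (by rw [he]; nlinarith) k
      · have := hgrow (-e x₁) hge (by rw [LinearMap.neg_apply, he]; linarith)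
          (by rw [LinearMap.neg_apply, he]; nlinarith) k
        rw [LinearMap.neg_apply, he] at this
        linarith

/-- The positive roots admit a finite coloring for which roots of equal color are nested. -/
theorem exists_coloring : ∃ (n : ℕ) (col : (B → ℝ) → Fin n), ∀ γ δ, col γ = col δ → γ ≠ δ →
    ∀ x₁ x₂ x₃ : W, γ ∈ invs cs x₁ → δ ∉ invs cs x₁ → γ ∉ invs cs x₂ → δ ∈ invs cs x₂ →
      γ ∈ invs cs x₃ → δ ∈ invs cs x₃ → False := by
  obtain ⟨O, C, hC, κ, hO, hκ, hO'⟩ := exists_integers M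
  refine ⟨Nat.card (B → C), fun γ => Finite.equivFin (B → C) fun b => κ (γ b), ?_⟩
  intro γ δ hcol hne x₁ x₂ x₃ h₁ h₁' h₂ h₂' h₃ h₃'
  have hγ := ((mem_invs cs).mp h₁).1
  have hδ := ((mem_invs cs).mp h₂').1
  exact nested cs hO hO' hne (fun b => hκ _ (hγ.mem_ring hO b) _ (hδ.mem_ring hO b)
    (congrFun ((Finite.equivFin (B → C)).injective hcol) b)) h₁ h₁' h₂ h₂' h₃ h₃'

end

/-! ### Schur multipliers -/

section SchurMult

variable {ι : Type*}

/-- The bilinear form of the matrix `a`, restricted to the finite index set `F`, is bounded by `A`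
for the Hilbert norms, that is, this finite matrix has operator norm at most `A`. -/
def Bdd (F : Finset ι) (a : ι → ι → ℂ) (A : ℝ) : Prop :=
  ∀ u v : ι → ℂ, ‖∑ x ∈ F, ∑ y ∈ F, a x y * u x * v y‖ ≤
    A * √(∑ x ∈ F, ‖u x‖ ^ 2) * √(∑ y ∈ F, ‖v y‖ ^ 2)

/-- Entrywise multiplication by the kernel `K` on `F × F` increases operator norms by a factor of
at most `C`. -/
def Schur (F : Finset ι) (K : ι → ι → ℂ) (C : ℝ) : Prop :=
  ∀ (a : ι → ι → ℂ) (A : ℝ), 0 ≤ A → Bdd F a A → Bdd F (fun x y => K x y * a x y) (C * A)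

variable {F : Finset ι} {K K' : ι → ι → ℂ} {C C' : ℝ}

lemma Bdd.mono {a : ι → ι → ℂ} {A A' : ℝ} (h : Bdd F a A) (hA : A ≤ A') : Bdd F a A' :=
  fun u v => (h u v).trans (by gcongr)

lemma Schur.mono (h : Schur F K C) (hC : C ≤ C') : Schur F K C' :=
  fun a A hA ha => (h a A hA ha).mono (by gcongr)

lemma Schur.congr (h : Schur F K C) (hK : ∀ x ∈ F, ∀ y ∈ F, K x y = K' x y) : Schur F K' C := by
  intro a A hA ha u v
  convert h a A hA ha u v using 2
  exact Finset.sum_congr rfl fun x hx => Finset.sum_congr rfl fun y hy => by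
    dsimp only
    rw [hK x hx y hy]

lemma Schur.add (h : Schur F K C) (h' : Schur F K' C') :
    Schur F (fun x y => K x y + K' x y) (C + C') := by
  intro a A hA ha u v
  have h1 := h a A hA ha u v
  have h2 := h' a A hA ha u v
  simp only [add_mul, Finset.sum_add_distrib] at h1 h2 ⊢
  exact (norm_add_le _ _).trans (add_le_add h1 h2)

lemma Schur.const_mul (c : ℂ) (h : Schur F K C) : Schur F (fun x y => c * K x y) (‖c‖ * C) := by
  intro a A hA ha u v
  have h1 := h a A hA ha u v
  simp only [mul_assoc c, ← Finset.mul_sum, norm_mul]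
  rw [mul_assoc, mul_assoc, mul_assoc]
  rw [mul_assoc, mul_assoc] at h1
  exact mul_le_mul_of_nonneg_left h1 (norm_nonneg c)

lemma Schur.one : Schur F (fun _ _ => 1) 1 := by
  intro a A _ ha
  simpa using ha

lemma Schur.mul (hC' : 0 ≤ C') (h : Schur F K C) (h' : Schur F K' C') :
    Schur F (fun x y => K x y * K' x y) (C * C') := by
  intro a A hA ha
  have := h _ _ (mul_nonneg hC' hA) (h' a A hA ha)
  simpa only [mul_assoc] using this

lemma Schur.sub (h : Schur F K C) (h' : Schur F K' C') :
    Schur F (fun x y => K x y - K' x y) (C + C') := by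
  have := h.add (h'.const_mul (-1))
  simpa [← sub_eq_add_neg] using this

lemma Schur.zero : Schur F (fun _ _ => 0) 0 := by
  simpa using Schur.one.const_mul (F := F) 0

lemma Schur.sum {σ : Type*} (s : Finset σ) {K : σ → ι → ι → ℂ} {C : σ → ℝ}
    (h : ∀ i ∈ s, Schur F (K i) (C i)) :
    Schur F (fun x y => ∑ i ∈ s, K i x y) (∑ i ∈ s, C i) := by
  classical
  induction s using Finset.induction_on with
  | empty => simpa using Schur.zero
  | insert i s hi ih =>
    simp only [Finset.sum_insert hi]
    exact (h i (Finset.mem_insert_self i s)).add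
      (ih fun j hj => h j (Finset.mem_insert_of_mem hj))

lemma Schur.prod {σ : Type*} (s : Finset σ) {K : σ → ι → ι → ℂ} {C : σ → ℝ}
    (hC : ∀ i ∈ s, 0 ≤ C i) (h : ∀ i ∈ s, Schur F (K i) (C i)) :
    Schur F (fun x y => ∏ i ∈ s, K i x y) (∏ i ∈ s, C i) := by
  classical
  induction s using Finset.induction_on with
  | empty => simpa using Schur.one
  | insert i s hi ih =>
    simp only [Finset.prod_insert hi]
    exact (h i (Finset.mem_insert_self i s)).mul
      (Finset.prod_nonneg fun j hj => hC j (Finset.mem_insert_of_mem hj))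
      (ih (fun j hj => hC j (Finset.mem_insert_of_mem hj))
        fun j hj => h j (Finset.mem_insert_of_mem hj))

open Classical in
/-- The kernel `1[α x = β y]` is block diagonal, so it cuts a matrix into mutually orthogonal
blocks. -/
lemma Schur.eq_kernel {κ : Type*} (α β : ι → κ) :
    Schur F (fun x y => if α x = β y then 1 else 0) 1 := by
  intro a A hA ha u v
  set T := F.image α
  set u' : κ → ι → ℂ := fun k x => if α x = k then u x else 0
  set v' : κ → ι → ℂ := fun k y => if β y = k then v y else 0
  have h1 : ∑ x ∈ F, ∑ y ∈ F, (if α x = β y then (1 : ℂ) else 0) * a x y * u x * v y =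
      ∑ k ∈ T, ∑ x ∈ F, ∑ y ∈ F, a x y * u' k x * v' k y := by
    symm
    rw [Finset.sum_comm]
    refine Finset.sum_congr rfl fun x hx => ?_
    rw [Finset.sum_comm]
    refine Finset.sum_congr rfl fun y hy => ?_
    rw [Finset.sum_eq_single (α x)]
    · by_cases h : α x = β y
      · simp [u', v', h]
      · simp [u', v', h, Ne.symm h]
    · intro k _ hk
      simp [u', Ne.symm hk]
    · exact fun h => absurd (Finset.mem_image_of_mem α hx) h
  have h2 : ∀ (γ : ι → κ) (w : ι → ℂ),
      ∑ k ∈ T, ∑ x ∈ F, ‖if γ x = k then w x else 0‖ ^ 2 ≤ ∑ x ∈ F, ‖w x‖ ^ 2 := by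
    intro γ w
    rw [Finset.sum_comm]
    refine Finset.sum_le_sum fun x _ => ?_
    have : ∀ k, ‖if γ x = k then w x else 0‖ ^ 2 = if γ x = k then ‖w x‖ ^ 2 else 0 := by
      intro k; split_ifs <;> simp
    simp only [this, Finset.sum_ite_eq]
    split_ifs
    exacts [le_rfl, by positivity]
  rw [h1, one_mul]
  calc _ ≤ ∑ k ∈ T, A * √(∑ x ∈ F, ‖u' k x‖ ^ 2) * √(∑ y ∈ F, ‖v' k y‖ ^ 2) :=
        norm_sum_le_of_le _ fun k _ => ha (u' k) (v' k)
    _ = A * ∑ k ∈ T, √(∑ x ∈ F, ‖u' k x‖ ^ 2) * √(∑ y ∈ F, ‖v' k y‖ ^ 2) := by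
        rw [Finset.mul_sum]
        exact Finset.sum_congr rfl fun k _ => by ring
    _ ≤ A * (√(∑ k ∈ T, ∑ x ∈ F, ‖u' k x‖ ^ 2) * √(∑ k ∈ T, ∑ y ∈ F, ‖v' k y‖ ^ 2)) := by
        gcongr
        exact Real.sum_sqrt_mul_sqrt_le _ (fun k => by positivity) fun k => by positivity
    _ ≤ A * (√(∑ x ∈ F, ‖u x‖ ^ 2) * √(∑ y ∈ F, ‖v y‖ ^ 2)) := by
        gcongr
        · exact h2 α u
        · exact h2 β v
    _ = _ := by ring

open Classical in
/-- Each factor of `r ^ #(N x ∆ N y) = ∏ t, r ^ [t separates x from y]` is a convex combination of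
the constant `1` and a block diagonal kernel. -/
lemma Schur.geometric {R : Type*} [DecidableEq R] (N : ι → Finset R) {r : ℝ} (h0 : 0 ≤ r)
    (h1 : r ≤ 1) :
    Schur F (fun x y => (r : ℂ) ^ (symmDiff (N x) (N y)).card) 1 := by
  have hfac : ∀ t, Schur F (fun x y => if (t ∈ N x) = (t ∈ N y) then 1 else (r : ℂ)) 1 := by
    intro t
    have h := ((Schur.eq_kernel (F := F) (fun x => t ∈ N x) fun x => t ∈ N x).const_mul
      ((1 - r : ℝ) : ℂ)).add (Schur.one.const_mul (r : ℂ))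
    rw [Complex.norm_real, Complex.norm_real, Real.norm_of_nonneg h0,
      Real.norm_of_nonneg (sub_nonneg.mpr h1)] at h
    refine (h.mono (by linarith)).congr fun x _ y _ => ?_
    split_ifs <;> push_cast <;> ring
  have h := Schur.prod (F.biUnion N) (fun _ _ => zero_le_one) fun t _ => hfac t
  rw [Finset.prod_const_one] at h
  refine h.congr fun x hx y hy => ?_
  rw [Finset.prod_ite, Finset.prod_const_one, one_mul, Finset.prod_const]
  congr 2
  ext t
  simp only [Finset.mem_filter, Finset.mem_biUnion, Finset.mem_symmDiff, eq_iff_iff]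
  constructor
  · tauto
  · rintro (⟨h1, h2⟩ | ⟨h1, h2⟩)
    · exact ⟨⟨x, hx, h1⟩, by tauto⟩
    · exact ⟨⟨y, hy, h1⟩, by tauto⟩

open Classical in
/-- In a tree, the vertices `x` and `y` are at a distance at most `n`, of the parity of `n`, if and
only if the `k`-th ancestor of `x` is the `(n-k)`-th ancestor of `y` for some `k`, which is then
unique. A laminar family `N` of sets behaves like the family of paths from the root in a tree, the
ancestor being encoded by its depth and the set of points that lie above it. -/
lemma Schur.tree_parity {R : Type*} [DecidableEq R] (N : ι → Finset R)
    (hN : ∀ x y z, N x ∩ N y ⊆ N y ∩ N z ∨ N y ∩ N z ⊆ N x ∩ N y) (n : ℕ) :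
    Schur F (fun x y => if (symmDiff (N x) (N y)).card ≤ n ∧
      (symmDiff (N x) (N y)).card % 2 = n % 2 then 1 else 0) (n + 1) := by
  let L : ℕ → ι → ℤ × Set ι := fun k x =>
    (((N x).card : ℤ) - k, {y | ((N x).card : ℤ) - k ≤ ((N x ∩ N y).card : ℤ)})
  have hyp : ∀ (m : ℤ) x y z, m ≤ (N x ∩ N y).card → m ≤ (N y ∩ N z).card →
      m ≤ (N x ∩ N z).card := by
    intro m x y z h1 h2
    rcases hN x y z with h | h
    · refine h1.trans ?_
      exact_mod_cast Finset.card_le_card fun t ht =>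
        Finset.mem_inter.mpr ⟨(Finset.mem_inter.mp ht).1, (Finset.mem_inter.mp (h ht)).2⟩
    · refine h2.trans ?_
      exact_mod_cast Finset.card_le_card fun t ht =>
        Finset.mem_inter.mpr ⟨(Finset.mem_inter.mp (h ht)).1, (Finset.mem_inter.mp ht).2⟩
  have hL : ∀ k l x y, L k x = L l y ↔ ((N x).card : ℤ) - k = (N y).card - l ∧
      ((N x).card : ℤ) - k ≤ (N x ∩ N y).card := by
    intro k l x y
    simp only [L, Prod.mk.injEq]
    refine and_congr_right fun h => ⟨fun hs => ?_, fun hm => ?_⟩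
    · have : x ∈ {z | ((N x).card : ℤ) - k ≤ ((N x ∩ N z).card : ℤ)} := by
        simp [Finset.inter_self]
      rw [hs, Set.mem_ofPred_eq, Finset.inter_comm] at this
      rwa [h]
    · ext z
      rw [Set.mem_ofPred_eq, Set.mem_ofPred_eq, ← h]
      constructor
      · exact fun hz => hyp _ y x z (by rwa [Finset.inter_comm]) hz
      · exact fun hz => hyp _ x y z hm hz
  have h := Schur.sum (F := F) (Finset.range (n + 1))
    fun k _ => Schur.eq_kernel (F := F) (L k) (L (n - k))
  rw [Finset.sum_const, Finset.card_range, nsmul_eq_mul, mul_one] at h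
  push_cast at h
  refine h.congr fun x _ y _ => ?_
  have hd : (symmDiff (N x) (N y)).card + 2 * (N x ∩ N y).card = (N x).card + (N y).card := by
    have e1 : symmDiff (N x) (N y) = (N x \ N y) ∪ (N y \ N x) := rfl
    rw [e1, Finset.card_union_of_disjoint (by
      rw [Finset.disjoint_left]; intro t ht ht'
      simp only [Finset.mem_sdiff] at ht ht'; tauto)]
    have e2 := Finset.card_sdiff_add_card_inter (N x) (N y)
    have e3 := Finset.card_sdiff_add_card_inter (N y) (N x)
    rw [Finset.inter_comm] at e3
    omega
  have hix := Finset.card_le_card (Finset.inter_subset_left (s₁ := N x) (s₂ := N y))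
  have hiy := Finset.card_le_card (Finset.inter_subset_right (s₁ := N x) (s₂ := N y))
  set d := (symmDiff (N x) (N y)).card
  set i := (N x ∩ N y).card
  set p := (N x).card
  set q := (N y).card
  have hterm : ∀ k ∈ Finset.range (n + 1), (L k x = L (n - k) y) ↔
      ((d ≤ n ∧ d % 2 = n % 2) ∧ k = (n + p - q) / 2) := by
    intro k hk
    have := Finset.mem_range.mp hk
    rw [hL]
    omega
  refine Eq.trans (b := ∑ k ∈ Finset.range (n + 1),
    if (d ≤ n ∧ d % 2 = n % 2) ∧ k = (n + p - q) / 2 then (1 : ℂ) else 0)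
    (Finset.sum_congr rfl fun k hk => ?_) ?_
  · have := hterm k hk
    split_ifs
    all_goals first | rfl | (exfalso; tauto)
  by_cases hc : d ≤ n ∧ d % 2 = n % 2
  · simp only [hc, and_self, true_and, if_true]
    rw [Finset.sum_ite_eq', if_pos]
    rw [Finset.mem_range]
    omega
  · simp only [hc, false_and, if_false, Finset.sum_const_zero]

open Classical in
lemma Schur.tree_sphere {R : Type*} [DecidableEq R] (N : ι → Finset R)
    (hN : ∀ x y z, N x ∩ N y ⊆ N y ∩ N z ∨ N y ∩ N z ⊆ N x ∩ N y) (n : ℕ) :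
    Schur F (fun x y => if (symmDiff (N x) (N y)).card = n then 1 else 0) (2 * (n + 1)) := by
  rcases Nat.lt_or_ge n 2 with hn | hn
  · refine ((Schur.tree_parity N hN n).mono (by linarith [n.cast_nonneg (α := ℝ)])).congr
      fun x _ y _ => if_congr (by omega) rfl rfl
  · obtain ⟨m, rfl⟩ := Nat.exists_eq_add_of_le' hn
    refine (((Schur.tree_parity N hN (m + 2)).sub (Schur.tree_parity N hN m)).mono
      (by push_cast; linarith)).congr fun x _ y _ => ?_
    set d := (symmDiff (N x) (N y)).card
    by_cases h1 : d = m + 2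
    · rw [if_pos (by omega), if_neg (by omega), if_pos h1, sub_zero]
    · rw [if_neg h1, sub_eq_zero]
      exact if_congr (by omega) rfl rfl

open Classical in
/-- Spheres in a product of finitely many trees: decompose according to the distances in the
factors. -/
lemma Schur.sphere {R : Type*} [DecidableEq R] (N : ι → Finset R) {n : ℕ} (col : R → Fin n)
    (hN : ∀ c x y z, (∀ s ∈ N x ∩ N y, col s = c → s ∈ N z) ∨
      (∀ s ∈ N y ∩ N z, col s = c → s ∈ N x)) (j : ℕ) :
    Schur F (fun x y => if (symmDiff (N x) (N y)).card = j then 1 else 0)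
      ((2 * (j + 1) ^ 2) ^ n) := by
  let Nc : Fin n → ι → Finset R := fun c x => (N x).filter fun s => col s = c
  have htree : ∀ c m, Schur F (fun x y => if (symmDiff (Nc c x) (Nc c y)).card = m then 1 else 0)
      (2 * (m + 1)) := by
    intro c m
    refine Schur.tree_sphere (Nc c) (fun x y z => ?_) m
    rcases hN c x y z with h | h
    · left
      intro s hs
      simp only [Nc, Finset.mem_inter, Finset.mem_filter] at hs ⊢
      exact ⟨hs.2, h s (Finset.mem_inter.mpr ⟨hs.1.1, hs.2.1⟩) hs.1.2, hs.1.2⟩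
    · right
      intro s hs
      simp only [Nc, Finset.mem_inter, Finset.mem_filter] at hs ⊢
      exact ⟨⟨h s (Finset.mem_inter.mpr ⟨hs.1.1, hs.2.1⟩) hs.1.2, hs.1.2⟩, hs.1⟩
  let T := (Fintype.piFinset fun _ : Fin n => Finset.range (j + 1)).filter fun m => ∑ c, m c = j
  have h := Schur.sum (F := F) T fun m _ =>
    Schur.prod (F := F) Finset.univ (fun c _ => by positivity) fun c _ => htree c (m c)
  refine (h.mono ?_).congr fun x _ y _ => ?_
  · have hcard : T.card ≤ (j + 1) ^ n := by
      refine (Finset.card_filter_le _ _).trans ?_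
      rw [Fintype.card_piFinset_const, Finset.card_range]
    calc ∑ m ∈ T, ∏ c, (2 * ((m c : ℝ) + 1)) ≤ ∑ m ∈ T, ∏ c : Fin n, (2 * ((j : ℝ) + 1)) := by
          refine Finset.sum_le_sum fun m hm => Finset.prod_le_prod (fun c _ => by positivity)
            fun c _ => ?_
          have := Fintype.mem_piFinset.mp (Finset.mem_filter.mp hm).1 c
          have : (m c : ℝ) ≤ j := by exact_mod_cast Nat.lt_succ_iff.mp (Finset.mem_range.mp this)
          linarith
      _ = T.card * (2 * ((j : ℝ) + 1)) ^ n := by simp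
      _ ≤ ((j : ℝ) + 1) ^ n * (2 * ((j : ℝ) + 1)) ^ n := by
          gcongr
          exact_mod_cast hcard
      _ = _ := by rw [← mul_pow]; ring
  · have hsum : ∑ c, (symmDiff (Nc c x) (Nc c y)).card = (symmDiff (N x) (N y)).card := by
      rw [Finset.card_eq_sum_card_fiberwise (f := col) (t := Finset.univ)
        fun _ _ => Finset.mem_coe.mpr (Finset.mem_univ _)]
      refine Finset.sum_congr rfl fun c _ => congrArg _ ?_
      ext s
      simp only [Nc, Finset.mem_symmDiff, Finset.mem_filter]
      tauto
    have hprod : ∀ m : Fin n → ℕ, (∏ c, if (symmDiff (Nc c x) (Nc c y)).card = m c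
        then (1 : ℂ) else 0) = if (fun c => (symmDiff (Nc c x) (Nc c y)).card) = m
        then 1 else 0 := by
      intro m
      split_ifs with hm
      · exact Finset.prod_eq_one fun c _ => if_pos (congrFun hm c)
      · obtain ⟨c, hc⟩ := Function.ne_iff.mp hm
        exact Finset.prod_eq_zero (Finset.mem_univ c) (if_neg hc)
    simp only [hprod]
    rw [Finset.sum_ite_eq]
    refine if_congr ?_ rfl rfl
    rw [Finset.mem_filter, Fintype.mem_piFinset, hsum, and_iff_right_iff_imp]
    intro hj c
    rw [Finset.mem_range, Nat.lt_succ_iff, ← hj, ← hsum]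
    exact Finset.single_le_sum (f := fun c => (symmDiff (Nc c x) (Nc c y)).card)
      (fun _ _ => Nat.zero_le _) (Finset.mem_univ c)

end SchurMult

/-! ### The multipliers of a Coxeter group -/

section

variable {B : Type*} [Fintype B] [DecidableEq B] {M : CoxeterMatrix B}
  {W : Type*} [Group W] (cs : CoxeterSystem M W)

lemma summable_sphere (n : ℕ) {r : ℝ} (h0 : 0 < r) (h1 : r < 1) :
    Summable fun j : ℕ => r ^ j * (2 * ((j : ℝ) + 1) ^ 2) ^ n := by
  have h := summable_pow_mul_geometric_of_norm_lt_one (2 * n) (r := r)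
    (by rwa [Real.norm_of_nonneg h0.le])
  refine (((summable_nat_add_iff 1).mpr h).mul_left (2 ^ n * r⁻¹)).congr fun j => ?_
  push_cast
  rw [mul_pow, ← pow_mul, pow_succ]
  field_simp

/-- The multipliers `r ^ ℓ`, with `ℓ` the number of inversions, truncated to a finite set of
lengths such that the discarded spheres contribute at most `1` to the multiplier norm. -/
theorem exists_multipliers (cs : CoxeterSystem M W) : ∃ ψ : ℕ → W → ℂ,
    (∀ m, (Function.support (ψ m)).Finite) ∧
    (∀ m (F : Finset W), Schur F (fun x y => ψ m (x * y⁻¹)) 3) ∧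
    ∀ g, Tendsto (fun m => ψ m g) atTop (nhds 1) := by
  classical
  obtain ⟨n, col, hcol⟩ := exists_coloring cs
  have hsphere : ∀ (F : Finset W) (j : ℕ), Schur F
      (fun x y => if (invs cs (x * y⁻¹)).card = j then 1 else 0) ((2 * (j + 1) ^ 2) ^ n) := by
    intro F j
    refine (Schur.sphere (F := F) (invs cs) col (fun c x y z => ?_) j).congr
      fun x _ y _ => ?_
    · by_contra! h
      obtain ⟨⟨γ, hγ, hγc, hγz⟩, ⟨δ, hδ, hδc, hδx⟩⟩ := h
      rw [Finset.mem_inter] at hγ hδ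
      exact hcol γ δ (hγc.trans hδc.symm) (by rintro rfl; exact hγz hδ.2) x z y hγ.1 hδx hγz
        hδ.2 hγ.2 hδ.1
    · have := card_symmDiff_invs cs x y
      simp only [← this]
  have hgeo : ∀ (F : Finset W) {r : ℝ}, 0 ≤ r → r ≤ 1 →
      Schur F (fun x y => (r : ℂ) ^ (invs cs (x * y⁻¹)).card) 1 := by
    intro F r h0 h1
    refine (Schur.geometric (F := F) (invs cs) h0 h1).congr fun x _ y _ => ?_
    rw [← card_symmDiff_invs cs x y]
  have hfin := finite_card_invs_le cs
  obtain ⟨ℓ, hℓ⟩ : ∃ ℓ : W → ℕ, ∀ w, (invs cs w).card = ℓ w := ⟨_, fun _ => rfl⟩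
  simp only [hℓ] at hsphere hgeo hfin
  let r : ℕ → ℝ := fun m => 1 - 1 / ((m : ℝ) + 1 + 1)
  have hr : ∀ m, 0 < r m ∧ r m < 1 := by
    intro m
    have h2 : (0 : ℝ) < 1 / ((m : ℝ) + 1 + 1) := by positivity
    have h3 : 1 / ((m : ℝ) + 1 + 1) < 1 := by
      rw [div_lt_one (by positivity)]
      linarith [m.cast_nonneg (α := ℝ)]
    simp only [r]
    constructor <;> linarith
  have hS : ∀ m, ∃ S : Finset ℕ, ∀ T : Finset ℕ, Disjoint T S →
      ‖∑ j ∈ T, r m ^ j * (2 * ((j : ℝ) + 1) ^ 2) ^ n‖ < 1 := fun m =>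
    summable_iff_vanishing_norm.mp (summable_sphere n (hr m).1 (hr m).2) 1 one_pos
  choose S hS using hS
  let S' : ℕ → Finset ℕ := fun m => S m ∪ Finset.range (m + 1)
  refine ⟨fun m g => if ℓ g ∈ S' m then (r m : ℂ) ^ ℓ g else 0,
    fun m => ?_, fun m F => ?_, fun g => ?_⟩
  · refine (hfin ((S' m).sup id)).subset fun g hg => ?_
    rw [Function.mem_support] at hg
    have hg' : ℓ g ∈ S' m := by
      by_contra h
      exact hg (if_neg h)
    exact Finset.le_sup (f := id) hg'
  · let T : Finset ℕ := ((F ×ˢ F).image fun p => ℓ (p.1 * p.2⁻¹)) \ S' m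
    have hT : Disjoint T (S m) :=
      Finset.disjoint_of_subset_right Finset.subset_union_left Finset.sdiff_disjoint
    have h := (hgeo F (hr m).1.le (hr m).2.le).sub
      (Schur.sum T fun j _ => (hsphere F j).const_mul ((r m ^ j : ℝ) : ℂ))
    refine (h.mono ?_).congr fun x hx y hy => ?_
    · have h1 := (le_abs_self _).trans (hS m T hT).le
      have h2 : ∀ j, ‖((r m ^ j : ℝ) : ℂ)‖ = r m ^ j := fun j => by
        rw [Complex.norm_real, Real.norm_of_nonneg (pow_nonneg (hr m).1.le j)]
      simp only [h2]
      linarith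
    · simp only [mul_ite, mul_one, mul_zero, Finset.sum_ite_eq]
      have hmem : ℓ (x * y⁻¹) ∈ T ↔ ℓ (x * y⁻¹) ∉ S' m := by
        rw [Finset.mem_sdiff, and_iff_right_iff_imp]
        exact fun _ => Finset.mem_image_of_mem (fun p : W × W => ℓ (p.1 * p.2⁻¹))
          (Finset.mk_mem_product hx hy)
      by_cases hin : ℓ (x * y⁻¹) ∈ S' m
      · rw [if_neg (hmem.not.mpr (not_not.mpr hin)), if_pos hin, sub_zero]
      · rw [if_pos (hmem.mpr hin), if_neg hin, Complex.ofReal_pow, sub_self]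
  · have h1 : Tendsto r atTop (nhds 1) := by
      have := (tendsto_one_div_add_atTop_nhds_zero_nat (𝕜 := ℝ)).comp (tendsto_add_atTop_nat 1)
      have := this.const_sub 1
      rw [sub_zero] at this
      refine this.congr fun m => ?_
      simp [r]
    have h2 : Tendsto (fun m => (r m : ℂ) ^ ℓ g) atTop (nhds 1) := by
      have := ((Complex.continuous_ofReal.tendsto 1).comp h1).pow (ℓ g)
      simpa using this
    refine h2.congr' ?_
    filter_upwards [eventually_ge_atTop (ℓ g)] with m hm
    rw [if_pos]
    exact Finset.mem_union_right _ (Finset.mem_range.mpr (Nat.lt_succ_of_le hm))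

end

/-! ### Multipliers of the reduced group C*-algebra -/

section Operators

variable {G : Type*} [Group G]

local notation "H[" G "]" => lp (fun _ : G => ℂ) 2

/-- The left translation `λ(δ_g)` on `ℓ²(G)`. -/
noncomputable def trans (g : G) : H[G] →L[ℂ] H[G] :=
  LinearMap.mkContinuous
    { toFun := fun h => ⟨fun y => h (g⁻¹ * y), by
        have h2 : 0 < (2 : ENNReal).toReal := by norm_num
        have hs := (memℓp_gen_iff h2).mp (lp.memℓp h)
        exact (memℓp_gen_iff h2).mpr ((Equiv.mulLeft g⁻¹).summable_iff.mpr hs)⟩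
      map_add' := fun _ _ => rfl
      map_smul' := fun _ _ => rfl } 1 fun h => by
    have h2 : 0 < (2 : ENNReal).toReal := by norm_num
    rw [one_mul, lp.norm_eq_tsum_rpow h2, lp.norm_eq_tsum_rpow h2]
    refine le_of_eq (congrArg (· ^ _) ?_)
    exact (Equiv.mulLeft g⁻¹).tsum_eq fun y => ‖h y‖ ^ (2 : ENNReal).toReal

lemma trans_apply (g : G) (h : H[G]) (y : G) : trans g h y = h (g⁻¹ * y) := rfl

variable [DecidableEq G]

lemma IsConvOp.delta_apply {g : G} {T : H[G] →L[ℂ] H[G]}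
    (hT : IsConvOp (fun x => if x = g then (1 : ℂ) else 0) T) (h : H[G]) (y : G) :
    T h y = h (g⁻¹ * y) := by
  rw [hT, tsum_eq_single g fun x hx => by simp [hx]]
  simp

/-- The matrix entry at `(x, y)` of an element of the reduced group C*-algebra depends only
on `x * y⁻¹`. -/
lemma redCStar_apply_single {a : H[G] →L[ℂ] H[G]} (ha : a ∈ redCStar G) (x y : G) :
    a (lp.single 2 y 1) x = a (lp.single 2 1 1) (x * y⁻¹) := by
  let φ : (H[G] →L[ℂ] H[G]) →L[ℂ] ℂ :=
    (lp.evalCLM ℂ (fun _ : G => ℂ) 2 x).comp (ContinuousLinearMap.apply ℂ H[G] (lp.single 2 y 1)) -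
      (lp.evalCLM ℂ (fun _ : G => ℂ) 2 (x * y⁻¹)).comp
        (ContinuousLinearMap.apply ℂ H[G] (lp.single 2 1 1))
  have hle : redCStar G ≤ LinearMap.ker φ.toLinearMap := by
    refine Submodule.topologicalClosure_minimal _ (Submodule.span_le.mpr ?_) φ.isClosed_ker
    rintro T ⟨g, hg⟩
    show T (lp.single 2 y 1) x - T (lp.single 2 1 1) (x * y⁻¹) = 0
    rw [IsConvOp.delta_apply hg, IsConvOp.delta_apply hg, lp.single_apply, lp.single_apply,
      Pi.single_apply, Pi.single_apply, sub_eq_zero]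
    congr 1
    rw [← mul_assoc, mul_inv_eq_one]
  exact sub_eq_zero.mp (hle ha)

/-- The operator `λ(ψ · f)`, where `f = a δ₁` is the symbol of `a`. -/
noncomputable def multOp {ψ : G → ℂ} (hψ : (Function.support ψ).Finite)
    (a : H[G] →L[ℂ] H[G]) : H[G] →L[ℂ] H[G] :=
  ∑ g ∈ hψ.toFinset, (ψ g * a (lp.single 2 1 1) g) • trans g

variable {ψ : G → ℂ} (hψ : (Function.support ψ).Finite)

lemma isConvOp_multOp (a : H[G] →L[ℂ] H[G]) :
    IsConvOp (fun g => ψ g * a (lp.single 2 (1 : G) 1) g) (multOp hψ a) := by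
  intro h y
  rw [tsum_eq_sum (s := hψ.toFinset) fun g hg => ?_]
  · rw [multOp, sum_apply, lp.coeFn_sum]
    exact Finset.sum_apply y _ _
  · have : ψ g = 0 := by simpa using hg
    simp [this]

lemma multOp_add (a b : H[G] →L[ℂ] H[G]) : multOp hψ (a + b) = multOp hψ a + multOp hψ b := by
  simp [multOp, mul_add, add_smul, Finset.sum_add_distrib]

lemma multOp_smul (c : ℂ) (a : H[G] →L[ℂ] H[G]) : multOp hψ (c • a) = c • multOp hψ a := by
  simp only [multOp, Finset.smul_sum, smul_smul]
  refine Finset.sum_congr rfl fun g _ => ?_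
  congr 1
  simp
  ring

lemma multOp_apply_single (a : H[G] →L[ℂ] H[G]) (x y : G) :
    multOp hψ a (lp.single 2 y 1) x = ψ (x * y⁻¹) * a (lp.single 2 1 1) (x * y⁻¹) := by
  rw [isConvOp_multOp hψ a, tsum_eq_single (x * y⁻¹) fun g hg => ?_]
  · simp
  · rw [lp.single_apply, Pi.single_eq_of_ne, mul_zero]
    rintro rfl
    exact hg (by group)

lemma multOp_delta {g : G} {T : H[G] →L[ℂ] H[G]}
    (hT : IsConvOp (fun x => if x = g then (1 : ℂ) else 0) T) : multOp hψ T = ψ g • T := by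
  ext h y
  rw [isConvOp_multOp hψ T, tsum_eq_single g fun x hx => ?_]
  · simp [IsConvOp.delta_apply hT]
  · have h0 : T (lp.single 2 1 1) x = 0 := by
      rw [IsConvOp.delta_apply hT, lp.single_apply, Pi.single_eq_of_ne]
      rwa [Ne, inv_mul_eq_one, eq_comm]
    simp [h0]

lemma norm_sum_single (F : Finset G) (u : G → ℂ) :
    ‖∑ x ∈ F, lp.single (E := fun _ : G => ℂ) 2 x (u x)‖ = √(∑ x ∈ F, ‖u x‖ ^ 2) := by
  have h := lp.norm_sum_single (E := fun _ : G => ℂ) (p := 2) (by norm_num) u F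
  norm_num at h
  rw [← h, Real.sqrt_sq (norm_nonneg _)]

lemma inner_sum_single (F : Finset G) (a : H[G] →L[ℂ] H[G]) (u v : G → ℂ) :
    inner ℂ (∑ x ∈ F, lp.single (E := fun _ : G => ℂ) 2 x (starRingEnd ℂ (u x)))
      (a (∑ y ∈ F, lp.single (E := fun _ : G => ℂ) 2 y (v y))) =
    ∑ x ∈ F, ∑ y ∈ F, a (lp.single 2 y 1) x * u x * v y := by
  have hv : ∀ y, lp.single (E := fun _ : G => ℂ) 2 y (v y) =
      v y • lp.single (E := fun _ : G => ℂ) 2 y 1 := fun y => by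
    rw [← lp.single_smul, smul_eq_mul, mul_one]
  simp only [sum_inner, lp.inner_single_left, hv, map_sum, map_smul, lp.coeFn_sum,
    Finset.sum_apply, lp.coeFn_smul, Pi.smul_apply, smul_eq_mul]
  refine Finset.sum_congr rfl fun x _ => ?_
  simp only [RCLike.inner_apply, Complex.conj_conj, Finset.sum_mul]
  exact Finset.sum_congr rfl fun y _ => by ring

lemma bdd_norm (F : Finset G) (a : H[G] →L[ℂ] H[G]) :
    Bdd F (fun x y => a (lp.single 2 y 1) x) ‖a‖ := by
  intro u v
  rw [← inner_sum_single]
  refine (norm_inner_le_norm _ _).trans ?_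
  refine (mul_le_mul_of_nonneg_left (a.le_opNorm _) (norm_nonneg _)).trans_eq ?_
  simp only [norm_sum_single, RCLike.norm_conj]
  ring

lemma norm_le_of_bdd {a : H[G] →L[ℂ] H[G]} {A : ℝ} (hA : 0 ≤ A)
    (h : ∀ F : Finset G, Bdd F (fun x y => a (lp.single 2 y 1) x) A) : ‖a‖ ≤ A := by
  have hlim : ∀ k : H[G], Tendsto (fun F : Finset G =>
      ∑ x ∈ F, lp.single (E := fun _ : G => ℂ) 2 x (k x)) atTop (nhds k) := fun k =>
    lp.hasSum_single (by norm_num) k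
  have hinner : ∀ k w : H[G], ‖inner ℂ k (a w)‖ ≤ A * ‖k‖ * ‖w‖ := by
    intro k w
    refine le_of_tendsto_of_tendsto (((hlim k).inner ((a.continuous.tendsto w).comp (hlim w))).norm)
      (((hlim k).norm.const_mul A).mul (hlim w).norm) (Eventually.of_forall fun F => ?_)
    have := h F (fun x => starRingEnd ℂ (k x)) w
    rw [← inner_sum_single] at this
    simpa only [Complex.conj_conj, RCLike.norm_conj, norm_sum_single, Function.comp] using this
  refine a.opNorm_le_bound hA fun w => ?_
  have h1 := hinner (a w) w
  rw [inner_self_eq_norm_sq_to_K, norm_pow, RCLike.norm_ofReal, abs_norm] at h1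
  rcases (norm_nonneg (a w)).eq_or_lt with h0 | h0
  · rw [← h0]
    positivity
  · exact le_of_mul_le_mul_left (by nlinarith) h0

lemma norm_multOp_le {C : ℝ} (hC : 0 ≤ C)
    (hS : ∀ F : Finset G, Schur F (fun x y => ψ (x * y⁻¹)) C)
    {a : H[G] →L[ℂ] H[G]} (ha : a ∈ redCStar G) : ‖multOp hψ a‖ ≤ C * ‖a‖ := by
  refine norm_le_of_bdd (by positivity) fun F => ?_
  have h := hS F _ _ (norm_nonneg a) (bdd_norm F a)
  convert h using 3 with x y
  rw [multOp_apply_single, redCStar_apply_single ha x y]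

/-- Uniformly bounded multipliers that converge pointwise to `1` converge to the identity in the
point-norm topology: this is clear on the span of the translations, which is dense. -/
lemma tendsto_multOp {C : ℝ} (hC : 0 ≤ C) {ψ : ℕ → G → ℂ}
    (hψ : ∀ m, (Function.support (ψ m)).Finite)
    (hS : ∀ m (F : Finset G), Schur F (fun x y => ψ m (x * y⁻¹)) C)
    (hlim : ∀ g, Tendsto (fun m => ψ m g) atTop (nhds 1))
    {a : H[G] →L[ℂ] H[G]} (ha : a ∈ redCStar G) :
    Tendsto (fun m => multOp (hψ m) a) atTop (nhds a) := by
  have hspan : ∀ b ∈ Submodule.span ℂ {T : H[G] →L[ℂ] H[G] | ∃ g : G,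
      IsConvOp (fun x => if x = g then (1 : ℂ) else 0) T},
      Tendsto (fun m => multOp (hψ m) b) atTop (nhds b) := by
    intro b hb
    induction hb using Submodule.span_induction with
    | mem T hT =>
      obtain ⟨g, hg⟩ := hT
      simp only [multOp_delta _ hg]
      simpa using (hlim g).smul_const T
    | zero => simp [multOp]
    | add b c _ _ hb hc => simpa only [multOp_add] using hb.add hc
    | smul c b _ hb => simpa only [multOp_smul] using hb.const_smul c
  rw [Metric.tendsto_atTop]
  intro ε hε
  have hδ : 0 < ε / (C + 2) := by positivity
  obtain ⟨b, hb, hab⟩ := Metric.mem_closure_iff.mp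
    (show a ∈ closure (Submodule.span ℂ {T : H[G] →L[ℂ] H[G] | ∃ g : G,
      IsConvOp (fun x => if x = g then (1 : ℂ) else 0) T} : Set _) from ha) _ hδ
  obtain ⟨N, hN⟩ := Metric.tendsto_atTop.mp (hspan b hb) _ hδ
  refine ⟨N, fun m hm => ?_⟩
  have hsub : a - b ∈ redCStar G :=
    (redCStar G).sub_mem ha (Submodule.le_topologicalClosure _ hb)
  have h1 := norm_multOp_le (hψ m) hC (hS m) hsub
  have h2 : multOp (hψ m) a = multOp (hψ m) (a - b) + multOp (hψ m) b := by
    rw [← multOp_add, sub_add_cancel]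
  have h3 := hN m hm
  rw [dist_eq_norm] at hab h3 ⊢
  have h4 : multOp (hψ m) a - a =
      multOp (hψ m) (a - b) + (multOp (hψ m) b - b) + (b - a) := by rw [h2]; abel
  have h5 : C * ‖a - b‖ ≤ C * (ε / (C + 2)) := by gcongr
  calc ‖multOp (hψ m) a - a‖ ≤ ‖multOp (hψ m) (a - b)‖ + ‖multOp (hψ m) b - b‖ + ‖b - a‖ := by
        rw [h4]
        exact norm_add₃_le
    _ < C * (ε / (C + 2)) + ε / (C + 2) + ε / (C + 2) := by
        rw [norm_sub_rev b a]
        linarith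
    _ = ε := by field_simp; ring

end Operators

end CoxMult

/-- There is a sequence of finitely supported multipliers `ψ_m` such that
`λ(ψ_m·f) → λ(f)` in norm and `‖λ(ψ_m·f)‖ ≤ 3‖λ(f)‖` for all `λ(f) ∈ C*_λ(W)`,
where `f = λ(f) δ_e`. -/
theorem stmt_19 {B : Type*} [Finite B] {W : Type*} [Group W] [DecidableEq W]
    {M : CoxeterMatrix B} (cs : CoxeterSystem M W) :
    ∃ ψ : ℕ → (W → ℂ),
      (∀ m, (Function.support (ψ m)).Finite) ∧
      ∀ a : lp (fun _ : W => ℂ) 2 →L[ℂ] lp (fun _ : W => ℂ) 2, a ∈ redCStar W →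
        ∃ T : ℕ → (lp (fun _ : W => ℂ) 2 →L[ℂ] lp (fun _ : W => ℂ) 2),
          (∀ m, IsConvOp (fun g => ψ m g * a (lp.single 2 (1 : W) 1) g) (T m) ∧
            ‖T m‖ ≤ 3 * ‖a‖) ∧
          Tendsto T atTop (nhds a) := by
  have := Fintype.ofFinite B
  classical
  obtain ⟨ψ, hfin, hS, hlim⟩ := CoxMult.exists_multipliers cs
  exact ⟨ψ, hfin, fun a ha => ⟨fun m => CoxMult.multOp (hfin m) a, fun m =>
    ⟨CoxMult.isConvOp_multOp (hfin m) a, CoxMult.norm_multOp_le (hfin m) (by norm_num) (hS m) ha⟩,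
    CoxMult.tendsto_multOp (by norm_num) hfin hS hlim ha⟩⟩
end
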